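/- Let f ∈ ℬ be convenient and Newton nondegenerate with Newton polytope P, and assume that every face Δ ∈ ℱ(P) of dimension ≤ n−1 is a simplex. Then for every α ∈ ℚ one has dim_ℂ gr^𝒩_α(ℬ/ℒ) = Σ_{q=0}^{n−1} Σ_{Δ ∈ ℱ(P), dim Δ = q} Σ_{j=0}^{n−1−q} (−1)^{n−1−q−j} · binom(n−1−q, j) · card{v ∈ Box(Δ) ∩ ℕⁿ : ν(v) = α − j} (equality in ℤ). Equivalently, the Hilbert–Poincaré series of gr^𝒩(ℬ/ℒ) equals Σ_{q=0}^{n−1} Σ_{Δ ∈ ℱ(P), dim Δ = q} (z−1)^{n−1−q} Σ_{v ∈ Box(Δ) ∩ ℕⁿ} z^{ν(v)}. -/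

import Mathlib

open MvPolynomial

namespace ToricNewton

section
variable {σ : Type*} [Fintype σ] [DecidableEq σ]

/-- Coercion of a lattice point of `ℕ^σ` into `ℝ^σ`. -/
def natToR (v : σ → ℕ) : σ → ℝ := fun i => (v i : ℝ)

/-- Coercion of an exponent (finitely supported) into `ℝ^σ`. -/
def toR (m : σ →₀ ℕ) : σ → ℝ := fun i => (m i : ℝ)

/-- The Newton polytope of a polynomial: the convex hull of `{0} ∪ supp f`. -/
noncomputable def newtonPolytope (f : MvPolynomial σ ℂ) : Set (σ → ℝ) :=
  convexHull ℝ ({0} ∪ (toR '' (f.support : Set (σ →₀ ℕ))))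

/-- The Newton function `ν`, which for a convenient polynomial is the gauge
(Minkowski functional) of the Newton polytope. -/
noncomputable def nu (f : MvPolynomial σ ℂ) (x : σ → ℝ) : ℝ :=
  gauge (newtonPolytope f) x

/-- `f` is convenient if for each variable `i` some pure power `uᵢ^k`, `k ≥ 1`,
occurs in `f` with nonzero coefficient. -/
def Convenient (f : MvPolynomial σ ℂ) : Prop :=
  ∀ i : σ, ∃ k : ℕ, 1 ≤ k ∧ f.coeff (Finsupp.single i k) ≠ 0

/-- `Δ` is a (nonempty exposed) closed face of `P`. -/
def IsFace (P Δ : Set (σ → ℝ)) : Prop :=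
  Δ.Nonempty ∧ ∃ (l : (σ → ℝ) →ₗ[ℝ] ℝ) (c : ℝ),
    (∀ x ∈ P, l x ≤ c) ∧ Δ = {x ∈ P | l x = c}

/-- A face of the Newton boundary: a closed face of the Newton polytope not
containing the origin. -/
def NBFace (f : MvPolynomial σ ℂ) (Δ : Set (σ → ℝ)) : Prop :=
  IsFace (newtonPolytope f) Δ ∧ (0 : σ → ℝ) ∉ Δ

open Classical in
/-- The truncation `g_Δ` of `g` to the monomials whose exponents lie in `Δ`. -/
noncomputable def faceRestrict (Δ : Set (σ → ℝ)) (g : MvPolynomial σ ℂ) : MvPolynomial σ ℂ :=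
  ∑ m ∈ g.support, if toR m ∈ Δ then monomial m (g.coeff m) else 0

/-- `f` is Newton nondegenerate: for every closed face `Δ` of the Newton boundary
the system `(u₁ ∂f/∂u₁)_Δ = ⋯ = (uₙ ∂f/∂uₙ)_Δ = 0` has no solution in `(ℂ*)ⁿ`. -/
def Nondegenerate (f : MvPolynomial σ ℂ) : Prop :=
  ∀ Δ : Set (σ → ℝ), NBFace f Δ →
    ¬ ∃ x : σ → ℂ, (∀ i, x i ≠ 0) ∧
        ∀ i, eval x (faceRestrict Δ (X i * pderiv i f)) = 0

/-- The ideal `ℒ` generated by the `uᵢ ∂f/∂uᵢ`. -/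
noncomputable def LIdeal (f : MvPolynomial σ ℂ) : Ideal (MvPolynomial σ ℂ) :=
  Ideal.span (Set.range fun i => X i * pderiv i f)

/-- The Jacobian ideal `ℐ` generated by the `∂f/∂uᵢ`. -/
noncomputable def IIdeal (f : MvPolynomial σ ℂ) : Ideal (MvPolynomial σ ℂ) :=
  Ideal.span (Set.range fun i => pderiv i f)

/-- The Newton filtration `𝒩_α ℬ`: the span of the monomials `u^m` with `ν(m) ≤ α`. -/
noncomputable def Nle (f : MvPolynomial σ ℂ) (α : ℝ) : Submodule ℂ (MvPolynomial σ ℂ) where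
  carrier := {g | ∀ m ∈ g.support, nu f (toR m) ≤ α}
  zero_mem' := by simp
  add_mem' := by
    intro a b ha hb m hm
    rcases Finset.mem_union.mp (MvPolynomial.support_add hm) with h | h
    · exact ha m h
    · exact hb m h
  smul_mem' := by
    intro c a ha m hm
    exact ha m (MvPolynomial.support_smul hm)

/-- The filtration `𝒩_{<α} ℬ`. -/
noncomputable def Nlt (f : MvPolynomial σ ℂ) (α : ℝ) : Submodule ℂ (MvPolynomial σ ℂ) where
  carrier := {g | ∀ m ∈ g.support, nu f (toR m) < α}
  zero_mem' := by simp
  add_mem' := by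
    intro a b ha hb m hm
    rcases Finset.mem_union.mp (MvPolynomial.support_add hm) with h | h
    · exact ha m h
    · exact hb m h
  smul_mem' := by
    intro c a ha m hm
    exact ha m (MvPolynomial.support_smul hm)

/-- The twisted filtration `W_α ℬ`: the span of the monomials `u^m` with
`ν(m + (1,…,1)) ≤ α`. -/
noncomputable def Wle (f : MvPolynomial σ ℂ) (α : ℝ) : Submodule ℂ (MvPolynomial σ ℂ) where
  carrier := {g | ∀ m ∈ g.support, nu f (toR m + 1) ≤ α}
  zero_mem' := by simp
  add_mem' := by
    intro a b ha hb m hm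
    rcases Finset.mem_union.mp (MvPolynomial.support_add hm) with h | h
    · exact ha m h
    · exact hb m h
  smul_mem' := by
    intro c a ha m hm
    exact ha m (MvPolynomial.support_smul hm)

/-- The twisted filtration `W_{<α} ℬ`. -/
noncomputable def Wlt (f : MvPolynomial σ ℂ) (α : ℝ) : Submodule ℂ (MvPolynomial σ ℂ) where
  carrier := {g | ∀ m ∈ g.support, nu f (toR m + 1) < α}
  zero_mem' := by simp
  add_mem' := by
    intro a b ha hb m hm
    rcases Finset.mem_union.mp (MvPolynomial.support_add hm) with h | h
    · exact ha m h
    · exact hb m h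
  smul_mem' := by
    intro c a ha m hm
    exact ha m (MvPolynomial.support_smul hm)

/-- The graded piece `gr^𝒩_α(ℬ/ℒ) = (𝒩_α ℬ + ℒ)/(𝒩_{<α} ℬ + ℒ)`, realized as the
image of `𝒩_α ℬ + ℒ` in `ℬ/(𝒩_{<α} ℬ + ℒ)`. -/
noncomputable def grN (f : MvPolynomial σ ℂ) (α : ℝ) :
    Submodule ℂ (MvPolynomial σ ℂ ⧸ (Nlt f α ⊔ (LIdeal f).restrictScalars ℂ)) :=
  Submodule.map (Nlt f α ⊔ (LIdeal f).restrictScalars ℂ).mkQ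
    (Nle f α ⊔ (LIdeal f).restrictScalars ℂ)

/-- `dim_ℂ gr^𝒩_α(ℬ/ℒ)`. -/
noncomputable def grDim (f : MvPolynomial σ ℂ) (α : ℝ) : ℕ :=
  Module.finrank ℂ (grN f α)

/-- The graded piece `gr^W_α(ℬ/ℐ) = (W_α ℬ + ℐ)/(W_{<α} ℬ + ℐ)`. -/
noncomputable def grW (f : MvPolynomial σ ℂ) (α : ℝ) :
    Submodule ℂ (MvPolynomial σ ℂ ⧸ (Wlt f α ⊔ (IIdeal f).restrictScalars ℂ)) :=
  Submodule.map (Wlt f α ⊔ (IIdeal f).restrictScalars ℂ).mkQ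
    (Wle f α ⊔ (IIdeal f).restrictScalars ℂ)

/-- `dim_ℂ gr^W_α(ℬ/ℐ)`. -/
noncomputable def grWDim (f : MvPolynomial σ ℂ) (α : ℝ) : ℕ :=
  Module.finrank ℂ (grW f α)

/-- The dimension of a face, i.e. of the direction of its affine span. -/
noncomputable def faceDim (Δ : Set (σ → ℝ)) : ℕ :=
  Module.finrank ℝ (affineSpan ℝ Δ).direction

/-- `Δ` is a simplex: the convex hull of an affinely independent family. -/
def IsSimplex (Δ : Set (σ → ℝ)) : Prop :=
  ∃ (k : ℕ) (p : Fin (k + 1) → (σ → ℝ)), AffineIndependent ℝ p ∧ Δ = convexHull ℝ (Set.range p)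

/-- The union of the coordinate hyperplanes. -/
def coordHyperplanes (σ : Type*) : Set (σ → ℝ) := ⋃ i : σ, {x : σ → ℝ | x i = 0}

/-- `Box(Δ)`: the set of combinations `Σ q_ℓ b_ℓ`, `q_ℓ ∈ [0,1)`, of the vertices
(extreme points) of `Δ`. -/
def Box (Δ : Set (σ → ℝ)) : Set (σ → ℝ) :=
  {x | ∃ s : Finset (σ → ℝ), ↑s ⊆ Δ.extremePoints ℝ ∧
      ∃ q : (σ → ℝ) → ℝ, (∀ b ∈ s, 0 ≤ q b ∧ q b < 1) ∧ x = ∑ b ∈ s, q b • b}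

/-- `Δ ∈ ℱ(P)`: a closed face of the Newton polytope of `f` not contained in the
union of the coordinate hyperplanes. -/
def FcalMem (f : MvPolynomial σ ℂ) (Δ : Set (σ → ℝ)) : Prop :=
  IsFace (newtonPolytope f) Δ ∧ ¬ Δ ⊆ coordHyperplanes σ

/-- `Box(P)`: the union of `Box(Δ)` over the closed faces of the Newton boundary
not contained in the union of the coordinate hyperplanes. -/
def BoxP (f : MvPolynomial σ ℂ) : Set (σ → ℝ) :=
  ⋃ Δ ∈ {Δ : Set (σ → ℝ) | NBFace f Δ ∧ ¬ Δ ⊆ coordHyperplanes σ}, Box Δ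

/-- The cone `ℝ₊·Δ` over `Δ`. -/
def cone0 (Δ : Set (σ → ℝ)) : Set (σ → ℝ) :=
  {x | ∃ t : ℝ, 0 ≤ t ∧ ∃ y ∈ Δ, x = t • y}

/-- The restriction of `f` obtained by setting the variables in `S` to zero. -/
noncomputable def restrictZero (S : Finset σ) (f : MvPolynomial σ ℂ) :
    MvPolynomial {j : σ // j ∉ S} ℂ :=
  aeval (fun j : σ => if h : j ∉ S then X (⟨j, h⟩ : {j : σ // j ∉ S}) else 0) f

end

end ToricNewton

namespace ToricNewton

section Reg

open CategoryTheory Abelian RingTheory.Sequence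

universe u

/-- If enough `Ext`-groups vanish, a quotient by a weakly regular sequence has no element
killed by `I`. -/
lemma socle_quot {R : Type u} [CommRing R] (I : Ideal R) (rs : List R) :
    ∀ (n : ℕ) (M : Type u) [AddCommGroup M] [Module R M]
      (_ : ∀ i < n, Subsingleton (Ext (ModuleCat.of R (R ⧸ I)) (ModuleCat.of R M) i))
      (_ : rs.length < n) (_ : IsWeaklyRegular M rs)
      (m : M ⧸ (Ideal.ofList rs • ⊤ : Submodule R M)),
      (∀ r ∈ I, r • m = 0) → m = 0 := by
  induction rs with
  | nil =>
    intro n M _ _ hext hn _ m hm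
    have h0 : Subsingleton (ModuleCat.of R (R ⧸ I) ⟶ ModuleCat.of R M) :=
      Ext.addEquiv₀.subsingleton_congr.mp (hext 0 (by simpa using hn))
    have h1 : Subsingleton ((R ⧸ I) →ₗ[R] M) := 
      (ModuleCat.homAddEquiv (M := ModuleCat.of R (R ⧸ I)) (N := ModuleCat.of R M)).symm.subsingleton
    obtain ⟨m, rfl⟩ := Submodule.mkQ_surjective _ m
    have hbot : (Ideal.ofList ([] : List R) • ⊤ : Submodule R M) = ⊥ := by simp
    have hm' : ∀ r ∈ I, r • m = 0 := by
      intro r hr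
      have := hm r hr
      rw [← map_smul, Submodule.mkQ_apply, Submodule.Quotient.mk_eq_zero, hbot] at this
      simpa using this
    let φ : (R ⧸ I) →ₗ[R] M := Submodule.liftQ I (LinearMap.toSpanSingleton R M m) (by
      intro r hr
      simpa using hm' r hr)
    have : φ = 0 := Subsingleton.elim _ _
    have h2 : φ (Submodule.Quotient.mk 1) = 0 := by rw [this]; rfl
    have h3 : φ (Submodule.Quotient.mk 1) = m := by
      simp only [φ, Submodule.liftQ_apply, LinearMap.toSpanSingleton_apply, one_smul]
    rw [← h3, h2, map_zero]
  | cons r rs ih =>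
    intro n M _ _ hext hn hreg m hm
    rw [isWeaklyRegular_cons_iff] at hreg
    obtain ⟨n, rfl⟩ : ∃ k, n = k + 1 := ⟨n - 1, by simp at hn; omega⟩
    have hext' : ∀ i < n, Subsingleton (Ext (ModuleCat.of R (R ⧸ I))
        (ModuleCat.of R (QuotSMulTop r M)) i) := by
      intro i hi
      have zero1 := AddCommGrpCat.isZero_of_iff_subsingleton.mpr (hext i (by omega))
      have zero2 := AddCommGrpCat.isZero_of_iff_subsingleton.mpr (hext (i + 1) (by omega))
      have hx : IsSMulRegular (ModuleCat.of R M) r := hreg.1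
      exact AddCommGrpCat.subsingleton_of_isZero <|
        ShortComplex.Exact.isZero_of_both_zeros
        ((Ext.covariant_sequence_exact₃' (ModuleCat.of R (R ⧸ I))
          hx.smulShortComplex_shortExact) i (i + 1) rfl)
        (zero1.eq_zero_of_src _) (zero2.eq_zero_of_tgt _)
    have := ih n (QuotSMulTop r M) hext' (by simpa using hn) hreg.2
      (Submodule.quotOfListConsSMulTopEquivQuotSMulTopInner M r rs m) (by
        intro s hs
        rw [← map_smul, hm s hs, map_zero])
    simpa using this

/-- The variables form a regular sequence. -/
lemma isRegular_vars (n : ℕ) :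
    IsRegular (MvPolynomial (Fin n) ℂ) (List.ofFn (X : Fin n → MvPolynomial (Fin n) ℂ)) := by
  have key : ∀ i : ℕ, (Ideal.ofList ((List.ofFn (X : Fin n → MvPolynomial (Fin n) ℂ)).take i) •
      (⊤ : Submodule (MvPolynomial (Fin n) ℂ) (MvPolynomial (Fin n) ℂ))) =
      Ideal.span (X '' {j : Fin n | (j : ℕ) < i}) := by
    intro i
    rw [Ideal.smul_top_eq_map]
    simp only [Algebra.algebraMap_self, Ideal.map_id, Submodule.restrictScalars_self]
    refine congrArg Ideal.span ?_
    ext r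
    change (r ∈ List.take _ _) ↔ _
    simp only [List.mem_take_iff_getElem, Set.mem_ofPred_eq, Set.mem_image, List.getElem_ofFn,
      List.length_ofFn]
    constructor
    · rintro ⟨j, hj, rfl⟩
      exact ⟨⟨j, by omega⟩, by simp; omega, rfl⟩
    · rintro ⟨j, hj, rfl⟩
      exact ⟨j, by omega, rfl⟩
  refine ⟨⟨?_⟩, ?_⟩
  · intro i hi
    rw [isSMulRegular_quotient_iff_mem_of_smul_mem, key]
    intro g hg
    rw [mem_ideal_span_X_image] at hg ⊢
    intro m hm
    have hi' : i < n := by simpa using hi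
    obtain ⟨j, hj, hj2⟩ := hg (m + Finsupp.single ⟨i, hi'⟩ 1) (by
      rw [smul_eq_mul, mul_comm, List.getElem_ofFn]
      rw [mem_support_iff, coeff_mul_X]
      exact mem_support_iff.mp hm)
    refine ⟨j, hj, ?_⟩
    have hne : (⟨i, hi'⟩ : Fin n) ≠ j := by
      intro h
      subst h
      simp at hj
    simpa [Finsupp.single_apply, hne] using hj2
  · have h := key n
    rw [List.take_of_length_le (by simp)] at h
    rw [h]
    intro h1
    have h2 : (1 : MvPolynomial (Fin n) ℂ) ∈ Ideal.span (X '' {j : Fin n | (j : ℕ) < n}) := by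
      rw [← h1]; trivial
    rw [mem_ideal_span_X_image] at h2
    obtain ⟨i, _, hi⟩ := h2 0 (by simp [mem_support_iff])
    simp at hi

lemma socle_gen {R : Type u} [CommRing R] [IsNoetherianRing R] (n : ℕ) (rs xs : List R)
    (hlen : rs.length < n) (hlen2 : xs.length = n)
    (hreg : IsWeaklyRegular R rs) (hxs : IsRegular R xs)
    (m : R ⧸ (Ideal.ofList rs • ⊤ : Submodule R R))
    (hmem : ∀ x ∈ xs, x • m = 0) : m = 0 := by
  refine socle_quot (Ideal.ofList xs) rs n R ?_ hlen hreg m ?_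
  · intro i hi
    have h1 := ModuleCat.subsingleton_ext_of_exists_isRegular (Ideal.ofList xs)
      (ModuleCat.of R (R ⧸ Ideal.ofList xs)) (by
        show Module.support R (R ⧸ Ideal.ofList xs) ⊆ _
        rw [Module.support_eq_zeroLocus, Ideal.annihilator_quotient])
      (ModuleCat.of R R) (lt_of_le_of_ne le_top hxs.top_ne_smul.symm) xs
      (fun r hr => Ideal.subset_span hr) hxs i (by omega)
    exact h1
  · intro r hr
    have h : Ideal.ofList xs ≤ (LinearMap.toSpanSingleton R _ m).ker := by
      rw [Ideal.ofList, Ideal.span_le]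
      intro x hx
      simpa using hmem x hx
    simpa using h hr

/-- A weakly regular sequence of length `< n` in `ℂ[y₁,…,yₙ]` has no associated prime equal to
the ideal of the origin. -/
lemma socle_vars {n : ℕ} (rs : List (MvPolynomial (Fin n) ℂ)) (hlen : rs.length < n)
    (hreg : IsWeaklyRegular (MvPolynomial (Fin n) ℂ) rs)
    (m : MvPolynomial (Fin n) ℂ ⧸ (Ideal.ofList rs • ⊤ :
      Submodule (MvPolynomial (Fin n) ℂ) (MvPolynomial (Fin n) ℂ)))
    (hm : ∀ i, (X i : MvPolynomial (Fin n) ℂ) • m = 0) : m = 0 := by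
  refine socle_gen n rs (List.ofFn X) hlen (by simp) hreg (isRegular_vars n) m ?_
  intro x hx
  rw [List.mem_ofFn] at hx
  obtain ⟨i, rfl⟩ := hx
  exact hm i

/-- Linear combinations. -/
noncomputable def lin {n : ℕ} (F : Fin n → MvPolynomial (Fin n) ℂ) :
    (Fin n → ℂ) →ₗ[ℂ] MvPolynomial (Fin n) ℂ :=
  Fintype.linearCombination ℂ F

lemma lin_apply {n : ℕ} (F : Fin n → MvPolynomial (Fin n) ℂ) (c : Fin n → ℂ) :
    lin F c = ∑ i, c i • F i := rfl

lemma exists_generic_aux {n : ℕ} {ι : Type} [Finite ι]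
    (F : ι → Fin n → MvPolynomial (Fin n) ℂ)
    (hF : ∀ M x, (∀ i, eval x (F M i) = 0) → x = 0) (k : ℕ) (hk : k ≤ n) :
    ∃ c : Fin k → (Fin n → ℂ), LinearIndependent ℂ c ∧
      ∀ M, IsWeaklyRegular (MvPolynomial (Fin n) ℂ) (List.ofFn fun j => lin (F M) (c j)) := by
  induction k with
  | zero => exact ⟨fun i => i.elim0, linearIndependent_empty_type, fun M => by simp⟩
  | succ k ih =>
    obtain ⟨c, hc, hreg⟩ := ih (by omega)
    let R := MvPolynomial (Fin n) ℂ
    let Q : ι → Type := fun M => R ⧸ (Ideal.ofList (List.ofFn fun j => lin (F M) (c j)) • ⊤ :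
      Submodule R R)
    -- finite collection of proper subspaces to avoid
    let S : Set (Subspace ℂ (Fin n → ℂ)) :=
      {Submodule.span ℂ (Set.range c)} ∪
        ⋃ M, (fun p : Ideal R => (p.restrictScalars ℂ).comap (lin (F M))) '' associatedPrimes R
          (R ⧸ (Ideal.ofList (List.ofFn fun j => lin (F M) (c j)) • ⊤ : Submodule R R))
    have hSfin : S.Finite := (Set.finite_singleton _).union
      (Set.finite_iUnion fun M => (associatedPrimes.finite R _).image _)
    have htop : ⊤ ∉ hSfin.toFinset := by
      simp only [Set.Finite.mem_toFinset, S, Set.mem_union, Set.mem_singleton_iff, Set.mem_iUnion,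
        Set.mem_image, not_or, not_exists, not_and]
      constructor
      · intro h
        have h1 := finrank_span_eq_card hc
        rw [← h] at h1
        simp at h1
        omega
      · intro M p hp h
        have hp' : IsAssociatedPrime p _ := hp
        have hpr := hp'.isPrime
        have hFp : ∀ i, F M i ∈ p := by
          intro i
          have : Pi.single i (1:ℂ) ∈ (p.restrictScalars ℂ).comap (lin (F M)) := by
            rw [h]; trivial
          simpa [lin] using this
        have hX : ∀ j, (X j : R) ∈ p := by
          intro j
          have h2 : (X j : R) ∈ (Ideal.span (Set.range (F M))).radical := by
            rw [← vanishingIdeal_zeroLocus_eq_radical (K := ℂ), mem_vanishingIdeal_iff]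
            intro x hx
            have : x = 0 := hF M x (fun i => by
              have := (mem_zeroLocus_iff.mp hx) (F M i) (Ideal.subset_span ⟨i, rfl⟩)
              simpa [aeval_eq_eval] using this)
            simp [this]
          have h3 : Ideal.span (Set.range (F M)) ≤ p := by
            rw [Ideal.span_le]; rintro _ ⟨i, rfl⟩; exact hFp i
          exact hpr.radical_le_iff.mpr h3 h2
        obtain ⟨_, m, hm⟩ := isAssociatedPrime_iff.mp hp'
        have h0 : m = 0 := by
          apply socle_vars _ (by simpa using hk) (hreg M)
          intro i
          have := hX i
          rw [hm, Submodule.mem_colon_singleton] at this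
          simpa using this
        subst h0
        apply hpr.ne_top
        rw [hm, Ideal.eq_top_iff_one, Submodule.mem_colon_singleton]
        simp
    have := Subspace.biUnion_ne_univ_of_top_notMem htop
    obtain ⟨c', hc'⟩ := (Set.ne_univ_iff_exists_notMem _).mp this
    simp only [Set.Finite.mem_toFinset, S, Set.mem_union, Set.mem_singleton_iff, Set.mem_iUnion,
        Set.mem_image, not_or, not_exists, not_and, SetLike.mem_coe] at hc'
    refine ⟨Fin.snoc c c', ?_, ?_⟩
    · rw [linearIndependent_finSnoc]
      exact ⟨hc, fun h => hc' _ (Or.inl rfl) h⟩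
    · intro M
      have : (List.ofFn fun j => lin (F M) ((Fin.snoc c c' : Fin (k+1) → (Fin n → ℂ)) j)) =
          (List.ofFn fun j => lin (F M) (c j)) ++ [lin (F M) c'] := by
        rw [List.ofFn_succ']
        simp
      rw [this, isWeaklyRegular_append_iff, isWeaklyRegular_singleton_iff]
      refine ⟨hreg M, ?_⟩
      by_contra hcon
      have hmem : lin (F M) c' ∈ {r : R | IsSMulRegular (R ⧸ (Ideal.ofList
        (List.ofFn fun j => lin (F M) (c j)) • ⊤ : Submodule R R)) r}ᶜ := hcon
      rw [← biUnion_associatedPrimes_eq_compl_regular] at hmem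
      simp only [Set.mem_iUnion] at hmem
      obtain ⟨p, hp, hp2⟩ := hmem
      exact hc' _ (Or.inr ⟨M, p, hp, rfl⟩) hp2

lemma exists_generic {n : ℕ} {ι : Type} [Finite ι]
    (F : ι → Fin n → MvPolynomial (Fin n) ℂ)
    (hF : ∀ M x, (∀ i, eval x (F M i) = 0) → x = 0) :
    ∃ c : Fin n → (Fin n → ℂ), LinearIndependent ℂ c ∧
      ∀ M (k : Fin n) g, lin (F M) (c k) * g ∈ Ideal.span ((fun j => lin (F M) (c j)) '' {j | j < k}) →
        g ∈ Ideal.span ((fun j => lin (F M) (c j)) '' {j | j < k}) := by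
  obtain ⟨c, hc, hreg⟩ := exists_generic_aux F hF n le_rfl
  refine ⟨c, hc, fun M k g hg => ?_⟩
  have h := (hreg M).regular_mod_prev k (by simp)
  rw [isSMulRegular_quotient_iff_mem_of_smul_mem] at h
  have key : (Ideal.ofList ((List.ofFn fun j => lin (F M) (c j)).take k) •
      (⊤ : Submodule (MvPolynomial (Fin n) ℂ) (MvPolynomial (Fin n) ℂ))) =
      Ideal.span ((fun j => lin (F M) (c j)) '' {j | j < k}) := by
    rw [Ideal.smul_top_eq_map]
    simp only [Algebra.algebraMap_self, Ideal.map_id, Submodule.restrictScalars_self]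
    refine congrArg Ideal.span ?_
    ext r
    change (r ∈ List.take _ _) ↔ _
    simp only [List.mem_take_iff_getElem, Set.mem_ofPred_eq, Set.mem_image, List.getElem_ofFn,
      List.length_ofFn]
    constructor
    · rintro ⟨j, hj, rfl⟩
      exact ⟨⟨j, by omega⟩, by simp [Fin.lt_def]; omega, rfl⟩
    · rintro ⟨j, hj, rfl⟩
      exact ⟨j, by omega, rfl⟩
  rw [key] at h
  exact h g (by simpa using hg)

end Reg
end ToricNewton

namespace ToricNewton

section Filt
variable {R : Type*} [CommRing R] [Algebra ℂ R]

/-- The ideal generated by the first `k` elements. -/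
def Ik (L : ℕ → R) (k : ℕ) : Ideal R := Ideal.span (L '' (Finset.range k : Set ℕ))

lemma mem_Ik (L : ℕ → R) (k : ℕ) (x : R) :
    x ∈ Ik L k ↔ ∃ g : ℕ → R, x = ∑ i ∈ Finset.range k, L i * g i := by
  constructor
  · intro hx
    unfold Ik at hx
    rw [Submodule.mem_span_image_finset_iff_exists_fun] at hx
    obtain ⟨c, hc⟩ := hx
    refine ⟨fun i => if h : i ∈ Finset.range k then c ⟨i, h⟩ else 0, ?_⟩
    rw [← hc, ← Finset.sum_coe_sort (Finset.range k)]
    refine Finset.sum_congr rfl fun i _ => ?_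
    simp only [i.2, dif_pos, smul_eq_mul, mul_comm]
  · rintro ⟨g, rfl⟩
    refine Ideal.sum_mem _ fun i hi => Ideal.mul_mem_right _ _ (Ideal.subset_span ⟨i, hi, rfl⟩)

/-- A filtered setting: initial forms of the `L i` are a regular sequence. -/
structure FiltData (L : ℕ → R) (n : ℕ) (G : ℤ → Submodule ℂ R) (s : ℕ) : Prop where
  mono : Monotone G
  neg : ∀ m < 0, G m = ⊥
  exh : ∀ x, ∃ m, x ∈ G m
  mul : ∀ i m x, x ∈ G m → L i * x ∈ G (m + s)
  H : ∀ k < n, ∀ m g (g' : ℕ → R), g ∈ G m → (∀ i < k, g' i ∈ G m) →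
    L k * g - ∑ i ∈ Finset.range k, L i * g' i ∈ G (m + s - 1) →
    ∃ h : ℕ → R, (∀ i < k, h i ∈ G (m - s)) ∧ g - ∑ i ∈ Finset.range k, L i * h i ∈ G (m - 1)

variable {L : ℕ → R} {n : ℕ} {G : ℤ → Submodule ℂ R} {s : ℕ}

lemma FiltData.strict (D : FiltData L n G s) (k : ℕ) (hk : k ≤ n) :
    ∀ m g, g ∈ G m → g ∈ Ik L k →
      ∃ h : ℕ → R, (∀ i < k, h i ∈ G (m - s)) ∧ g = ∑ i ∈ Finset.range k, L i * h i := by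
  induction k with
  | zero =>
    intro m g _ hg
    rw [mem_Ik] at hg
    obtain ⟨c, hc⟩ := hg
    exact ⟨0, by simp, by simpa using hc⟩
  | succ k ih =>
    have ih := ih (by omega)
    have claim : ∀ (t : ℕ) (m : ℤ) (g : R) (c : ℕ → R), g ∈ G m →
        (∀ i < k + 1, c i ∈ G (m - s + t)) → g = ∑ i ∈ Finset.range (k+1), L i * c i →
        ∃ h : ℕ → R, (∀ i < k + 1, h i ∈ G (m - s)) ∧
          g = ∑ i ∈ Finset.range (k + 1), L i * h i := by
      intro t
      induction t with
      | zero =>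
        intro m g c _ hc he
        exact ⟨c, by simpa using hc, he⟩
      | succ t iht =>
        intro m g c hg hc he
        obtain ⟨h, hh, hgk⟩ := D.H k (by omega) (m - s + (t + 1 : ℕ)) (c k) (fun i => - c i)
          (hc k (by omega)) (fun i hi => neg_mem (hc i (by omega))) (by
            have : L k * c k - ∑ i ∈ Finset.range k, L i * -c i = g := by
              rw [he, Finset.sum_range_succ]; simp [add_comm]
            rw [this]
            exact D.mono (by push_cast; omega) hg)
        set gk := c k - ∑ i ∈ Finset.range k, L i * h i with hgkdef
        have h1 : g - L k * gk = ∑ i ∈ Finset.range k, L i * (c i + L k * h i) := by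
          rw [he, Finset.sum_range_succ, hgkdef, mul_sub, Finset.mul_sum]
          simp only [mul_add, Finset.sum_add_distrib]
          have : ∀ i, L k * (L i * h i) = L i * (L k * h i) := fun i => by ring
          simp only [this]
          ring
        have h2 : g - L k * gk ∈ G (m + t) := by
          refine sub_mem (D.mono (by omega) hg) ?_
          have := D.mul k _ _ hgk
          refine D.mono ?_ this
          push_cast; omega
        obtain ⟨h', hh', he'⟩ := ih _ _ h2 ((mem_Ik _ _ _).mpr ⟨_, h1⟩)
        refine iht m g (fun i => if i = k then gk else h' i) hg ?_ ?_
        · intro i hi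
          by_cases hik : i = k
          · simp only [hik, if_true]
            refine D.mono ?_ hgk
            push_cast; omega
          · simp only [hik, if_false]
            refine D.mono ?_ (hh' i (by omega))
            omega
        · rw [Finset.sum_range_succ]
          simp only [if_true]
          rw [Finset.sum_congr rfl (g := fun i => L i * h' i), ← he']
          · ring
          · intro i hi
            rw [Finset.mem_range] at hi
            rw [if_neg (by omega)]
    intro m g hg hgI
    rw [mem_Ik] at hgI
    obtain ⟨c, hc⟩ := hgI
    choose e he using fun i => D.exh (c i)
    obtain ⟨M, hM⟩ : ∃ M : ℤ, ∀ i < k + 1, e i ≤ M := by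
      refine ⟨(Finset.range (k+1)).sup' (by simp) e, fun i hi => Finset.le_sup' e (by simpa using hi)⟩
    refine claim (M - m + s).toNat m g c hg ?_ hc
    intro i hi
    refine D.mono ?_ (he i)
    have := hM i hi
    omega

lemma FiltData.regular (D : FiltData L n G s) (k : ℕ) (hk : k < n) (g : R)
    (hg : L k * g ∈ Ik L k) : g ∈ Ik L k := by
  have claim : ∀ (t : ℕ) (g : R), g ∈ G ((t : ℤ) - 1) → L k * g ∈ Ik L k → g ∈ Ik L k := by
    intro t
    induction t with
    | zero =>
      intro g hg _
      rw [D.neg _ (by simp)] at hg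
      rw [(Submodule.mem_bot ℂ).mp hg]
      exact zero_mem _
    | succ t ih =>
      intro g hg hI
      have hg : g ∈ G t := by simpa using hg
      obtain ⟨c, hc, he⟩ := D.strict k hk.le _ _ (D.mul k _ _ hg) hI
      obtain ⟨h, hh, hg'⟩ := D.H k hk t g c hg (fun i hi => by simpa using hc i hi) (by
        rw [he, sub_self]; exact zero_mem _)
      have h1 : ∑ i ∈ Finset.range k, L i * h i ∈ Ik L k := (mem_Ik _ _ _).mpr ⟨_, rfl⟩
      have := ih _ hg' (by
        rw [mul_sub]
        exact sub_mem hI (Ideal.mul_mem_left _ _ h1))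
      simpa using add_mem this h1
  obtain ⟨m, hm⟩ := D.exh g
  refine claim (m + 1).toNat g (D.mono ?_ hm) hg
  omega

/-- The piece `I_k ∩ G_m`. -/
def IG (L : ℕ → R) (G : ℤ → Submodule ℂ R) (k : ℕ) (m : ℤ) : Submodule ℂ R :=
  (Ik L k).restrictScalars ℂ ⊓ G m

lemma FiltData.rec_dim [IsDomain R] (D : FiltData L n G s) (hfin : ∀ m, FiniteDimensional ℂ (G m))
    (k : ℕ) (hk : k < n) (hL : L k ≠ 0) (m : ℤ) :
    Module.finrank ℂ (IG L G (k+1) m) + Module.finrank ℂ (IG L G k (m - s)) =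
      Module.finrank ℂ (IG L G k m) + Module.finrank ℂ (G (m - s)) := by
  let φ : R →ₗ[ℂ] R := LinearMap.mulLeft ℂ (L k)
  have hφ : Function.Injective φ := fun a b h => mul_left_cancel₀ hL h
  have h1 : IG L G (k+1) m = IG L G k m ⊔ (G (m - s)).map φ := by
    apply le_antisymm
    · rintro g ⟨hg, hgm⟩
      obtain ⟨h, hh, he⟩ := D.strict (k+1) hk _ _ hgm hg
      rw [Finset.sum_range_succ] at he
      have h2 : L k * h k ∈ G m := by
        have := D.mul k _ _ (hh k (by omega)); simpa using this
      rw [he]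
      refine Submodule.add_mem_sup ⟨(mem_Ik _ _ _).mpr ⟨_, rfl⟩, ?_⟩ ⟨h k, hh k (by omega), rfl⟩
      have : ∑ i ∈ Finset.range k, L i * h i = g - L k * h k := by rw [he]; ring
      change _ ∈ G m
      rw [this]
      exact sub_mem hgm h2
    · refine sup_le ?_ ?_
      · refine inf_le_inf ?_ le_rfl
        intro x hx
        refine Ideal.span_mono (Set.image_mono ?_) hx
        intro i hi
        simp at hi ⊢; omega
      · rintro _ ⟨x, hx, rfl⟩
        refine ⟨?_, ?_⟩
        · exact Ideal.mul_mem_right _ _ (Ideal.subset_span ⟨k, by simp, rfl⟩)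
        · have := D.mul k _ _ hx; simpa [φ] using this
  have h2 : IG L G k m ⊓ (G (m - s)).map φ = (IG L G k (m - s)).map φ := by
    apply le_antisymm
    · rintro _ ⟨⟨h, _⟩, ⟨x, hx, rfl⟩⟩
      exact ⟨x, ⟨D.regular k hk x h, hx⟩, rfl⟩
    · rintro _ ⟨x, ⟨hx1, hx2⟩, rfl⟩
      refine ⟨⟨Ideal.mul_mem_left _ _ hx1, ?_⟩, ⟨x, hx2, rfl⟩⟩
      have := D.mul k _ _ hx2; simpa [φ] using this
  have e1 : Module.finrank ℂ ((IG L G k (m - s)).map φ) = Module.finrank ℂ (IG L G k (m - s)) :=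
    ((Submodule.equivMapOfInjective φ hφ _).finrank_eq).symm
  have e2 : Module.finrank ℂ ((G (m - s)).map φ) = Module.finrank ℂ (G (m - s)) :=
    ((Submodule.equivMapOfInjective φ hφ _).finrank_eq).symm
  have : FiniteDimensional ℂ (IG L G k m) := by
    have := hfin m
    exact Submodule.finiteDimensional_of_le (inf_le_right : IG L G k m ≤ G m)
  have := Submodule.finrank_sup_add_finrank_inf_eq (IG L G k m) ((G (m - s)).map φ)
  rw [← h1, h2, e1, e2] at this
  exact this

/-- Iterated differences. -/
lemma iter_diff {A : Type*} (sh : A → A) (D : ℕ → A → ℤ) (n : ℕ)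
    (h : ∀ k < n, ∀ a, D (k+1) a = D k a - D k (sh a)) :
    ∀ k ≤ n, ∀ a, D k a = ∑ j ∈ Finset.range (k+1), (-1)^j * (k.choose j : ℤ) * D 0 (sh^[j] a) := by
  intro k
  induction k with
  | zero => intro _ a; simp
  | succ k ih =>
    intro hk a
    rw [h k (by omega), ih (by omega), ih (by omega)]
    rw [Finset.sum_range_succ' _ (k+1)]
    have : ∀ j, ((-1)^(j+1) * ((k+1).choose (j+1) : ℤ) * D 0 (sh^[j+1] a) : ℤ) =
      (-1)^(j+1) * (k.choose (j+1) : ℤ) * D 0 (sh^[j+1] a) - 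
      (-1)^j * (k.choose j : ℤ) * D 0 (sh^[j] (sh a)) := by
      intro j
      rw [Nat.choose_succ_succ, Function.iterate_succ_apply]
      push_cast
      ring
    simp only [this]
    rw [Finset.sum_sub_distrib]
    have h2 := Finset.sum_range_succ' (fun j => (-1)^j * (k.choose j : ℤ) * D 0 (sh^[j] a)) (k+1)
    rw [Finset.sum_range_succ] at h2
    simp only [Nat.choose_succ_self, Nat.cast_zero, mul_zero, zero_mul, add_zero] at h2
    rw [h2]
    simp
    ring

lemma gr_finrank (I A B : Submodule ℂ R) (hAB : A ≤ B) [FiniteDimensional ℂ B] :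
    (Module.finrank ℂ (Submodule.map (A ⊔ I).mkQ (B ⊔ I)) : ℤ) =
      (Module.finrank ℂ B - Module.finrank ℂ (I ⊓ B : Submodule ℂ R) : ℤ) -
      (Module.finrank ℂ A - Module.finrank ℂ (I ⊓ A : Submodule ℂ R) : ℤ) := by
  have : FiniteDimensional ℂ A := Submodule.finiteDimensional_of_le hAB
  have : FiniteDimensional ℂ (I ⊓ B : Submodule ℂ R) :=
    Submodule.finiteDimensional_of_le inf_le_right
  have h1 : Submodule.map (A ⊔ I).mkQ (B ⊔ I) = ((A ⊔ I).mkQ.comp B.subtype).range := by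
    rw [Submodule.map_sup, LinearMap.range_comp, Submodule.range_subtype, sup_eq_left]
    rintro _ ⟨x, hx, rfl⟩
    have : (A ⊔ I).mkQ x = 0 := by
      simpa using (le_sup_right : I ≤ A ⊔ I) hx
    rw [this]; exact zero_mem _
  have h2 := ((A ⊔ I).mkQ.comp B.subtype).finrank_range_add_finrank_ker
  have h3 : Module.finrank ℂ ((A ⊔ I).mkQ.comp B.subtype).ker =
      Module.finrank ℂ (A ⊔ (I ⊓ B) : Submodule ℂ R) := by
    rw [← sup_inf_assoc_of_le I hAB, LinearMap.ker_comp, Submodule.ker_mkQ]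
    rw [(Submodule.equivMapOfInjective B.subtype B.injective_subtype _).finrank_eq,
      Submodule.map_comap_subtype, inf_comm]
  have h4 := Submodule.finrank_sup_add_finrank_inf_eq A (I ⊓ B)
  have h5 : A ⊓ (I ⊓ B) = I ⊓ A := by
    rw [inf_left_comm, inf_eq_left.mpr hAB]
  rw [h5] at h4
  rw [h1]
  rw [h3] at h2
  omega

lemma FiltData.final [IsDomain R] (D : FiltData L n G s) (hfin : ∀ m, FiniteDimensional ℂ (G m))
    (hL : ∀ k < n, L k ≠ 0) (m m' : ℤ) (hm : m' ≤ m) :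
    (Module.finrank ℂ (Submodule.map (G m' ⊔ (Ik L n).restrictScalars ℂ).mkQ
      (G m ⊔ (Ik L n).restrictScalars ℂ)) : ℤ) =
    ∑ j ∈ Finset.range (n+1), (-1)^j * (n.choose j : ℤ) *
      ((Module.finrank ℂ (G (m - j * s)) : ℤ) - Module.finrank ℂ (G (m' - j * s))) := by
  have := hfin m
  rw [gr_finrank _ _ _ (D.mono hm)]
  have key := iter_diff (fun m : ℤ => m - s)
    (fun k m => (Module.finrank ℂ (G m) : ℤ) - Module.finrank ℂ (IG L G k m)) n (by
      intro k hk a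
      have := D.rec_dim hfin k hk (hL k hk) a
      push_cast [← @Nat.cast_inj ℤ] at this
      linarith) n le_rfl
  have hit : ∀ (j : ℕ) (m : ℤ), (fun m : ℤ => m - s)^[j] m = m - j * s := by
    intro j
    induction j with
    | zero => simp
    | succ j ih => intro m; rw [Function.iterate_succ_apply, ih]; push_cast; ring
  have hz : ∀ m, Module.finrank ℂ (IG L G 0 m) = 0 := by
    intro m
    have : IG L G 0 m = ⊥ := by
      rw [eq_bot_iff]
      rintro x ⟨hx, _⟩
      simpa [Ik] using hx
    rw [this]; simp
  have k1 := key m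
  have k2 := key m'
  simp only [hz, Nat.cast_zero, sub_zero] at k1 k2
  unfold IG at k1 k2
  rw [k1, k2, ← Finset.sum_sub_distrib]
  exact Finset.sum_congr rfl fun j _ => by rw [mul_sub, hit, hit]

end Filt
end ToricNewton

namespace ToricNewton

section Geo
open Module

/-- Complements of finitely many proper subspaces are dense. -/
lemma dense_generic {n : ℕ} (S : Set (Submodule ℝ (Fin n → ℝ))) (hS : S.Finite) (htop : ⊤ ∉ S) :
    Dense {x : Fin n → ℝ | ∀ p ∈ S, x ∉ p} := by
  have h := dense_biInter_of_isOpen (S := S) (f := fun p => ((p : Set (Fin n → ℝ))ᶜ))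
    (fun p _ => (Submodule.closed_of_finiteDimensional p).isOpen_compl) hS.countable (by
      intro p hp
      rw [← interior_eq_empty_iff_dense_compl]
      by_contra hne
      exact htop (Submodule.eq_top_of_nonempty_interior' p (Set.nonempty_iff_ne_empty.mpr hne) ▸ hp))
  refine h.mono ?_
  intro x hx p hp
  simpa using Set.mem_iInter₂.mp hx p hp

lemma isOpen_pos (n : ℕ) : IsOpen {x : Fin n → ℝ | ∀ i, 0 < x i} := by
  have : {x : Fin n → ℝ | ∀ i, 0 < x i} = ⋂ i, {x : Fin n → ℝ | 0 < x i} := by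
    ext x; simp
  rw [this]
  exact isOpen_iInter_of_finite fun i => isOpen_lt continuous_const (continuous_apply i)

lemma exists_pos_generic {n : ℕ} (S : Set (Submodule ℝ (Fin n → ℝ))) (hS : S.Finite) (htop : ⊤ ∉ S) :
    ∃ w : Fin n → ℝ, (∀ i, 0 < w i) ∧ ∀ p ∈ S, w ∉ p := by
  obtain ⟨w, h1, h2⟩ := (dense_generic S hS htop).inter_open_nonempty _ (isOpen_pos n)
    ⟨fun _ => 1, fun i => one_pos⟩
  exact ⟨w, h1, h2⟩

/-- Extreme points of the convex hull of a linearly independent family. -/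
lemma extremePoints_conv_li {n : ℕ} {ι : Type*} [Finite ι] (p : ι → (Fin n → ℝ))
    (hp : LinearIndependent ℝ p) :
    (convexHull ℝ (Set.range p)).extremePoints ℝ = Set.range p := by
  apply Set.Subset.antisymm extremePoints_convexHull_subset
  rintro _ ⟨i, rfl⟩
  by_contra hi
  have hsub : (convexHull ℝ (Set.range p)).extremePoints ℝ ⊆ p '' {i}ᶜ := by
    intro x hx
    obtain ⟨j, rfl⟩ := extremePoints_convexHull_subset hx
    refine ⟨j, ?_, rfl⟩
    rintro rfl
    exact hi hx
  have hcomp : IsCompact (convexHull ℝ (Set.range p)) :=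
    (Set.finite_range p).isCompact_convexHull (𝕜 := ℝ)
  have h1 := closure_convexHull_extremePoints hcomp (convex_convexHull ℝ _)
  have h2 : p i ∈ closure (convexHull ℝ ((convexHull ℝ (Set.range p)).extremePoints ℝ)) := by
    rw [h1]; exact subset_convexHull ℝ _ ⟨i, rfl⟩
  have h3 : closure (convexHull ℝ ((convexHull ℝ (Set.range p)).extremePoints ℝ)) ⊆
      Submodule.span ℝ (p '' {i}ᶜ) := by
    refine closure_minimal ?_ (Submodule.closed_of_finiteDimensional _)
    refine convexHull_min ?_ (Submodule.convex _)
    exact hsub.trans Submodule.subset_span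
  exact hp.notMem_span_image (s := {i}ᶜ) (by simp) (h3 h2)

/-- The simplicial fan data of the Newton boundary. -/
structure FanData {n : ℕ} (f : MvPolynomial (Fin n) ℂ) where
  ι : Type
  fin : Fintype ι
  bas : ι → Basis (Fin n) ℝ (Fin n → ℝ)
  ex : ι → Fin n → (Fin n →₀ ℕ)
  bas_eq : ∀ M i, bas M i = toR (ex M i)
  ex_mem : ∀ M i, ex M i ∈ f.support
  u : ι → ((Fin n → ℝ) →ₗ[ℝ] ℝ)
  u_eq_sum : ∀ M x, u M x = ∑ i, (bas M).repr x i
  u_le : ∀ M, ∀ m ∈ f.support, u M (toR m) ≤ 1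
  u_eq : ∀ M, ∀ m ∈ f.support, u M (toR m) = 1 → ∀ i, 0 ≤ (bas M).repr (toR m) i
  cover : ∀ x : Fin n → ℝ, (∀ i, 0 ≤ x i) → ∃ M, ∀ i, 0 ≤ (bas M).repr x i
  inj : Function.Injective u

variable {n : ℕ} {f : MvPolynomial (Fin n) ℂ}

lemma toR_single (i : Fin n) (k : ℕ) : toR (Finsupp.single i k) = Pi.single i (k : ℝ) := by
  ext j
  simp only [toR, Finsupp.single_apply, Pi.single_apply, eq_comm (a := i)]
  split_ifs <;> simp

lemma zero_mem_P : (0 : Fin n → ℝ) ∈ newtonPolytope f := subset_convexHull ℝ _ (by simp)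

lemma supp_mem_P {m : Fin n →₀ ℕ} (hm : m ∈ f.support) : toR m ∈ newtonPolytope f :=
  subset_convexHull ℝ _ (Or.inr ⟨m, hm, rfl⟩)

lemma P_compact : IsCompact (newtonPolytope f) :=
  Set.Finite.isCompact_convexHull (𝕜 := ℝ)
    ((Set.finite_singleton _).union (f.support.finite_toSet.image _))

lemma P_convex : Convex ℝ (newtonPolytope f) := convex_convexHull ℝ _

lemma P_nonneg {x : Fin n → ℝ} (hx : x ∈ newtonPolytope f) (i : Fin n) : 0 ≤ x i := by
  have : newtonPolytope f ⊆ {x | 0 ≤ x i} := by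
    refine convexHull_min ?_ (convex_halfSpace_ge (LinearMap.proj (R := ℝ) i).isLinear 0)
    rintro _ (rfl | ⟨m, _, rfl⟩)
    · simp
    · show (0:ℝ) ≤ (m i : ℝ)
      positivity
  exact this hx

lemma P_le_of {l : (Fin n → ℝ) →ₗ[ℝ] ℝ} {c : ℝ} (hc : 0 ≤ c) (h : ∀ m ∈ f.support, l (toR m) ≤ c)
    {x : Fin n → ℝ} (hx : x ∈ newtonPolytope f) : l x ≤ c := by
  have : newtonPolytope f ⊆ {x | l x ≤ c} := by
    refine convexHull_min ?_ (convex_halfSpace_le l.isLinear c)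
    rintro _ (rfl | ⟨m, hm, rfl⟩)
    · simpa using hc
    · exact h m hm
  exact this hx

lemma small_mem_P (hconv : Convenient f) :
    ∃ C : ℝ, 0 < C ∧ ∀ z : Fin n → ℝ, (∀ i, 0 ≤ z i) → ∑ i, z i ≤ C → z ∈ newtonPolytope f := by
  refine ⟨1, one_pos, fun z hz hs => ?_⟩
  choose k hk hk2 using hconv
  have hz' : z = ∑ i, (z i / k i) • toR (Finsupp.single i (k i)) + (1 - ∑ i, z i / k i) • 0 := by
    ext j
    simp only [toR_single]
    simp [Finset.sum_apply, Pi.single_apply]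
    have : (k j : ℝ) ≠ 0 := by have := hk j; positivity
    field_simp
  have hs' : ∑ i, z i / k i ≤ 1 := by
    refine le_trans (Finset.sum_le_sum fun i _ => ?_) hs
    have : (1:ℝ) ≤ k i := by exact_mod_cast hk i
    exact div_le_self (hz i) this
  have key := (P_convex (f := f)).sum_mem (t := (Finset.univ : Finset (Option (Fin n))))
    (w := fun o => o.elim (1 - ∑ i, z i / k i) (fun i => z i / k i))
    (z := fun o => o.elim 0 (fun i => toR (Finsupp.single i (k i)))) (by
      rintro (_ | i) _
      · simpa using hs'
      · have := hz i; simp only [Option.elim]; positivity) (by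
      rw [Fintype.sum_option]; simp) (by
      rintro (_ | i) _
      · exact zero_mem_P
      · exact supp_mem_P (by simpa [MvPolynomial.mem_support_iff] using hk2 i))
  rw [Fintype.sum_option] at key
  simp only [Option.elim] at key
  rw [hz', add_comm]
  exact key

lemma interior_P (hconv : Convenient f) : (interior (newtonPolytope f)).Nonempty := by
  obtain ⟨C, hC, h⟩ := small_mem_P hconv
  have ho : IsOpen ({z : Fin n → ℝ | ∀ i, 0 < z i} ∩ {z | ∑ i, z i < C}) :=
    (isOpen_pos n).inter (isOpen_lt (by fun_prop) continuous_const)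
  have hsub : ({z : Fin n → ℝ | ∀ i, 0 < z i} ∩ {z | ∑ i, z i < C}) ⊆ newtonPolytope f :=
    fun z hz => h z (fun i => (hz.1 i).le) hz.2.le
  refine ⟨fun _ => C / (n + 1), interior_maximal hsub ho ⟨fun i => by positivity, ?_⟩⟩
  show ∑ i : Fin n, C / (n + 1) < C
  simp
  rw [mul_div_assoc', div_lt_iff₀ (by positivity)]
  nlinarith

/-- a supporting functional in a positive direction -/
lemma exists_support (hn : 1 ≤ n) (hconv : Convenient f) (x : Fin n → ℝ) (hx : ∀ i, 0 < x i) :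
    ∃ (r : ℝ) (u : (Fin n → ℝ) →ₗ[ℝ] ℝ), 0 < r ∧ r • x ∈ newtonPolytope f ∧ u (r • x) = 1 ∧
      ∀ z ∈ newtonPolytope f, u z ≤ 1 := by
  obtain ⟨C, hC, hsm⟩ := small_mem_P hconv
  have hsum : 0 < ∑ i, x i :=
    Finset.sum_pos (fun i _ => hx i) ⟨⟨0, hn⟩, Finset.mem_univ _⟩
  -- the maximal multiple
  let S : Set (Fin n → ℝ) := newtonPolytope f ∩ (Submodule.span ℝ {x} : Submodule ℝ (Fin n → ℝ))
  have hScomp : IsCompact S := P_compact.inter_right (Submodule.closed_of_finiteDimensional _)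
  obtain ⟨y, ⟨hyP, hyx⟩, hmax⟩ := hScomp.exists_isMaxOn ⟨0, zero_mem_P, zero_mem _⟩
    (f := fun z : Fin n → ℝ => ∑ i, z i) (by fun_prop)
  obtain ⟨r, rfl⟩ := Submodule.mem_span_singleton.mp hyx
  have hsmall : (C / ∑ i, x i) • x ∈ newtonPolytope f := by
    refine hsm _ (fun i => ?_) ?_
    · have := hx i; simp only [Pi.smul_apply, smul_eq_mul]; positivity
    · simp only [Pi.smul_apply, smul_eq_mul, ← Finset.mul_sum]
      rw [div_mul_cancel₀ _ hsum.ne']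
  have hmax' : ∀ t : ℝ, t • x ∈ newtonPolytope f → t ≤ r := by
    intro t ht
    have := hmax (show t • x ∈ S from ⟨ht, Submodule.mem_span_singleton.mpr ⟨t, rfl⟩⟩)
    simp only [Set.mem_ofPred_eq, Pi.smul_apply, smul_eq_mul, ← Finset.mul_sum] at this
    exact le_of_mul_le_mul_right this hsum
  have hr : 0 < r := lt_of_lt_of_le (by positivity) (hmax' _ hsmall)
  have hnotint : r • x ∉ interior (newtonPolytope f) := by
    intro hinter
    have hcont : Continuous fun t : ℝ => t • x := by fun_prop
    have hopen := isOpen_interior.preimage hcont (t := interior (newtonPolytope f))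
    obtain ⟨ε, hε, hball⟩ := Metric.isOpen_iff.mp hopen r hinter
    have h1 : r + ε / 2 ∈ Metric.ball r ε := by
      rw [Metric.mem_ball, Real.dist_eq, abs_lt]; constructor <;> linarith
    have := hmax' _ (interior_subset (hball h1))
    linarith
  obtain ⟨l, hl⟩ := geometric_hahn_banach_open_point (P_convex (f := f)).interior isOpen_interior hnotint
  have hle : ∀ z ∈ newtonPolytope f, l z ≤ l (r • x) := by
    intro z hz
    have hz' : z ∈ closure (interior (newtonPolytope f)) := by
      rw [(P_convex (f := f)).closure_interior_eq_closure_of_nonempty_interior (interior_P hconv)]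
      exact subset_closure hz
    have : closure (interior (newtonPolytope f)) ⊆ {z | l z ≤ l (r • x)} :=
      closure_minimal (fun a ha => (hl a ha).le) (isClosed_le l.continuous continuous_const)
    exact this hz'
  have hc0 : 0 ≤ l (r • x) := by simpa using hle 0 zero_mem_P
  have hc : 0 < l (r • x) := by
    refine lt_of_le_of_ne hc0 fun h0 => ?_
    have hlx : l x = 0 := by
      have : r * l x = 0 := by rw [h0]; simp
      rcases mul_eq_zero.mp this with h | h
      · exact absurd h hr.ne'
      · exact h
    have hei : ∀ i, l (Pi.single i 1) ≤ 0 := by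
      intro i
      have h1 : C • (Pi.single i 1 : Fin n → ℝ) ∈ newtonPolytope f := by
        refine hsm _ (fun j => ?_) ?_
        · simp only [Pi.smul_apply, Pi.single_apply, smul_eq_mul]; split_ifs <;> simp [hC.le]
        · simp [Pi.single_apply]
      have h2 := hle _ h1
      rw [← h0, map_smul, smul_eq_mul] at h2
      exact nonpos_of_mul_nonpos_right h2 hC
    have hlsum : ∀ z, l z = ∑ i, z i * l (Pi.single i 1) := by
      intro z
      have : z = ∑ i, z i • (Pi.single i 1 : Fin n → ℝ) := by
        ext j; simp [Finset.sum_apply, Pi.single_apply]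
      conv_lhs => rw [this]
      simp [map_sum]
    have hzero : ∀ i, l (Pi.single i 1) = 0 := by
      have h1 := hlsum x
      rw [hlx] at h1
      have h2 := (Finset.sum_eq_zero_iff_of_nonpos (s := Finset.univ)
        (f := fun i => x i * l (Pi.single i 1)) (fun i _ =>
          mul_nonpos_of_nonneg_of_nonpos (hx i).le (hei i))).mp h1.symm
      intro i
      rcases mul_eq_zero.mp (h2 i (Finset.mem_univ _)) with h | h
      · exact absurd h (hx i).ne'
      · exact h
    obtain ⟨z, hz⟩ := interior_P hconv
    have := hl z hz
    rw [hlsum z, ← h0] at this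
    simp [hzero] at this
  refine ⟨r, (l (r • x))⁻¹ • l.toLinearMap, hr, hyP, ?_, ?_⟩
  · simp only [LinearMap.smul_apply, ContinuousLinearMap.coe_coe, smul_eq_mul]
    exact inv_mul_cancel₀ hc.ne'
  · intro z hz
    simp only [LinearMap.smul_apply, ContinuousLinearMap.coe_coe, smul_eq_mul]
    rw [inv_mul_le_iff₀ hc, mul_one]
    exact hle z hz

/-- The face cut out by a supporting functional. -/
def uFace (f : MvPolynomial (Fin n) ℂ) (u : (Fin n → ℝ) →ₗ[ℝ] ℝ) : Set (Fin n → ℝ) :=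
  {z ∈ newtonPolytope f | u z = 1}

lemma extremePoints_uFace (u : (Fin n → ℝ) →ₗ[ℝ] ℝ) (hu : ∀ z ∈ newtonPolytope f, u z ≤ 1) :
    (uFace f u).extremePoints ℝ ⊆ toR '' (f.support : Set (Fin n →₀ ℕ)) := by
  have hext : IsExtreme ℝ (newtonPolytope f) (uFace f u) := by
    refine IsExposed.isExtreme (𝕜 := ℝ) ?_
    rintro ⟨z, hz, hz1⟩
    refine ⟨u.toContinuousLinearMap, ?_⟩
    ext y
    constructor
    · rintro ⟨hy, hy1⟩
      exact ⟨hy, fun w hw => by simpa [hy1] using hu w hw⟩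
    · rintro ⟨hy, hy1⟩
      refine ⟨hy, le_antisymm (hu y hy) ?_⟩
      have := hy1 z hz
      simpa [hz1] using this
  intro x hx
  have h1 := hext.extremePoints_subset_extremePoints hx
  rcases extremePoints_convexHull_subset h1 with h | h
  · exfalso
    have h2 := hx.1.2
    rw [h] at h2
    simp at h2
  · exact h

/-- A good pair (functional, vertices). -/
structure Good (f : MvPolynomial (Fin n) ℂ) (u : (Fin n → ℝ) →ₗ[ℝ] ℝ) (e : Fin n → (Fin n →₀ ℕ)) :
    Prop where
  mem : ∀ i, e i ∈ f.support
  li : LinearIndependent ℝ fun i => toR (e i)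
  one : ∀ i, u (toR (e i)) = 1
  le : ∀ m ∈ f.support, u (toR m) ≤ 1
  eq : ∀ m ∈ f.support, u (toR m) = 1 → toR m ∈ convexHull ℝ (Set.range fun i => toR (e i))

lemma exists_good (hn : 1 ≤ n) (hconv : Convenient f)
    (hsimp : ∀ Δ : Set (Fin n → ℝ), FcalMem f Δ → faceDim Δ ≤ n - 1 → IsSimplex Δ)
    (x : Fin n → ℝ) (hx : ∀ i, 0 < x i)
    (hgen : ∀ T ⊆ toR '' (f.support : Set (Fin n →₀ ℕ)), x ∈ Submodule.span ℝ T →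
      Submodule.span ℝ T = ⊤) :
    ∃ u e, Good f u e ∧ ∃ r : ℝ, 0 < r ∧ r • x ∈ convexHull ℝ (Set.range fun i => toR (e i)) := by
  obtain ⟨r, u, hr, hrP, hur, hu⟩ := exists_support hn hconv x hx
  have hmem : r • x ∈ uFace f u := ⟨hrP, hur⟩
  have hface : FcalMem f (uFace f u) := by
    refine ⟨⟨⟨_, hmem⟩, u, 1, hu, rfl⟩, fun h => ?_⟩
    obtain ⟨i, hi⟩ := Set.mem_iUnion.mp (h hmem)
    have : r * x i = 0 := hi
    exact (mul_pos hr (hx i)).ne' this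
  have hdim : faceDim (uFace f u) ≤ n - 1 := by
    have h1 : (affineSpan ℝ (uFace f u)).direction ≤ LinearMap.ker u := by
      rw [direction_affineSpan, vectorSpan, Submodule.span_le]
      rintro _ ⟨a, ha, b, hb, rfl⟩
      have : u (a - b) = 0 := by rw [map_sub, ha.2, hb.2, sub_self]
      exact this
    refine (Submodule.finrank_mono h1).trans ?_
    have h2 : u ≠ 0 := by rintro rfl; simp at hur
    have h3 := Module.Dual.finrank_ker_add_one_of_ne_zero (f := u) h2
    simp at h3
    omega
  obtain ⟨k, p, hp, hpe⟩ := hsimp _ hface hdim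
  have hpu : ∀ j, u (p j) = 1 := fun j => by
    have : p j ∈ uFace f u := by rw [hpe]; exact subset_convexHull ℝ _ ⟨j, rfl⟩
    exact this.2
  have hli : LinearIndependent ℝ p := by
    rw [Fintype.linearIndependent_iff]
    intro g hg
    have h1 : ∑ i, g i = 0 := by
      have := congrArg u hg
      simpa [map_sum, hpu] using this
    rw [affineIndependent_iff] at hp
    intro i
    exact hp Finset.univ g h1 hg i (Finset.mem_univ _)
  have hpV : ∀ j, p j ∈ toR '' (f.support : Set (Fin n →₀ ℕ)) := by
    intro j
    apply extremePoints_uFace u hu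
    rw [hpe, extremePoints_conv_li p hli]
    exact ⟨j, rfl⟩
  have hspan : Submodule.span ℝ (Set.range p) = ⊤ := by
    apply hgen
    · rintro _ ⟨j, rfl⟩; exact hpV j
    · rw [hpe] at hmem
      have : r • x ∈ Submodule.span ℝ (Set.range p) :=
        convexHull_min Submodule.subset_span (Submodule.convex _) hmem
      exact (Submodule.smul_mem_iff _ hr.ne').mp this
  have hk : n = k + 1 := by
    have := finrank_span_eq_card hli
    rw [hspan] at this
    simpa using this
  subst hk
  choose e he he2 using hpV
  have hfun : (fun i => toR (e i)) = p := funext he2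
  refine ⟨u, e, ⟨he, by rw [hfun]; exact hli, fun i => by rw [he2]; exact hpu i,
    fun m hm => hu _ (supp_mem_P hm), fun m hm h1 => ?_⟩, r, hr, ?_⟩
  · rw [hfun, ← hpe]
    exact ⟨supp_mem_P hm, h1⟩
  · rw [hfun, ← hpe]
    exact hmem

lemma conv_repr_nonneg (b : Basis (Fin n) ℝ (Fin n → ℝ)) {x : Fin n → ℝ}
    (hx : x ∈ convexHull ℝ (Set.range b)) (i : Fin n) : 0 ≤ b.repr x i := by
  have : convexHull ℝ (Set.range b) ⊆ {x | 0 ≤ b.coord i x} := by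
    refine convexHull_min ?_ (convex_halfSpace_ge (b.coord i).isLinear 0)
    rintro _ ⟨j, rfl⟩
    simp only [Set.mem_ofPred_eq, Basis.coord_apply, Basis.repr_self, Finsupp.single_apply]
    split_ifs <;> simp
  exact this hx

lemma exists_fan (hn : 1 ≤ n) (hconv : Convenient f)
    (hsimp : ∀ Δ : Set (Fin n → ℝ), FcalMem f Δ → faceDim Δ ≤ n - 1 → IsSimplex Δ) :
    Nonempty (FanData f) := by
  classical
  let ι := {u : (Fin n → ℝ) →ₗ[ℝ] ℝ // ∃ e, Good f u e}
  choose e he using fun M : ι => M.2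
  have hcard : Fintype.card (Fin n) = finrank ℝ (Fin n → ℝ) := by simp
  let hne : Nonempty (Fin n) := ⟨⟨0, hn⟩⟩
  let bas : ι → Basis (Fin n) ℝ (Fin n → ℝ) := fun M =>
    basisOfLinearIndependentOfCardEqFinrank (he M).li hcard
  have hbas : ∀ M i, bas M i = toR (e M i) := fun M i => by simp [bas]
  have hbas' : ∀ M, (bas M : Fin n → (Fin n → ℝ)) = fun i => toR (e M i) := fun M => funext (hbas M)
  have hu : ∀ (M : ι) x, M.1 x = ∑ i, (bas M).repr x i := by
    intro M x
    conv_lhs => rw [← (bas M).sum_repr x]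
    simp only [map_sum, map_smul, hbas, (he M).one, smul_eq_mul, mul_one]
  have hfin : Finite ι := by
    let g : ι → (Fin n → f.support) := fun M i => ⟨e M i, (he M).mem i⟩
    refine Finite.of_injective g ?_
    intro M M' h
    apply Subtype.ext
    refine (bas M).ext fun i => ?_
    have : e M i = e M' i := congrArg Subtype.val (congrFun h i)
    rw [hbas, (he M).one, this, (he M').one]
  have hclosed : IsClosed {x : Fin n → ℝ | ∃ M : ι, ∀ i, 0 ≤ (bas M).repr x i} := by
    have : {x : Fin n → ℝ | ∃ M : ι, ∀ i, 0 ≤ (bas M).repr x i} =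
      ⋃ M : ι, ⋂ i, {x | 0 ≤ (bas M).coord i x} := by
      ext x; simp
    rw [this]
    refine isClosed_iUnion_of_finite fun M => isClosed_iInter fun i =>
      isClosed_le continuous_const (LinearMap.continuous_of_finiteDimensional _)
  let S : Set (Submodule ℝ (Fin n → ℝ)) :=
    (Submodule.span ℝ '' (𝒫 (toR '' (f.support : Set (Fin n →₀ ℕ))))) \ {⊤}
  have hSfin : S.Finite :=
    (((f.support.finite_toSet.image toR).finite_subsets).image _).subset Set.sdiff_subset
  have hdense := dense_generic S hSfin (by simp [S])
  have hsub : {x : Fin n → ℝ | ∀ i, 0 < x i} ∩ {x | ∀ p ∈ S, x ∉ p} ⊆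
      {x : Fin n → ℝ | ∃ M : ι, ∀ i, 0 ≤ (bas M).repr x i} := by
    rintro x ⟨hx, hxS⟩
    obtain ⟨u, e', hgood, r, hr, hrx⟩ := exists_good hn hconv hsimp x hx (by
      intro T hT hxT
      by_contra hne
      exact hxS _ ⟨⟨T, hT, rfl⟩, hne⟩ hxT)
    let M : ι := ⟨u, e', hgood⟩
    refine ⟨M, fun i => ?_⟩
    have hmem : r • x ∈ convexHull ℝ (Set.range (bas M)) := by
      refine convexHull_min ?_ (convex_convexHull ℝ _) hrx
      rintro _ ⟨j, rfl⟩
      rw [hbas']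
      exact (he M).eq _ (hgood.mem j) (hgood.one j)
    have := conv_repr_nonneg (bas M) hmem i
    rw [map_smul, Finsupp.smul_apply, smul_eq_mul] at this
    exact nonneg_of_mul_nonneg_right this hr
  have hcover : ∀ x : Fin n → ℝ, (∀ i, 0 ≤ x i) → ∃ M : ι, ∀ i, 0 ≤ (bas M).repr x i := by
    have h1 : {x : Fin n → ℝ | ∀ i, 0 < x i} ⊆ _ :=
      (hdense.open_subset_closure_inter (isOpen_pos n)).trans (closure_minimal hsub hclosed)
    intro x hx
    have h2 := closure_minimal h1 hclosed
    apply h2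
    rw [mem_closure_iff_seq_limit]
    refine ⟨fun k i => x i + 1 / ((k : ℝ) + 1), fun k i => ?_, ?_⟩
    · have := hx i; positivity
    · rw [tendsto_pi_nhds]
      intro i
      simpa using tendsto_const_nhds.add (tendsto_one_div_add_atTop_nhds_zero_nat (𝕜 := ℝ))
  exact ⟨{
    ι := ι
    fin := Fintype.ofFinite ι
    bas := bas
    ex := e
    bas_eq := hbas
    ex_mem := fun M i => (he M).mem i
    u := fun M => M.1
    u_eq_sum := hu
    u_le := fun M m hm => (he M).le m hm
    u_eq := fun M m hm h1 i => conv_repr_nonneg (bas M) (by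
      rw [hbas']; exact (he M).eq m hm h1) i
    cover := hcover
    inj := Subtype.val_injective }⟩

end Geo
end ToricNewton

namespace ToricNewton

section Fan
open Module

variable {n : ℕ} {f : MvPolynomial (Fin n) ℂ}

namespace FanData
variable (D : FanData f)

/-- coordinates -/
noncomputable def lam (M : D.ι) (i : Fin n) : (Fin n → ℝ) →ₗ[ℝ] ℝ := (D.bas M).coord i

/-- membership in the closed cone -/
def Cone (M : D.ι) (x : Fin n → ℝ) : Prop := ∀ i, 0 ≤ D.lam M i x

/-- vertices -/
noncomputable def b (M : D.ι) (i : Fin n) : Fin n → ℝ := toR (D.ex M i)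

lemma u_sum (M : D.ι) (x : Fin n → ℝ) : D.u M x = ∑ i, D.lam M i x := D.u_eq_sum M x

lemma sum_lam (M : D.ι) (x : Fin n → ℝ) : ∑ i, D.lam M i x • D.b M i = x := by
  have := (D.bas M).sum_repr x
  simp only [D.bas_eq] at this
  exact this

lemma lam_b (M : D.ι) (i j : Fin n) : D.lam M i (D.b M j) = if j = i then 1 else 0 := by
  have : D.lam M i (D.bas M j) = if j = i then 1 else 0 := by
    rw [lam, Basis.coord_apply, Basis.repr_self, Finsupp.single_apply]
  rwa [D.bas_eq] at this

lemma u_b (M : D.ι) (j : Fin n) : D.u M (D.b M j) = 1 := by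
  rw [u_sum]; simp [lam_b]

lemma lam_sum (M : D.ι) (i : Fin n) (c : Fin n → ℝ) : D.lam M i (∑ j, c j • D.b M j) = c i := by
  simp [map_sum, lam_b]

lemma li_b (M : D.ι) : LinearIndependent ℝ (D.b M) := by
  have h := (D.bas M).linearIndependent
  have : (D.bas M : Fin n → _) = D.b M := funext (D.bas_eq M)
  rwa [this] at h

lemma b_mem_P (M : D.ι) (i : Fin n) : D.b M i ∈ newtonPolytope f := supp_mem_P (D.ex_mem M i)

lemma b_nonneg (M : D.ι) (i k : Fin n) : 0 ≤ D.b M i k := Nat.cast_nonneg _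

lemma Cone.nonneg {D : FanData f} {M : D.ι} {x : Fin n → ℝ} (h : D.Cone M x) (k : Fin n) :
    0 ≤ x k := by
  rw [← D.sum_lam M x]
  simp only [Finset.sum_apply, Pi.smul_apply, smul_eq_mul]
  exact Finset.sum_nonneg fun i _ => mul_nonneg (h i) (D.b_nonneg M i k)

lemma u_le_P (M : D.ι) {z : Fin n → ℝ} (hz : z ∈ newtonPolytope f) : D.u M z ≤ 1 :=
  P_le_of zero_le_one (D.u_le M) hz

lemma cone_of_P (M : D.ι) {z : Fin n → ℝ} (hz : z ∈ newtonPolytope f) (h1 : D.u M z = 1) :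
    D.Cone M z := by
  have : newtonPolytope f ⊆ {z | D.u M z ≤ 1 ∧ (D.u M z = 1 → D.Cone M z)} := by
    refine convexHull_min ?_ ?_
    · rintro _ (rfl | ⟨m, hm, rfl⟩)
      · simp
      · exact ⟨D.u_le M m hm, fun h => D.u_eq M m hm h⟩
    · rintro x ⟨hx, hx'⟩ y ⟨hy, hy'⟩ a c ha hc hac
      have e : D.u M (a • x + c • y) = a * D.u M x + c * D.u M y := by simp
      refine ⟨?_, fun h i => ?_⟩
      · rw [e]; nlinarith
      · rw [e] at h
        have e2 : D.lam M i (a • x + c • y) = a * D.lam M i x + c * D.lam M i y := by simp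
        rw [e2]
        have t1 : 0 ≤ a * D.lam M i x := by
          rcases ha.eq_or_lt with h0 | h0
          · rw [← h0]; simp
          · exact mul_nonneg ha (hx' (by nlinarith) i)
        have t2 : 0 ≤ c * D.lam M i y := by
          rcases hc.eq_or_lt with h0 | h0
          · rw [← h0]; simp
          · exact mul_nonneg hc (hy' (by nlinarith) i)
        exact add_nonneg t1 t2
  exact (this hz).2 h1

lemma Cone.u_nonneg {D : FanData f} {M : D.ι} {x : Fin n → ℝ} (h : D.Cone M x) : 0 ≤ D.u M x := by
  rw [u_sum]; exact Finset.sum_nonneg fun i _ => h i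

lemma Cone.eq_zero {D : FanData f} {M : D.ι} {x : Fin n → ℝ} (h : D.Cone M x) (h0 : D.u M x = 0) :
    x = 0 := by
  rw [u_sum, Finset.sum_eq_zero_iff_of_nonneg (fun i _ => h i)] at h0
  rw [← D.sum_lam M x]
  exact Finset.sum_eq_zero fun i hi => by rw [h0 i hi, zero_smul]

/-- If `x` is in the cone and `u x = 1` then `x` is in the polytope. -/
lemma Cone.mem_conv {D : FanData f} {M : D.ι} {x : Fin n → ℝ} (h : D.Cone M x) (h1 : D.u M x = 1) :
    x ∈ newtonPolytope f := by
  rw [← D.sum_lam M x]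
  refine P_convex.sum_mem (fun i _ => h i) ?_ (fun i _ => D.b_mem_P M i)
  rw [← h1, u_sum]

lemma Cone.smul {D : FanData f} {M : D.ι} {x : Fin n → ℝ} (h : D.Cone M x) {c : ℝ} (hc : 0 ≤ c) :
    D.Cone M (c • x) := fun i => by
  rw [map_smul, smul_eq_mul]; exact mul_nonneg hc (h i)

lemma Cone.nu_le {D : FanData f} {M : D.ι} {x : Fin n → ℝ} (h : D.Cone M x) : nu f x ≤ D.u M x := by
  rcases h.u_nonneg.eq_or_lt with h0 | h0
  · rw [h.eq_zero h0.symm]; simp [nu]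
  · refine gauge_le_of_mem h.u_nonneg ⟨(D.u M x)⁻¹ • x, ?_, ?_⟩
    · exact (h.smul (inv_nonneg.mpr h0.le)).mem_conv (by
        rw [map_smul, smul_eq_mul, inv_mul_cancel₀ h0.ne'])
    · simp [smul_smul, mul_inv_cancel₀ h0.ne']

lemma u_le_nu (M : D.ι) {x : Fin n → ℝ} (hx : ∀ i, 0 ≤ x i) : D.u M x ≤ nu f x := by
  rw [nu, gauge]
  refine le_csInf ?_ ?_
  · obtain ⟨M', h⟩ := D.cover x hx
    have h0 : 0 < D.u M' x + 1 := by have := Cone.u_nonneg (D := D) h; linarith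
    refine ⟨D.u M' x + 1, h0, (D.u M' x + 1)⁻¹ • x, ?_, by simp [smul_smul, mul_inv_cancel₀ h0.ne']⟩
    rcases (Cone.u_nonneg (D := D) h).eq_or_lt with h1 | h1
    · rw [Cone.eq_zero (D := D) h h1.symm, smul_zero]; exact zero_mem_P
    · have hz : (D.u M' x)⁻¹ • x ∈ newtonPolytope f :=
        (Cone.smul (D := D) h (inv_nonneg.mpr h1.le)).mem_conv (by
        rw [map_smul, smul_eq_mul, inv_mul_cancel₀ h1.ne'])
      have h2 := (P_convex (f := f)).smul_mem_of_zero_mem zero_mem_P hz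
        (t := D.u M' x / (D.u M' x + 1)) ⟨by positivity, by rw [div_le_one h0]; linarith⟩
      rw [smul_smul] at h2
      convert h2 using 2
      field_simp
  · rintro r ⟨hr, z, hz, rfl⟩
    have := D.u_le_P M hz
    simp only [map_smul, smul_eq_mul]
    have hr : 0 < r := hr
    nlinarith

lemma Cone.nu_eq {D : FanData f} {M : D.ι} {x : Fin n → ℝ} (h : D.Cone M x) : nu f x = D.u M x :=
  le_antisymm h.nu_le (D.u_le_nu M h.nonneg)

lemma cone_of_nu (M : D.ι) {x : Fin n → ℝ} (hx : ∀ i, 0 ≤ x i) (h : D.u M x = nu f x) :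
    D.Cone M x := by
  obtain ⟨M', h'⟩ := D.cover x hx
  change D.Cone M' x at h'
  rcases h'.u_nonneg.eq_or_lt with h1 | h1
  · rw [h'.eq_zero h1.symm]; intro i; simp
  · have hz : (D.u M' x)⁻¹ • x ∈ newtonPolytope f := (h'.smul (inv_nonneg.mpr h1.le)).mem_conv (by
        rw [map_smul, smul_eq_mul, inv_mul_cancel₀ h1.ne'])
    have h2 := D.cone_of_P M hz (by rw [map_smul, smul_eq_mul, h, h'.nu_eq, inv_mul_cancel₀ h1.ne'])
    have h3 := Cone.smul h2 h1.le
    rwa [smul_smul, mul_inv_cancel₀ h1.ne', one_smul] at h3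

lemma nu_nonneg (x : Fin n → ℝ) : 0 ≤ nu f x := gauge_nonneg _

lemma nu_supp {m : Fin n →₀ ℕ} (hm : m ∈ f.support) : nu f (toR m) ≤ 1 :=
  gauge_le_one_of_mem (supp_mem_P hm)

lemma toR_nonneg (m : Fin n →₀ ℕ) (i : Fin n) : 0 ≤ toR m i := Nat.cast_nonneg _

lemma natToR_nonneg (m : Fin n → ℕ) (i : Fin n) : 0 ≤ natToR m i := Nat.cast_nonneg _

lemma finite_nu_le (D : FanData f) (β : ℝ) : {v : Fin n → ℕ | nu f (natToR v) ≤ β}.Finite := by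
  have := D.fin
  let B : ℝ := ∑ M : D.ι, ∑ i, ∑ k, D.b M i k
  have hB : ∀ M i k, D.b M i k ≤ B := by
    intro M i k
    refine le_trans ?_ (Finset.single_le_sum (f := fun M => ∑ i, ∑ k, D.b M i k)
      (fun M _ => Finset.sum_nonneg fun i _ => Finset.sum_nonneg fun k _ => D.b_nonneg M i k)
      (Finset.mem_univ M))
    refine le_trans ?_ (Finset.single_le_sum (f := fun i => ∑ k, D.b M i k)
      (fun i _ => Finset.sum_nonneg fun k _ => D.b_nonneg M i k) (Finset.mem_univ i))
    exact Finset.single_le_sum (f := fun k => D.b M i k)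
      (fun k _ => D.b_nonneg M i k) (Finset.mem_univ k)
  obtain ⟨N, hN⟩ := exists_nat_ge (β * B)
  refine (Set.finite_Iic (fun _ : Fin n => N)).subset ?_
  intro v hv k
  have hv : nu f (natToR v) ≤ β := hv
  obtain ⟨M, hM⟩ := D.cover (natToR v) (natToR_nonneg v)
  change D.Cone M _ at hM
  rw [hM.nu_eq, u_sum] at hv
  have h1 : (v k : ℝ) ≤ N := by
    refine le_trans ?_ hN
    have h2 : natToR v k = ∑ i, D.lam M i (natToR v) * D.b M i k := by
      conv_lhs => rw [← D.sum_lam M (natToR v)]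
      simp [Finset.sum_apply]
    change natToR v k ≤ _
    rw [h2]
    have hB0 : 0 ≤ B := (D.b_nonneg M k k).trans (hB M k k)
    refine le_trans (Finset.sum_le_sum fun i _ => mul_le_mul_of_nonneg_left (hB M i k) (hM i)) ?_
    rw [← Finset.sum_mul]
    exact mul_le_mul_of_nonneg_right hv hB0
  exact_mod_cast h1

/-- `v + ε w` is in the cone of `M` for small `ε > 0`. -/
def Sel (w : Fin n → ℝ) (M : D.ι) (v : Fin n → ℝ) : Prop :=
  D.Cone M v ∧ ∀ i, D.lam M i w < 0 → 0 < D.lam M i v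

lemma Sel.exists_eps {D : FanData f} {w : Fin n → ℝ} {M : D.ι} {v : Fin n → ℝ} (h : D.Sel w M v) :
    ∃ ε : ℝ, 0 < ε ∧ D.Cone M (v + ε • w) := by
  have hev : ∀ᶠ ε in nhdsWithin (0:ℝ) (Set.Ioi 0), D.Cone M (v + ε • w) := by
    unfold Cone
    rw [Filter.eventually_all]
    intro i
    by_cases hi : D.lam M i w < 0
    · have h1 := h.2 i hi
      have ht : Filter.Tendsto (fun ε : ℝ => D.lam M i v + ε * D.lam M i w)
          (nhdsWithin (0:ℝ) (Set.Ioi 0)) (nhds (D.lam M i v + 0 * D.lam M i w)) :=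
        (Continuous.tendsto (by fun_prop) 0).mono_left nhdsWithin_le_nhds
      rw [zero_mul, add_zero] at ht
      filter_upwards [ht.eventually (lt_mem_nhds h1)] with ε hε
      simpa using hε.le
    · filter_upwards [self_mem_nhdsWithin] with ε hε
      have hε : 0 < ε := hε
      rw [map_add, map_smul, smul_eq_mul]
      exact add_nonneg (h.1 i) (mul_nonneg hε.le (not_lt.mp hi))
  obtain ⟨ε, h1, h2⟩ := (hev.and self_mem_nhdsWithin).exists
  exact ⟨ε, h2, h1⟩

lemma Sel.max {D : FanData f} {w : Fin n → ℝ} {M M' : D.ι} {v : Fin n → ℝ} (h : D.Sel w M v)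
    (h' : D.Cone M' v) : D.u M' w ≤ D.u M w := by
  obtain ⟨ε, hε, hc⟩ := h.exists_eps
  have h1 := D.u_le_nu M' hc.nonneg
  rw [hc.nu_eq, map_add, map_add, ← h'.nu_eq, ← h.1.nu_eq, map_smul, map_smul, smul_eq_mul,
    smul_eq_mul] at h1
  have h2 : ε * D.u M' w ≤ ε * D.u M w := by linarith
  exact le_of_mul_le_mul_left h2 hε

lemma exists_sel (w v : Fin n → ℝ) (ε₀ : ℝ) (hε₀ : 0 < ε₀)
    (hpos : ∀ ε : ℝ, 0 < ε → ε ≤ ε₀ → ∀ i, 0 ≤ (v + ε • w) i) : ∃ M, D.Sel w M v := by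
  have := D.fin
  have hk : ∀ k : ℕ, ∃ M, D.Cone M (v + (ε₀ / (k + 1)) • w) := fun k =>
    D.cover _ (hpos _ (by positivity) (div_le_self hε₀.le (by
      have : (0:ℝ) ≤ k := Nat.cast_nonneg k
      linarith)))
  choose g hg using hk
  obtain ⟨M, hM⟩ := Finite.exists_infinite_fiber g
  have hinf : (g ⁻¹' {M}).Infinite := Set.infinite_coe_iff.mp hM
  have key : ∀ N : ℕ, ∃ k > N, D.Cone M (v + (ε₀ / ((k:ℕ) + 1)) • w) := by
    intro N
    obtain ⟨k, hk, hkN⟩ := hinf.exists_gt N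
    refine ⟨k, hkN, ?_⟩
    have := hg k
    rwa [show g k = M from hk] at this
  have hcone : D.Cone M v := by
    intro i
    by_contra hneg
    push Not at hneg
    obtain ⟨N, hN⟩ := exists_nat_gt (ε₀ * |D.lam M i w| / (- D.lam M i v))
    obtain ⟨k, hk, hc⟩ := key N
    have h1 := hc i
    rw [map_add, map_smul, smul_eq_mul] at h1
    have h2 : ε₀ * |D.lam M i w| < (k + 1) * (- D.lam M i v) := by
      rw [div_lt_iff₀ (by linarith)] at hN
      have : (N:ℝ) ≤ k + 1 := by
        have : (N:ℝ) < k := by exact_mod_cast hk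
        linarith
      nlinarith
    have h3 : ε₀ / (k+1) * D.lam M i w ≤ ε₀ / (k+1) * |D.lam M i w| :=
      mul_le_mul_of_nonneg_left (le_abs_self _) (by positivity)
    have h4 : ε₀ / (k+1) * |D.lam M i w| < - D.lam M i v := by
      rw [div_mul_eq_mul_div, div_lt_iff₀ (by positivity)]; linarith
    linarith
  refine ⟨M, hcone, fun i hi => ?_⟩
  obtain ⟨k, hk, hc⟩ := key 0
  have h1 := hc i
  rw [map_add, map_smul, smul_eq_mul] at h1
  have : 0 < ε₀ / ((k:ℝ) + 1) := by positivity
  nlinarith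

/-- A generic direction. -/
structure Gen (w : Fin n → ℝ) : Prop where
  pos : ∀ i, 0 < w i
  ne : ∀ M i, D.lam M i w ≠ 0
  inj : ∀ M M', D.u M w = D.u M' w → M = M'

lemma exists_gen : ∃ w, D.Gen w := by
  have := D.fin
  let S : Set (Submodule ℝ (Fin n → ℝ)) :=
    (Set.range fun p : D.ι × Fin n => LinearMap.ker (D.lam p.1 p.2)) ∪
    ((fun p : D.ι × D.ι => LinearMap.ker (D.u p.1 - D.u p.2)) '' {p | p.1 ≠ p.2})
  have hS : S.Finite := (Set.finite_range _).union (Set.toFinite _)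
  obtain ⟨w, hw, h⟩ := exists_pos_generic S hS (by
    rintro (⟨⟨M, i⟩, h⟩ | ⟨⟨M, M'⟩, hne, h⟩)
    · have h := LinearMap.ker_eq_top.mp h
      have := D.lam_b M i i
      rw [h] at this
      simp at this
    · have h := LinearMap.ker_eq_top.mp h
      exact hne (D.inj (sub_eq_zero.mp h)))
  refine ⟨w, hw, fun M i hz => h _ (Or.inl ⟨(M, i), rfl⟩) hz, fun M M' he => ?_⟩
  by_contra hne
  exact h _ (Or.inr ⟨(M, M'), hne, rfl⟩) (by simp [he])

lemma Sel.unique {D : FanData f} {w : Fin n → ℝ} 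
    (hw : ∀ M M', D.u M w = D.u M' w → M = M') {M M' : D.ι} {v : Fin n → ℝ}
    (h : D.Sel w M v) (hh2 : D.Sel w M' v) : M = M' :=
  hw _ _ (le_antisymm (hh2.max h.1) (h.max hh2.1))

/-- common denominator -/
lemma exists_denom_one (M : D.ι) :
    ∃ d : ℕ, 1 ≤ d ∧ ∀ i (v : Fin n →₀ ℕ), ∃ z : ℤ, (d : ℝ) * D.lam M i (toR v) = z := by
  let A : Matrix (Fin n) (Fin n) ℤ := fun k i => (D.ex M i k : ℤ)
  let AR : Matrix (Fin n) (Fin n) ℝ := A.map (Int.castRingHom ℝ)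
  have hcol : AR.col = D.b M := by
    ext i k
    simp [AR, A, b, toR, Matrix.col, Matrix.map_apply]
    rfl
  have hli : IsUnit AR := by
    rw [← Matrix.linearIndependent_cols_iff_isUnit, hcol]
    exact D.li_b M
  have hdet : AR.det = (A.det : ℝ) := by
    simpa [AR] using ((Int.castRingHom ℝ).map_det A).symm
  have hne : A.det ≠ 0 := by
    intro h0
    have := (Matrix.isUnit_iff_isUnit_det _).mp hli
    rw [hdet, h0] at this
    simp at this
  have hadj : AR.adjugate = A.adjugate.map (Int.castRingHom ℝ) := by
    simpa [AR] using ((Int.castRingHom ℝ).map_adjugate A).symm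
  have key : ∀ i (v : Fin n →₀ ℕ), ∃ z : ℤ, (A.det : ℝ) * D.lam M i (toR v) = z := by
    intro i v
    have h1 : AR.mulVec (fun i => D.lam M i (toR v)) = toR v := by
      conv_rhs => rw [← D.sum_lam M (toR v)]
      ext k
      simp only [Matrix.mulVec, dotProduct, Finset.sum_apply, Pi.smul_apply, smul_eq_mul]
      refine Finset.sum_congr rfl fun j _ => ?_
      rw [mul_comm]
      rfl
    have h2 := congrArg (AR.adjugate.mulVec) h1
    rw [Matrix.mulVec_mulVec, Matrix.adjugate_mul, Matrix.smul_mulVec, Matrix.one_mulVec, hdet] at h2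
    have h3 := congrFun h2 i
    simp only [Pi.smul_apply, smul_eq_mul] at h3
    refine ⟨∑ k, A.adjugate i k * (v k : ℤ), ?_⟩
    rw [h3, hadj]
    simp [Matrix.mulVec, dotProduct, toR]
  refine ⟨A.det.natAbs, Nat.one_le_iff_ne_zero.mpr (Int.natAbs_ne_zero.mpr hne), fun i v => ?_⟩
  obtain ⟨z, hz⟩ := key i v
  clear_value A
  generalize A.det = a at hz
  rcases Int.natAbs_eq a with h | h
  · refine ⟨z, ?_⟩
    rw [← hz, ← Int.cast_natCast a.natAbs, ← h]
  · refine ⟨-z, ?_⟩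
    rw [Int.cast_neg, ← hz, ← Int.cast_natCast a.natAbs, show (a.natAbs : ℤ) = - a by omega]
    push_cast
    ring

lemma exists_denom :
    ∃ d : ℕ, 1 ≤ d ∧ ∀ M i (v : Fin n →₀ ℕ), ∃ z : ℤ, (d : ℝ) * D.lam M i (toR v) = z := by
  have := D.fin
  choose d hd h using D.exists_denom_one
  refine ⟨∏ M, d M, Nat.one_le_iff_ne_zero.mpr (Finset.prod_ne_zero_iff.mpr fun M _ => by
    have := hd M; omega), fun M i v => ?_⟩
  obtain ⟨z, hz⟩ := h M i v
  obtain ⟨e, he⟩ := Finset.dvd_prod_of_mem d (Finset.mem_univ M)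
  refine ⟨e * z, ?_⟩
  rw [he]
  push_cast
  rw [← hz]
  ring

end FanData
end Fan
end ToricNewton

namespace ToricNewton

section Alg1
open Module

variable {n : ℕ} {f : MvPolynomial (Fin n) ℂ}

/-- All the auxiliary choices used for the algebraic part. -/
structure AlgData (f : MvPolynomial (Fin n) ℂ) where
  D : FanData f
  w : Fin n → ℝ
  hw : D.Gen w
  d : ℕ
  hd : 1 ≤ d
  A : D.ι → (Fin n →₀ ℕ) → Fin n → ℤ
  hA : ∀ M v i, (d : ℝ) * D.lam M i (toR v) = A M v i
  K : ℕ
  rk : D.ι → ℕ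
  rk_lt : ∀ M, rk M < K
  rk_mono : ∀ M M', D.u M w < D.u M' w → rk M < rk M'
  sel : (Fin n →₀ ℕ) → D.ι
  hsel : ∀ v, D.Sel w (sel v) (toR v)

lemma exists_algData (D : FanData f) : ∃ 𝒜 : AlgData f, 𝒜.D = D := by
  classical
  have := D.fin
  obtain ⟨w, hw⟩ := D.exists_gen
  obtain ⟨d, hd, h⟩ := D.exists_denom
  choose A hA using h
  have hs : ∀ v : Fin n →₀ ℕ, ∃ M, D.Sel w M (toR v) := fun v =>
    D.exists_sel w (toR v) 1 one_pos fun ε hε _ i => by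
      have h1 := hw.pos i
      have h2 := FanData.toR_nonneg v i
      simp only [Pi.add_apply, Pi.smul_apply, smul_eq_mul]
      positivity
  choose sel hsel using hs
  refine ⟨{ D := D, w := w, hw := hw, d := d, hd := hd, A := fun M v i => A M i v,
            hA := fun M v i => hA M i v, K := Fintype.card D.ι,
            rk := fun M => (Finset.univ.filter fun M' => D.u M' w < D.u M w).card,
            rk_lt := fun M => ?_, rk_mono := fun M M' h => ?_, sel := sel, hsel := hsel }, rfl⟩
  · rw [← Finset.card_univ]
    refine Finset.card_lt_card ⟨Finset.subset_univ _, fun h => ?_⟩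
    have := h (Finset.mem_univ M)
    simp at this
  · refine Finset.card_lt_card ⟨fun M'' h'' => ?_, fun h' => ?_⟩
    · simp only [Finset.mem_filter, Finset.mem_univ, true_and] at h'' ⊢
      linarith
    · have := h' (x := M) (by simpa using h)
      simp at this

namespace AlgData
variable (𝒜 : AlgData f)

lemma toR_add (v b : Fin n →₀ ℕ) : toR (v + b) = toR v + toR b := by
  ext i; simp [toR]

lemma dpos : (0:ℝ) < 𝒜.d := by exact_mod_cast 𝒜.hd

lemma A_add (M : 𝒜.D.ι) (v b : Fin n →₀ ℕ) (i : Fin n) : 𝒜.A M (v + b) i = 𝒜.A M v i + 𝒜.A M b i := by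
  have h : (𝒜.A M (v + b) i : ℝ) = 𝒜.A M v i + 𝒜.A M b i := by
    rw [← 𝒜.hA, ← 𝒜.hA, ← 𝒜.hA, toR_add, map_add, mul_add]
  exact_mod_cast h

lemma A_nonneg {M : 𝒜.D.ι} {v : Fin n →₀ ℕ} {i : Fin n} : 0 ≤ 𝒜.A M v i ↔ 0 ≤ 𝒜.D.lam M i (toR v) := by
  rw [← mul_nonneg_iff_of_pos_left 𝒜.dpos, 𝒜.hA]; norm_cast

lemma A_pos {M : 𝒜.D.ι} {v : Fin n →₀ ℕ} {i : Fin n} : 0 < 𝒜.A M v i ↔ 0 < 𝒜.D.lam M i (toR v) := by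
  rw [← mul_pos_iff_of_pos_left 𝒜.dpos, 𝒜.hA]; norm_cast

lemma A_eq_zero {M : 𝒜.D.ι} {v : Fin n →₀ ℕ} {i : Fin n} : 𝒜.A M v i = 0 ↔ 𝒜.D.lam M i (toR v) = 0 := by
  have : (𝒜.A M v i : ℝ) = 0 ↔ 𝒜.D.lam M i (toR v) = 0 := by
    rw [← 𝒜.hA]; simp [𝒜.dpos.ne']
  rw [← this]; norm_cast

lemma A_sum (M : 𝒜.D.ι) (v : Fin n →₀ ℕ) : ((∑ i, 𝒜.A M v i : ℤ) : ℝ) = 𝒜.d * 𝒜.D.u M (toR v) := by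
  rw [FanData.u_sum, Finset.mul_sum]
  push_cast
  exact Finset.sum_congr rfl fun i _ => (𝒜.hA M v i).symm

/-- scaled Newton weight -/
def wN (v : Fin n →₀ ℕ) : ℕ := (∑ i, 𝒜.A (𝒜.sel v) v i).toNat

lemma wN_eq (v : Fin n →₀ ℕ) : (𝒜.wN v : ℝ) = 𝒜.d * nu f (toR v) := by
  rw [(𝒜.hsel v).1.nu_eq, ← A_sum, wN]
  have h : 0 ≤ ∑ i, 𝒜.A (𝒜.sel v) v i :=
    Finset.sum_nonneg fun i _ => 𝒜.A_nonneg.mpr ((𝒜.hsel v).1 i)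
  exact_mod_cast Int.toNat_of_nonneg h

/-- refined weight -/
def wt (v : Fin n →₀ ℕ) : ℕ := 𝒜.K * 𝒜.wN v + 𝒜.rk (𝒜.sel v)

/-- shift -/
def s : ℕ := 𝒜.K * 𝒜.d

lemma rk_inj {M M' : 𝒜.D.ι} (h : 𝒜.rk M = 𝒜.rk M') : M = M' := by
  apply 𝒜.hw.inj
  rcases lt_trichotomy (𝒜.D.u M 𝒜.w) (𝒜.D.u M' 𝒜.w) with h1 | h1 | h1
  · have := 𝒜.rk_mono _ _ h1; omega
  · exact h1
  · have := 𝒜.rk_mono _ _ h1; omega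

lemma sel_eq {M : 𝒜.D.ι} {v : Fin n →₀ ℕ} (h : 𝒜.D.Sel 𝒜.w M (toR v)) : 𝒜.sel v = M :=
  (𝒜.hsel v).unique 𝒜.hw.inj h

lemma rk_max {M : 𝒜.D.ι} {v : Fin n →₀ ℕ} (h : 𝒜.D.Cone M (toR v)) : 𝒜.rk M ≤ 𝒜.rk (𝒜.sel v) := by
  rcases ((𝒜.hsel v).max h).eq_or_lt with h1 | h1
  · rw [𝒜.hw.inj _ _ h1]
  · exact (𝒜.rk_mono _ _ h1).le

lemma cone_supp (M : 𝒜.D.ι) {b : Fin n →₀ ℕ} (hb : b ∈ f.support) (h : 𝒜.D.u M (toR b) = 1) :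
    𝒜.D.Cone M (toR b) := 𝒜.D.u_eq M b hb h

lemma sel_add {v b : Fin n →₀ ℕ} (hb : b ∈ f.support) (h : 𝒜.D.u (𝒜.sel v) (toR b) = 1) :
    𝒜.D.Sel 𝒜.w (𝒜.sel v) (toR (v + b)) := by
  have hc := 𝒜.cone_supp _ hb h
  refine ⟨fun i => ?_, fun i hi => ?_⟩
  · rw [toR_add, map_add]; exact add_nonneg ((𝒜.hsel v).1 i) (hc i)
  · rw [toR_add, map_add]; exact add_pos_of_pos_of_nonneg ((𝒜.hsel v).2 i hi) (hc i)

lemma wN_cast_le {v v' : Fin n →₀ ℕ} {k : ℕ} :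
    𝒜.wN v ≤ 𝒜.wN v' + 𝒜.d * k ↔ nu f (toR v) ≤ nu f (toR v') + k := by
  rw [← @Nat.cast_le ℝ]
  push_cast
  rw [wN_eq, wN_eq, ← mul_add, mul_le_mul_iff_right₀ 𝒜.dpos]

lemma wt_add_of_eq {v b : Fin n →₀ ℕ} (hb : b ∈ f.support) (h : 𝒜.D.u (𝒜.sel v) (toR b) = 1) :
    𝒜.wt (v + b) = 𝒜.wt v + 𝒜.s ∧ 𝒜.sel (v + b) = 𝒜.sel v := by
  have h1 := 𝒜.sel_eq (𝒜.sel_add hb h)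
  refine ⟨?_, h1⟩
  have h2 : (𝒜.wN (v + b) : ℝ) = 𝒜.wN v + 𝒜.d := by
    rw [wN_eq, wN_eq, (𝒜.hsel (v+b)).1.nu_eq, (𝒜.hsel v).1.nu_eq, h1, toR_add, map_add, h]
    ring
  have h3 : 𝒜.wN (v + b) = 𝒜.wN v + 𝒜.d := by exact_mod_cast h2
  rw [wt, wt, h1, h3, s]
  ring

lemma wt_add_lt {v b : Fin n →₀ ℕ} (hb : b ∈ f.support) (h : 𝒜.D.u (𝒜.sel v) (toR b) ≠ 1) :
    𝒜.wt (v + b) < 𝒜.wt v + 𝒜.s := by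
  set M' := 𝒜.sel (v + b) with hM'
  have h0 : nu f (toR (v + b)) = 𝒜.D.u M' (toR v) + 𝒜.D.u M' (toR b) := by
    rw [(𝒜.hsel (v+b)).1.nu_eq, toR_add, map_add]
  have hv := 𝒜.D.u_le_nu M' (FanData.toR_nonneg v)
  have hb1 := 𝒜.D.u_le M' b hb
  have hrk := 𝒜.rk_lt M'
  by_cases hc : 𝒜.D.u M' (toR v) = nu f (toR v) ∧ 𝒜.D.u M' (toR b) = 1
  · have hcone := 𝒜.D.cone_of_nu M' (FanData.toR_nonneg v) hc.1
    have h1 := 𝒜.rk_max hcone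
    have hne : M' ≠ 𝒜.sel v := fun e => h (e ▸ hc.2)
    have h2 : 𝒜.rk M' < 𝒜.rk (𝒜.sel v) := lt_of_le_of_ne h1 fun e => hne (𝒜.rk_inj e)
    have h3 : (𝒜.wN (v + b) : ℝ) = 𝒜.wN v + 𝒜.d := by
      rw [wN_eq, wN_eq, h0, hc.1, hc.2]; ring
    have h3 : 𝒜.wN (v + b) = 𝒜.wN v + 𝒜.d := by exact_mod_cast h3
    rw [wt, wt, s, h3, ← hM']
    nlinarith
  · have hlt : nu f (toR (v + b)) < nu f (toR v) + 1 := by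
      rw [h0]
      rcases hv.eq_or_lt with e | e
      · have : 𝒜.D.u M' (toR b) < 1 := lt_of_le_of_ne hb1 fun e' => hc ⟨e, e'⟩
        linarith
      · linarith
    have h3 : (𝒜.wN (v + b) : ℝ) < 𝒜.wN v + 𝒜.d := by
      rw [wN_eq, wN_eq]
      have := 𝒜.dpos
      nlinarith
    have h3 : 𝒜.wN (v + b) + 1 ≤ 𝒜.wN v + 𝒜.d := by exact_mod_cast h3
    rw [wt, wt, s, ← hM']
    nlinarith [Nat.zero_le (𝒜.rk (𝒜.sel v))]

lemma wt_add_le {v b : Fin n →₀ ℕ} (hb : b ∈ f.support) : 𝒜.wt (v + b) ≤ 𝒜.wt v + 𝒜.s := by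
  by_cases h : 𝒜.D.u (𝒜.sel v) (toR b) = 1
  · exact (𝒜.wt_add_of_eq hb h).1.le
  · exact (𝒜.wt_add_lt hb h).le

lemma Kpos : 0 < 𝒜.K := lt_of_le_of_lt (Nat.zero_le _) (𝒜.rk_lt (𝒜.sel 0))

/-- the residue of the level determines the cone -/
def Lev (M : 𝒜.D.ι) (m : ℤ) : Prop := m % 𝒜.K = 𝒜.rk M

lemma Lev.sel {𝒜 : AlgData f} {M : 𝒜.D.ι} {m : ℤ} (h : 𝒜.Lev M m) {v : Fin n →₀ ℕ}
    (hv : (𝒜.wt v : ℤ) = m) : 𝒜.sel v = M := by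
  apply 𝒜.rk_inj
  have h1 : m % 𝒜.K = 𝒜.rk (𝒜.sel v) := by
    rw [← hv, wt]
    push_cast
    rw [Int.mul_add_emod_self_left]
    exact Int.emod_eq_of_lt (by positivity) (by exact_mod_cast 𝒜.rk_lt _)
  have h2 : m % 𝒜.K = 𝒜.rk M := h
  rw [h1] at h2
  exact_mod_cast h2

lemma lev_wt (v : Fin n →₀ ℕ) : 𝒜.Lev (𝒜.sel v) (𝒜.wt v) := by
  rw [Lev, wt]
  push_cast
  rw [Int.mul_add_emod_self_left]
  exact Int.emod_eq_of_lt (by positivity) (by exact_mod_cast 𝒜.rk_lt _)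

lemma Lev.add {𝒜 : AlgData f} {M : 𝒜.D.ι} {m : ℤ} (h : 𝒜.Lev M m) : 𝒜.Lev M (m + 𝒜.s) := by
  rw [Lev, s] at *
  push_cast
  rw [Int.add_mul_emod_self_left]; exact h

lemma Lev.sub {𝒜 : AlgData f} {M : 𝒜.D.ι} {m : ℤ} (h : 𝒜.Lev M m) : 𝒜.Lev M (m - 𝒜.s) := by
  rw [Lev, s] at *
  push_cast
  rw [Int.sub_mul_emod_self_left]; exact h

open Classical in
/-- exponent of the support monomial -/
noncomputable def A' (M : 𝒜.D.ι) (b : Fin n →₀ ℕ) : Fin n →₀ ℕ :=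
  Finsupp.equivFunOnFinite.symm fun i => (𝒜.A M b i).toNat

open Classical in
/-- shifted exponent -/
noncomputable def E (M : 𝒜.D.ι) (v : Fin n →₀ ℕ) : Fin n →₀ ℕ :=
  Finsupp.equivFunOnFinite.symm fun i =>
    (𝒜.A M v i - if 𝒜.D.lam M i 𝒜.w < 0 then 1 else 0).toNat

lemma A'_cast {M : 𝒜.D.ι} {b : Fin n →₀ ℕ} (hb : 𝒜.D.Cone M (toR b)) (i : Fin n) :
    (𝒜.A' M b i : ℤ) = 𝒜.A M b i := by
  simp only [A', Finsupp.equivFunOnFinite_symm_apply_apply]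
  exact Int.toNat_of_nonneg (𝒜.A_nonneg.mpr (hb i))

open Classical in
lemma E_cast {M : 𝒜.D.ι} {v : Fin n →₀ ℕ} (hv : 𝒜.D.Sel 𝒜.w M (toR v)) (i : Fin n) :
    (𝒜.E M v i : ℤ) = 𝒜.A M v i - if 𝒜.D.lam M i 𝒜.w < 0 then 1 else 0 := by
  simp only [E, Finsupp.equivFunOnFinite_symm_apply_apply]
  refine Int.toNat_of_nonneg ?_
  have h1 := 𝒜.A_nonneg.mpr (hv.1 i)
  split_ifs with h
  · have := 𝒜.A_pos.mpr (hv.2 i h); omega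
  · omega

lemma ext_A {M : 𝒜.D.ι} {v v' : Fin n →₀ ℕ} (h : ∀ i, 𝒜.A M v i = 𝒜.A M v' i) : v = v' := by
  have h2 : toR v = toR v' := by
    rw [← 𝒜.D.sum_lam M (toR v), ← 𝒜.D.sum_lam M (toR v')]
    refine Finset.sum_congr rfl fun i _ => ?_
    have : (𝒜.d : ℝ) * 𝒜.D.lam M i (toR v) = 𝒜.d * 𝒜.D.lam M i (toR v') := by
      rw [𝒜.hA, 𝒜.hA, h i]
    rw [mul_left_cancel₀ 𝒜.dpos.ne' this]
  ext i
  have := congrFun h2 i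
  simpa [toR] using this

lemma E_inj {M : 𝒜.D.ι} {v v' : Fin n →₀ ℕ} (hv : 𝒜.D.Sel 𝒜.w M (toR v))
    (hv' : 𝒜.D.Sel 𝒜.w M (toR v')) (h : 𝒜.E M v = 𝒜.E M v') : v = v' := by
  refine 𝒜.ext_A (M := M) fun i => ?_
  have h1 := 𝒜.E_cast hv i
  have h2 := 𝒜.E_cast hv' i
  rw [h] at h1
  omega

lemma E_add {M : 𝒜.D.ι} {v b : Fin n →₀ ℕ} (hv : 𝒜.D.Sel 𝒜.w M (toR v))
    (hb : 𝒜.D.Cone M (toR b)) (hvb : 𝒜.D.Sel 𝒜.w M (toR (v + b))) :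
    𝒜.E M (v + b) = 𝒜.E M v + 𝒜.A' M b := by
  ext i
  have h1 := 𝒜.E_cast hv i
  have h2 := 𝒜.E_cast hvb i
  have h3 := 𝒜.A'_cast hb i
  rw [A_add] at h2
  rw [Finsupp.add_apply]
  omega

/-- Key matching for the transfer. -/
lemma match_iff {M : 𝒜.D.ι} {m : ℤ} (hM : 𝒜.Lev M m) {v b : Fin n →₀ ℕ} (hb : b ∈ f.support)
    (hv : (𝒜.wt v : ℤ) = m) :
    (b ≤ v ∧ (𝒜.wt (v - b) : ℤ) = m - 𝒜.s) ↔ (𝒜.D.u M (toR b) = 1 ∧ 𝒜.A' M b ≤ 𝒜.E M v) := by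
  have hselv : 𝒜.D.Sel 𝒜.w M (toR v) := by have := 𝒜.hsel v; rwa [hM.sel hv] at this
  constructor
  · rintro ⟨hle, hw⟩
    have hx : v - b + b = v := tsub_add_cancel_of_le hle
    have hsel : 𝒜.sel (v - b) = M := hM.sub.sel hw
    have hu : 𝒜.D.u M (toR b) = 1 := by
      by_contra hne
      have := 𝒜.wt_add_lt (v := v - b) hb (by rwa [hsel])
      rw [hx] at this
      omega
    refine ⟨hu, ?_⟩
    have hs := 𝒜.hsel (v - b)
    rw [hsel] at hs
    have := 𝒜.E_add hs (𝒜.cone_supp M hb hu) (by rwa [hx])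
    rw [hx] at this
    rw [this]
    exact le_add_self
  · rintro ⟨hu, hle⟩
    have hcb := 𝒜.cone_supp M hb hu
    have hA : ∀ i, 𝒜.A M b i ≤ 𝒜.A M v i := by
      intro i
      have h1 : (𝒜.A' M b i : ℤ) ≤ 𝒜.E M v i := by exact_mod_cast hle i
      rw [𝒜.A'_cast hcb, 𝒜.E_cast hselv] at h1
      split_ifs at h1 <;> omega
    have hcone : 𝒜.D.Cone M (toR v - toR b) := by
      intro i
      have h1 : (𝒜.d : ℝ) * 𝒜.D.lam M i (toR b) ≤ 𝒜.d * 𝒜.D.lam M i (toR v) := by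
        rw [𝒜.hA, 𝒜.hA]; exact_mod_cast hA i
      rw [map_sub]
      have := le_of_mul_le_mul_left h1 𝒜.dpos
      linarith
    have hbv : b ≤ v := by
      intro i
      have := hcone.nonneg i
      simp only [Pi.sub_apply, toR, sub_nonneg] at this
      exact_mod_cast this
    have hx : v - b + b = v := tsub_add_cancel_of_le hbv
    have hxR : toR (v - b) = toR v - toR b := by
      rw [eq_sub_iff_add_eq, ← toR_add, hx]
    refine ⟨hbv, ?_⟩
    have hs : 𝒜.D.Sel 𝒜.w M (toR (v - b)) := by
      refine ⟨by rw [hxR]; exact hcone, fun i hi => ?_⟩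
      rw [← 𝒜.A_pos]
      have h1 : (𝒜.A' M b i : ℤ) ≤ 𝒜.E M v i := by exact_mod_cast hle i
      rw [𝒜.A'_cast hcb, 𝒜.E_cast hselv, if_pos hi] at h1
      have h2 := 𝒜.A_add M (v - b) b i
      rw [hx] at h2
      omega
    have hsel := 𝒜.sel_eq hs
    have := (𝒜.wt_add_of_eq (v := v - b) hb (by rwa [hsel])).1
    rw [hx] at this
    omega

end AlgData
end Alg1
end ToricNewton

namespace ToricNewton

section Alg2
open Module

variable {n : ℕ} {f : MvPolynomial (Fin n) ℂ}

/-- the coefficient of a linear combination of the logarithmic derivatives -/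
noncomputable def ell (f : MvPolynomial (Fin n) ℂ) (c : Fin n → ℂ) (b : Fin n →₀ ℕ) : ℂ :=
  (∑ i, c i * (b i : ℂ)) * f.coeff b

lemma logder_eq (f : MvPolynomial (Fin n) ℂ) (i : Fin n) :
    X i * pderiv i f = ∑ b ∈ f.support, monomial b ((b i : ℂ) * f.coeff b) := by
  conv_lhs => rw [f.as_sum]
  rw [map_sum, Finset.mul_sum]
  refine Finset.sum_congr rfl fun b _ => ?_
  rw [X_mul_pderiv_monomial, smul_monomial, nsmul_eq_mul]

lemma lin_logder (f : MvPolynomial (Fin n) ℂ) (c : Fin n → ℂ) :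
    lin (fun i => X i * pderiv i f) c = ∑ b ∈ f.support, monomial b (ell f c b) := by
  rw [lin_apply]
  simp only [logder_eq, Finset.smul_sum, smul_monomial]
  rw [Finset.sum_comm]
  refine Finset.sum_congr rfl fun b _ => ?_
  rw [← map_sum, ell, Finset.sum_mul]
  simp [mul_assoc]

/-- extension by zero of a finite family -/
def ext0 {R : Type*} [Zero R] (a : Fin n → R) : ℕ → R := fun k => if h : k < n then a ⟨k, h⟩ else 0

lemma ext0_val {R : Type*} [Zero R] (a : Fin n → R) (k : Fin n) : ext0 a k = a k := by
  simp [ext0]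

lemma ext0_lt {R : Type*} [Zero R] (a : Fin n → R) {k : ℕ} (h : k < n) : ext0 a k = a ⟨k, h⟩ := by
  simp [ext0, h]

lemma span_ext0 {R : Type*} [CommRing R] (a : Fin n → R) (k : Fin n) :
    Ideal.span (a '' {j | j < k}) = Ik (ext0 a) k := by
  rw [Ik]
  congr 1
  ext x
  constructor
  · rintro ⟨j, hj, rfl⟩
    exact ⟨j, by simpa using hj, ext0_val a j⟩
  · rintro ⟨j, hj, rfl⟩
    have hj : j < k := by simpa using hj
    exact ⟨⟨j, hj.trans k.2⟩, Fin.lt_def.mpr hj, (ext0_lt a _).symm⟩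

namespace AlgData
variable (𝒜 : AlgData f)

lemma finite_wN (a : ℕ) : {v : Fin n →₀ ℕ | 𝒜.wN v ≤ a}.Finite := by
  have h := 𝒜.D.finite_nu_le ((a : ℝ) / 𝒜.d)
  refine (h.preimage (f := fun v : Fin n →₀ ℕ => (v : Fin n → ℕ))
    (DFunLike.coe_injective.injOn)).subset fun v hv => ?_
  have hv : 𝒜.wN v ≤ a := hv
  change nu f (toR v) ≤ _
  rw [le_div_iff₀ 𝒜.dpos, mul_comm, ← wN_eq]
  exact_mod_cast hv

lemma wN_le_wt (v : Fin n →₀ ℕ) : 𝒜.wN v ≤ 𝒜.wt v := by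
  rw [wt]
  nlinarith [𝒜.Kpos, Nat.zero_le (𝒜.wN v), Nat.zero_le (𝒜.rk (𝒜.sel v))]

lemma finite_wt (m : ℤ) : {v : Fin n →₀ ℕ | (𝒜.wt v : ℤ) ≤ m}.Finite := by
  refine (𝒜.finite_wN m.toNat).subset fun v hv => ?_
  have hv : (𝒜.wt v : ℤ) ≤ m := hv
  have := 𝒜.wN_le_wt v
  change 𝒜.wN v ≤ m.toNat
  omega

/-- the refined filtration -/
noncomputable def G (m : ℤ) : Submodule ℂ (MvPolynomial (Fin n) ℂ) :=
  restrictSupport ℂ {v | (𝒜.wt v : ℤ) ≤ m}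

lemma mem_G {m : ℤ} {g : MvPolynomial (Fin n) ℂ} :
    g ∈ 𝒜.G m ↔ ∀ v, (m : ℤ) < 𝒜.wt v → coeff v g = 0 := by
  rw [G, mem_restrictSupport_iff]
  constructor
  · intro h v hv
    by_contra hne
    have := h (MvPolynomial.mem_support_iff.mpr hne)
    have : (𝒜.wt v : ℤ) ≤ m := this
    omega
  · intro h v hv
    by_contra hne
    exact (MvPolynomial.mem_support_iff.mp hv) (h v (not_le.mp hne))

lemma G_monomial {m : ℤ} {v : Fin n →₀ ℕ} (a : ℂ) (h : (𝒜.wt v : ℤ) ≤ m) : monomial v a ∈ 𝒜.G m := by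
  classical
  rw [mem_G]
  intro v' hv'
  rw [coeff_monomial, if_neg]
  rintro rfl
  omega

/-- leading symbols in the cone `M` -/
noncomputable def FM (M : 𝒜.D.ι) (i : Fin n) : MvPolynomial (Fin n) ℂ :=
  open Classical in
  ∑ b ∈ f.support.filter (fun b => 𝒜.D.u M (toR b) = 1),
    monomial (𝒜.A' M b) ((b i : ℂ) * f.coeff b)

open Classical in
lemma lin_FM (M : 𝒜.D.ι) (c : Fin n → ℂ) :
    lin (𝒜.FM M) c = ∑ b ∈ f.support.filter (fun b => 𝒜.D.u M (toR b) = 1),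
      monomial (𝒜.A' M b) (ell f c b) := by
  rw [lin_apply]
  simp only [FM, Finset.smul_sum, smul_monomial]
  rw [Finset.sum_comm]
  refine Finset.sum_congr rfl fun b _ => ?_
  rw [← map_sum, ell, Finset.sum_mul]
  simp [mul_assoc]

open Classical in
/-- symbol map -/
noncomputable def Psi (M : 𝒜.D.ι) (m : ℤ) :
    MvPolynomial (Fin n) ℂ →ₗ[ℂ] MvPolynomial (Fin n) ℂ :=
  (basisMonomials (Fin n) ℂ).constr ℂ
    fun v => if (𝒜.wt v : ℤ) = m then monomial (𝒜.E M v) 1 else 0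

open Classical in
lemma Psi_monomial (M : 𝒜.D.ι) (m : ℤ) (v : Fin n →₀ ℕ) (a : ℂ) :
    𝒜.Psi M m (monomial v a) = if (𝒜.wt v : ℤ) = m then monomial (𝒜.E M v) a else 0 := by
  have : monomial v a = a • basisMonomials (Fin n) ℂ v := by
    rw [coe_basisMonomials, smul_monomial, smul_eq_mul, mul_one]
  rw [this, map_smul, Psi, Basis.constr_basis]
  split_ifs
  · rw [smul_monomial, smul_eq_mul, mul_one]
  · simp

open Classical in
/-- lift of symbols -/
noncomputable def Theta (M : 𝒜.D.ι) (m : ℤ) (h : MvPolynomial (Fin n) ℂ) : MvPolynomial (Fin n) ℂ :=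
  ∑ v ∈ (𝒜.finite_wt m).toFinset, if (𝒜.wt v : ℤ) = m then monomial v (coeff (𝒜.E M v) h) else 0

open Classical in
lemma coeff_Theta (M : 𝒜.D.ι) (m : ℤ) (h : MvPolynomial (Fin n) ℂ) (v : Fin n →₀ ℕ) :
    coeff v (𝒜.Theta M m h) = if (𝒜.wt v : ℤ) = m then coeff (𝒜.E M v) h else 0 := by
  rw [Theta, coeff_sum]
  split_ifs with hv
  · rw [Finset.sum_eq_single v]
    · rw [if_pos hv, coeff_monomial, if_pos rfl]
    · intro v' _ hne
      split_ifs
      · rw [coeff_monomial, if_neg hne]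
      · simp
    · intro hn
      exact absurd (by simp [hv]) hn
  · refine Finset.sum_eq_zero fun v' _ => ?_
    split_ifs with h1
    · rw [coeff_monomial, if_neg]; rintro rfl; exact hv h1
    · simp

lemma Theta_mem (M : 𝒜.D.ι) (m : ℤ) (h : MvPolynomial (Fin n) ℂ) : 𝒜.Theta M m h ∈ 𝒜.G m := by
  rw [mem_G]
  intro v hv
  rw [coeff_Theta, if_neg hv.ne']

lemma Theta_sum (M : 𝒜.D.ι) (m : ℤ) {κ : Type*} (S : Finset κ) (h : κ → MvPolynomial (Fin n) ℂ) :
    𝒜.Theta M m (∑ i ∈ S, h i) = ∑ i ∈ S, 𝒜.Theta M m (h i) := by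
  ext v
  rw [coeff_sum, coeff_Theta]
  simp only [coeff_Theta]
  split_ifs
  · rw [coeff_sum]
  · simp

/-- the linear form -/
noncomputable def LL (f : MvPolynomial (Fin n) ℂ) (c : Fin n → ℂ) : MvPolynomial (Fin n) ℂ :=
  lin (fun i => X i * pderiv i f) c

lemma LL_mul_mem (c : Fin n → ℂ) {m : ℤ} {g : MvPolynomial (Fin n) ℂ} (hg : g ∈ 𝒜.G m) :
    LL f c * g ∈ 𝒜.G (m + 𝒜.s) := by
  rw [LL, lin_logder, g.as_sum, Finset.sum_mul_sum]
  refine Submodule.sum_mem _ fun b hb => Submodule.sum_mem _ fun v hv => ?_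
  rw [monomial_mul]
  refine 𝒜.G_monomial _ ?_
  have h1 : (𝒜.wt v : ℤ) ≤ m := by
    by_contra hn
    exact (MvPolynomial.mem_support_iff.mp hv) (𝒜.mem_G.mp hg v (not_le.mp hn))
  have := 𝒜.wt_add_le (v := v) hb
  rw [add_comm b v]
  omega

lemma Psi_zero (M : 𝒜.D.ι) {m m' : ℤ} (hm : m' < m) {g : MvPolynomial (Fin n) ℂ} (hg : g ∈ 𝒜.G m') :
    𝒜.Psi M m g = 0 := by
  rw [g.as_sum, map_sum]
  refine Finset.sum_eq_zero fun v hv => ?_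
  rw [Psi_monomial, if_neg]
  intro h1
  exact (MvPolynomial.mem_support_iff.mp hv) (𝒜.mem_G.mp hg v (by omega))

lemma Psi_mul {M : 𝒜.D.ι} {m : ℤ} (hM : 𝒜.Lev M m) (c : Fin n → ℂ) {g : MvPolynomial (Fin n) ℂ}
    (hg : g ∈ 𝒜.G m) : 𝒜.Psi M (m + 𝒜.s) (LL f c * g) = lin (𝒜.FM M) c * 𝒜.Psi M m g := by
  classical
  rw [g.as_sum, Finset.mul_sum, map_sum, map_sum, Finset.mul_sum]
  refine Finset.sum_congr rfl fun v hv => ?_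
  have h1 : (𝒜.wt v : ℤ) ≤ m := by
    by_contra hn
    exact (MvPolynomial.mem_support_iff.mp hv) (𝒜.mem_G.mp hg v (not_le.mp hn))
  rw [LL, lin_logder, lin_FM, Finset.sum_mul, map_sum, Psi_monomial, Finset.sum_mul,
    Finset.sum_filter]
  refine Finset.sum_congr rfl fun b hb => ?_
  rw [monomial_mul, Psi_monomial, add_comm b v]
  have hle := 𝒜.wt_add_le (v := v) hb
  by_cases hvm : (𝒜.wt v : ℤ) = m
  · have hs := hM.sel hvm
    rw [if_pos hvm]
    by_cases hu : 𝒜.D.u M (toR b) = 1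
    · have h2 := 𝒜.wt_add_of_eq (v := v) hb (by rwa [hs])
      have hsv := 𝒜.hsel v
      have hsvb := 𝒜.hsel (v + b)
      rw [h2.2, hs] at hsvb
      rw [hs] at hsv
      rw [if_pos hu, if_pos (by rw [h2.1]; push_cast; omega), monomial_mul,
        𝒜.E_add hsv (𝒜.cone_supp M hb hu) hsvb, add_comm]
    · have h2 := 𝒜.wt_add_lt (v := v) hb (by rwa [hs])
      rw [if_neg hu, if_neg (by omega)]
  · rw [if_neg hvm, if_neg (by omega)]
    simp

lemma Theta_mul {M : 𝒜.D.ι} {m : ℤ} (hM : 𝒜.Lev M m) (c : Fin n → ℂ) (h : MvPolynomial (Fin n) ℂ) :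
    𝒜.Theta M m (lin (𝒜.FM M) c * h) - LL f c * 𝒜.Theta M (m - 𝒜.s) h ∈ 𝒜.G (m - 1) := by
  classical
  rw [mem_G]
  intro v hv
  rw [coeff_sub, coeff_Theta]
  by_cases hvm : (𝒜.wt v : ℤ) = m
  · rw [if_pos hvm, LL, lin_logder, lin_FM, Finset.sum_mul, Finset.sum_mul, coeff_sum, coeff_sum,
      Finset.sum_filter, sub_eq_zero]
    refine Finset.sum_congr rfl fun b hb => ?_
    rw [coeff_monomial_mul', coeff_monomial_mul', coeff_Theta]
    have key := 𝒜.match_iff hM hb hvm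
    by_cases hc : b ≤ v ∧ (𝒜.wt (v - b) : ℤ) = m - 𝒜.s
    · have hc' := key.mp hc
      rw [if_pos hc'.1, if_pos hc'.2, if_pos hc.1, if_pos hc.2]
      congr 2
      have hx : v - b + b = v := tsub_add_cancel_of_le hc.1
      have hs1 := 𝒜.hsel (v - b)
      rw [hM.sub.sel hc.2] at hs1
      have hs2 := 𝒜.hsel v
      rw [hM.sel hvm, ← hx] at hs2
      have := 𝒜.E_add hs1 (𝒜.cone_supp M hb hc'.1) hs2
      rw [hx] at this
      rw [this, add_tsub_cancel_right]
    · have hc' : ¬ _ := fun h => hc (key.mpr h)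
      have e1 : (if 𝒜.D.u M (toR b) = 1 then
          if 𝒜.A' M b ≤ 𝒜.E M v then ell f c b * coeff (𝒜.E M v - 𝒜.A' M b) h else 0 else 0) = 0 := by
        split_ifs with h1 h2
        · exact absurd ⟨h1, h2⟩ hc'
        · rfl
        · rfl
      have e2 : (if b ≤ v then ell f c b *
          (if (𝒜.wt (v - b) : ℤ) = m - 𝒜.s then coeff (𝒜.E M (v - b)) h else 0) else 0) = 0 := by
        split_ifs with h1 h2
        · exact absurd ⟨h1, h2⟩ hc
        · simp
        · rfl
      rw [e1, e2]
  · have h1 := 𝒜.LL_mul_mem c (𝒜.Theta_mem M (m - 𝒜.s) h)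
    rw [if_neg hvm, 𝒜.mem_G.mp h1 v (by omega), sub_zero]

lemma Theta_Psi {M : 𝒜.D.ι} {m : ℤ} (hM : 𝒜.Lev M m) {g : MvPolynomial (Fin n) ℂ} (hg : g ∈ 𝒜.G m) :
    g - 𝒜.Theta M m (𝒜.Psi M m g) ∈ 𝒜.G (m - 1) := by
  classical
  rw [mem_G]
  intro v hv
  rw [coeff_sub, coeff_Theta]
  by_cases hvm : (𝒜.wt v : ℤ) = m
  · rw [if_pos hvm, sub_eq_zero]
    conv_rhs => rw [g.as_sum]
    rw [map_sum, coeff_sum]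
    have hs2 := 𝒜.hsel v
    rw [hM.sel hvm] at hs2
    rw [Finset.sum_eq_single v]
    · rw [Psi_monomial, if_pos hvm, coeff_monomial, if_pos rfl]
    · intro v' _ hne
      rw [Psi_monomial]
      split_ifs with h1
      · have hs1 := 𝒜.hsel v'
        rw [hM.sel h1] at hs1
        rw [coeff_monomial, if_neg]
        exact fun e => hne (𝒜.E_inj hs1 hs2 e)
      · simp
    · intro hn
      rw [MvPolynomial.notMem_support_iff.mp hn]
      simp
  · rw [if_neg hvm, 𝒜.mem_G.mp hg v (by omega), sub_zero]

lemma ext0_comp {R S : Type*} [Zero R] [Zero S] (φ : R → S) (h0 : φ 0 = 0) (a : Fin n → R) (k : ℕ) :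
    φ (ext0 a k) = ext0 (fun j => φ (a j)) k := by
  unfold ext0
  split_ifs
  · rfl
  · exact h0

lemma filtData (c : Fin n → (Fin n → ℂ))
    (hreg : ∀ M (k : Fin n) g, lin (𝒜.FM M) (c k) * g ∈
      Ideal.span ((fun j => lin (𝒜.FM M) (c j)) '' {j | j < k}) →
        g ∈ Ideal.span ((fun j => lin (𝒜.FM M) (c j)) '' {j | j < k})) :
    FiltData (ext0 fun k => LL f (c k)) n 𝒜.G 𝒜.s where
  mono := by
    intro m m' h
    exact restrictSupport_mono _ fun v (hv : (𝒜.wt v : ℤ) ≤ m) => (hv.trans h : (𝒜.wt v : ℤ) ≤ m')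
  neg := by
    intro m hm
    rw [eq_bot_iff]
    intro g hg
    rw [Submodule.mem_bot]
    ext v
    rw [𝒜.mem_G.mp hg v (by omega), coeff_zero]
  exh := by
    intro x
    refine ⟨∑ v ∈ x.support, (𝒜.wt v : ℤ), ?_⟩
    rw [mem_G]
    intro v hv
    by_contra hne
    have := Finset.single_le_sum (f := fun v => (𝒜.wt v : ℤ)) (fun _ _ => by positivity)
      (MvPolynomial.mem_support_iff.mpr hne)
    exact absurd this (not_le.mpr hv)
  mul := by
    intro i m x hx
    unfold ext0
    split_ifs
    · exact 𝒜.LL_mul_mem _ hx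
    · simp
  H := by
    intro k hk m g g' hg hg' hL
    by_cases hv : ∃ v, (𝒜.wt v : ℤ) = m
    swap
    · refine ⟨0, by simp, ?_⟩
      simp only [Pi.zero_apply, mul_zero, Finset.sum_const_zero, sub_zero]
      rw [mem_G] at hg ⊢
      intro v hv'
      by_cases h : (𝒜.wt v : ℤ) = m
      · exact absurd ⟨v, h⟩ hv
      · exact hg v (by omega)
    obtain ⟨v, hv⟩ := hv
    set M := 𝒜.sel v
    have hM : 𝒜.Lev M m := hv ▸ 𝒜.lev_wt v
    have hi : ∀ i < k, ∃ h : i < n, ext0 (fun k => LL f (c k)) i = LL f (c ⟨i, h⟩) ∧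
        ext0 (fun j => lin (𝒜.FM M) (c j)) i = lin (𝒜.FM M) (c ⟨i, h⟩) := fun i hik =>
      ⟨hik.trans hk, ext0_lt _ _, ext0_lt _ _⟩
    have h1 := 𝒜.Psi_zero M (m := m + 𝒜.s) (by omega) hL
    rw [map_sub, map_sum, ext0_lt _ hk, 𝒜.Psi_mul hM _ hg, sub_eq_zero] at h1
    have h2 : lin (𝒜.FM M) (c ⟨k, hk⟩) * 𝒜.Psi M m g ∈ Ik (ext0 fun j => lin (𝒜.FM M) (c j)) k := by
      rw [mem_Ik]
      refine ⟨fun i => 𝒜.Psi M m (g' i), h1.trans (Finset.sum_congr rfl fun i hik => ?_)⟩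
      obtain ⟨h, e1, e2⟩ := hi i (Finset.mem_range.mp hik)
      rw [e1, e2, 𝒜.Psi_mul hM _ (hg' i (Finset.mem_range.mp hik))]
    have h3 := hreg M ⟨k, hk⟩ (𝒜.Psi M m g)
    rw [span_ext0] at h3
    have h4 := h3 h2
    rw [mem_Ik] at h4
    obtain ⟨q, hq⟩ := h4
    refine ⟨fun i => 𝒜.Theta M (m - 𝒜.s) (q i), fun i _ => 𝒜.Theta_mem _ _ _, ?_⟩
    have h5 := 𝒜.Theta_Psi hM hg
    rw [hq, Theta_sum] at h5
    have h6 : ∑ i ∈ Finset.range k, (𝒜.Theta M m (ext0 (fun j => lin (𝒜.FM M) (c j)) i * q i) -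
        ext0 (fun k => LL f (c k)) i * 𝒜.Theta M (m - 𝒜.s) (q i)) ∈ 𝒜.G (m - 1) := by
      refine Submodule.sum_mem _ fun i hik => ?_
      obtain ⟨h, e1, e2⟩ := hi i (Finset.mem_range.mp hik)
      rw [e1, e2]
      exact 𝒜.Theta_mul hM _ _
    have := add_mem h5 h6
    rw [Finset.sum_sub_distrib] at this
    simpa using this

end AlgData
end Alg2
end ToricNewton

namespace ToricNewton

section Alg3
open Module

variable {n : ℕ} {f : MvPolynomial (Fin n) ℂ}

namespace FanData
variable (D : FanData f)

/-- the face of the facet `M` spanned by the vertices in `J` -/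
def Del (M : D.ι) (J : Finset (Fin n)) : Set (Fin n → ℝ) :=
  {z ∈ newtonPolytope f | D.u M z = 1 ∧ ∀ i, i ∉ J → D.lam M i z = 0}

lemma face_fun (M : D.ι) (J : Finset (Fin n)) :
    ∃ l : (Fin n → ℝ) →ₗ[ℝ] ℝ, (∀ z ∈ newtonPolytope f, l z ≤ 1) ∧
      D.Del M J = {z ∈ newtonPolytope f | l z = 1} := by
  classical
  let t : (Fin n → ℝ) →ₗ[ℝ] ℝ := ∑ i ∈ Jᶜ, D.lam M i
  have ht : ∀ z, t z = ∑ i ∈ Jᶜ, D.lam M i z := fun z => by simp [t]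
  obtain ⟨ε, hε, hsm⟩ : ∃ ε : ℝ, 0 < ε ∧ ∀ b ∈ f.support, D.u M (toR b) < 1 →
      D.u M (toR b) - ε * t (toR b) < 1 := by
    have : ∀ᶠ ε in nhdsWithin (0:ℝ) (Set.Ioi 0), ∀ b ∈ f.support, D.u M (toR b) < 1 →
      D.u M (toR b) - ε * t (toR b) < 1 := by
      rw [Filter.eventually_all_finset]
      intro b hb
      by_cases h : D.u M (toR b) < 1
      · have hc : Filter.Tendsto (fun ε : ℝ => D.u M (toR b) - ε * t (toR b)) (nhds 0)
            (nhds (D.u M (toR b) - 0 * t (toR b))) := by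
          apply Continuous.tendsto
          fun_prop
        rw [zero_mul, sub_zero] at hc
        filter_upwards [(hc.eventually (gt_mem_nhds h)).filter_mono nhdsWithin_le_nhds] with ε h1 _
        exact h1
      · exact Filter.Eventually.of_forall fun ε h' => absurd h' h
    obtain ⟨ε, h1, h2⟩ := (this.and self_mem_nhdsWithin).exists
    exact ⟨ε, h2, h1⟩
  let l : (Fin n → ℝ) →ₗ[ℝ] ℝ := D.u M - ε • t
  have hl : ∀ z, l z = D.u M z - ε * t z := fun z => by simp [l]
  have key : newtonPolytope f ⊆ {z | l z ≤ 1 ∧ (l z = 1 → D.u M z = 1 ∧ ∀ i, i ∉ J → D.lam M i z = 0)} := by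
    refine convexHull_min ?_ ?_
    · rintro _ (rfl | ⟨m, hm, rfl⟩)
      · simp
      · rcases (D.u_le M m hm).eq_or_lt with h | h
        · have hc : D.Cone M (toR m) := D.u_eq M m hm h
          have h0 : 0 ≤ t (toR m) := by rw [ht]; exact Finset.sum_nonneg fun i _ => hc i
          refine ⟨by rw [hl, h]; nlinarith, fun h1 => ⟨h, fun i hi => ?_⟩⟩
          rw [hl, h] at h1
          have h2 : t (toR m) = 0 := by
            have : ε * t (toR m) = 0 := by linarith
            exact (mul_eq_zero.mp this).resolve_left hε.ne'
          rw [ht, Finset.sum_eq_zero_iff_of_nonneg fun i _ => hc i] at h2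
          exact h2 i (by simpa using hi)
        · have := hsm m hm h
          rw [← hl] at this
          exact ⟨this.le, fun h1 => absurd h1 this.ne⟩
    · rintro x ⟨hx, hx'⟩ y ⟨hy, hy'⟩ a c ha hc hac
      have e : l (a • x + c • y) = a * l x + c * l y := by rw [map_add, map_smul, map_smul]; rfl
      refine ⟨by rw [e]; nlinarith, fun h => ?_⟩
      rw [e] at h
      rcases ha.eq_or_lt with h0 | h0
      · have hc1 : c = 1 := by linarith
        rw [← h0, hc1]
        simp only [zero_smul, one_smul, zero_add]
        exact hy' (by rw [← h0, hc1] at h; linarith)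
      rcases hc.eq_or_lt with h1 | h1
      · have hc1 : a = 1 := by linarith
        rw [← h1, hc1]
        simp only [zero_smul, one_smul, add_zero]
        exact hx' (by rw [← h1, hc1] at h; linarith)
      have hx1 := hx' (by nlinarith)
      have hy1 := hy' (by nlinarith)
      refine ⟨by rw [map_add, map_smul, map_smul, hx1.1, hy1.1]; simpa using hac, fun i hi => ?_⟩
      rw [map_add, map_smul, map_smul, hx1.2 i hi, hy1.2 i hi]; simp
  refine ⟨l, fun z hz => (key hz).1, ?_⟩
  ext z
  constructor
  · rintro ⟨hz, h1, h2⟩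
    refine ⟨hz, ?_⟩
    rw [hl, h1, ht, Finset.sum_eq_zero fun i hi => h2 i (by simpa using hi)]
    simp
  · rintro ⟨hz, h1⟩
    exact ⟨hz, (key hz).2 h1⟩

lemma b_mem_Del (M : D.ι) {J : Finset (Fin n)} {j : Fin n} (hj : j ∈ J) : D.b M j ∈ D.Del M J := by
  refine ⟨D.b_mem_P M j, D.u_b M j, fun i hi => ?_⟩
  rw [lam_b, if_neg]
  rintro rfl
  exact hi hj

lemma Del_isFace (M : D.ι) {J : Finset (Fin n)} (hJ : J.Nonempty) :
    IsFace (newtonPolytope f) (D.Del M J) := by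
  obtain ⟨j, hj⟩ := hJ
  obtain ⟨l, h1, h2⟩ := D.face_fun M J
  exact ⟨⟨_, D.b_mem_Del M hj⟩, l, 1, h1, h2⟩

lemma zero_notMem_Del (M : D.ι) (J : Finset (Fin n)) : (0 : Fin n → ℝ) ∉ D.Del M J := by
  rintro ⟨_, h, _⟩
  simp at h

end FanData

lemma coeff_logder (f : MvPolynomial (Fin n) ℂ) (i : Fin n) (b : Fin n →₀ ℕ) :
    coeff b (X i * pderiv i f) = (b i : ℂ) * f.coeff b := by
  classical
  rw [logder_eq, coeff_sum]
  simp only [coeff_monomial]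
  rw [Finset.sum_ite_eq']
  split_ifs with h
  · rfl
  · rw [MvPolynomial.notMem_support_iff.mp h, mul_zero]

open Classical in
lemma faceRestrict_logder (f : MvPolynomial (Fin n) ℂ) (Δ : Set (Fin n → ℝ)) (i : Fin n) :
    faceRestrict Δ (X i * pderiv i f) =
      ∑ b ∈ f.support, if toR b ∈ Δ then monomial b ((b i : ℂ) * f.coeff b) else 0 := by
  rw [faceRestrict]
  simp only [coeff_logder]
  refine Finset.sum_subset ?_ ?_
  · intro b hb
    rw [MvPolynomial.mem_support_iff, coeff_logder] at hb
    exact MvPolynomial.mem_support_iff.mpr (right_ne_zero_of_mul hb)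
  · intro b _ hb
    rw [MvPolynomial.notMem_support_iff, coeff_logder] at hb
    rw [hb]; simp

namespace AlgData
variable (𝒜 : AlgData f)

lemma A_lin (M : 𝒜.D.ι) (b : Fin n →₀ ℕ) (j : Fin n) :
    𝒜.A M b j = ∑ k, (b k : ℤ) * 𝒜.A M (Finsupp.single k 1) j := by
  let φ : (Fin n →₀ ℕ) →+ ℤ := AddMonoidHom.mk' (M := Fin n →₀ ℕ) (G := ℤ)
    (fun v => 𝒜.A M v j) (fun a b => 𝒜.A_add M a b j)
  have h : φ b = ∑ k, (b k : ℤ) * φ (Finsupp.single k 1) := by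
    conv_lhs => rw [← Finsupp.univ_sum_single b]
    rw [map_sum]
    refine Finset.sum_congr rfl fun k _ => ?_
    have : Finsupp.single k (b k) = b k • Finsupp.single k 1 := by simp
    rw [this, map_nsmul, nsmul_eq_mul]
  exact h

lemma zpow_sum_aux {κ : Type*} {a : ℂ} (ha : a ≠ 0) (S : Finset κ) (e : κ → ℤ) :
    a ^ (∑ k ∈ S, e k) = ∏ k ∈ S, a ^ e k := by
  classical
  induction S using Finset.induction_on with
  | empty => simp
  | insert k S hk ih => rw [Finset.sum_insert hk, Finset.prod_insert hk, zpow_add₀ ha, ih]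

lemma FM_zero (hnd : Nondegenerate f) (M : 𝒜.D.ι) (y : Fin n → ℂ)
    (hy : ∀ i, eval y (𝒜.FM M i) = 0) : y = 0 := by
  classical
  by_contra hne
  let J : Finset (Fin n) := Finset.univ.filter fun j => y j ≠ 0
  have hJ : J.Nonempty := by
    by_contra h
    apply hne
    ext j
    by_contra hj
    exact h ⟨j, by simpa [J] using hj⟩
  let y' : Fin n → ℂ := fun j => if y j = 0 then 1 else y j
  have hy' : ∀ j, y' j ≠ 0 := fun j => by
    simp only [y']; split_ifs with h
    · exact one_ne_zero
    · exact h
  let x : Fin n → ℂ := fun k => ∏ j, y' j ^ 𝒜.A M (Finsupp.single k 1) j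
  have hx : ∀ k, x k ≠ 0 := fun k => Finset.prod_ne_zero_iff.mpr fun j _ => zpow_ne_zero _ (hy' j)
  have hxb : ∀ b : Fin n →₀ ℕ, ∏ k, x k ^ b k = ∏ j, y' j ^ 𝒜.A M b j := by
    intro b
    simp only [x, ← Finset.prod_pow]
    rw [Finset.prod_comm]
    refine Finset.prod_congr rfl fun j _ => ?_
    rw [A_lin, zpow_sum_aux (hy' j)]
    refine Finset.prod_congr rfl fun k _ => ?_
    rw [mul_comm, zpow_mul, zpow_natCast]
  refine hnd (𝒜.D.Del M J) ⟨𝒜.D.Del_isFace M hJ, 𝒜.D.zero_notMem_Del M J⟩ ⟨x, hx, fun i => ?_⟩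
  rw [← hy i, faceRestrict_logder, FM, Finset.sum_filter, map_sum, map_sum]
  refine Finset.sum_congr rfl fun b hb => ?_
  by_cases hu : 𝒜.D.u M (toR b) = 1
  · have hc := 𝒜.cone_supp M hb hu
    rw [if_pos hu, eval_monomial, Finsupp.prod_fintype _ _ (by simp)]
    by_cases hd : ∀ j, j ∉ J → 𝒜.D.lam M j (toR b) = 0
    · rw [if_pos ⟨supp_mem_P hb, hu, hd⟩, eval_monomial, Finsupp.prod_fintype _ _ (by simp), hxb]
      congr 1
      refine Finset.prod_congr rfl fun j _ => ?_
      rw [← 𝒜.A'_cast hc, zpow_natCast]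
      by_cases hj : j ∈ J
      · have : y j ≠ 0 := by simpa [J] using hj
        simp [y', this]
      · have h0 := 𝒜.A_eq_zero.mpr (hd j hj)
        rw [← 𝒜.A'_cast hc] at h0
        have h0 : 𝒜.A' M b j = 0 := by exact_mod_cast h0
        rw [h0, pow_zero, pow_zero]
    · rw [if_neg fun h => hd h.2.2, map_zero]
      push Not at hd
      obtain ⟨j, hj, hne⟩ := hd
      have hyj : y j = 0 := by by_contra h; exact hj (by simpa [J] using h)
      have h0 : 𝒜.A' M b j ≠ 0 := by
        intro h0
        apply hne
        rw [← 𝒜.A_eq_zero, ← 𝒜.A'_cast hc, h0]; rfl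
      rw [Finset.prod_eq_zero (Finset.mem_univ j) (by rw [hyj, zero_pow h0]), mul_zero]
  · rw [if_neg hu, if_neg fun h => hu h.2.1, map_zero, map_zero]

end AlgData
end Alg3
end ToricNewton

namespace ToricNewton

section Alg4
open Module

variable {n : ℕ} {f : MvPolynomial (Fin n) ℂ}

/-- number of lattice points of Newton weight exactly `β` -/
noncomputable def hh (f : MvPolynomial (Fin n) ℂ) (β : ℝ) : ℕ :=
  {v : Fin n → ℕ | nu f (natToR v) = β}.ncard

lemma Ik_eq_LIdeal (c : Fin n → (Fin n → ℂ)) (hc : LinearIndependent ℂ c) :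
    Ik (ext0 fun k => AlgData.LL f (c k)) n = LIdeal f := by
  have hspan : Submodule.span ℂ (Set.range c) = ⊤ :=
    hc.span_eq_top_of_card_eq_finrank' (by simp)
  apply le_antisymm
  · rw [Ik, Ideal.span_le]
    rintro _ ⟨k, hk, rfl⟩
    have hk : k < n := by simpa using hk
    rw [ext0_lt _ hk, AlgData.LL, lin_apply]
    refine Ideal.sum_mem _ fun i _ => ?_
    rw [MvPolynomial.smul_eq_C_mul]
    exact Ideal.mul_mem_left _ _ (Ideal.subset_span ⟨i, rfl⟩)
  · rw [LIdeal, Ideal.span_le]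
    have hle : ∀ x : Fin n → ℂ, lin (fun i => X i * pderiv i f) x ∈
        (Ik (ext0 fun k => AlgData.LL f (c k)) n) := by
      intro x
      have hx : x ∈ Submodule.span ℂ (Set.range c) := by rw [hspan]; trivial
      induction hx using Submodule.span_induction with
      | mem x hx =>
        obtain ⟨k, rfl⟩ := hx
        refine Ideal.subset_span ⟨k, by simp, ?_⟩
        rw [ext0_val]; rfl
      | zero => rw [map_zero]; exact zero_mem _
      | add x y _ _ hx hy => rw [map_add]; exact add_mem hx hy
      | smul a x _ hx =>
        rw [map_smul, MvPolynomial.smul_eq_C_mul]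
        exact Ideal.mul_mem_left _ _ hx
    rintro _ ⟨i, rfl⟩
    have := hle (Pi.single i 1)
    rw [lin_apply] at this
    simpa [Pi.single_apply] using this

lemma LL_ne_zero (hconv : Convenient f) {c : Fin n → ℂ} (hc : c ≠ 0) : AlgData.LL f c ≠ 0 := by
  classical
  obtain ⟨i, hi⟩ : ∃ i, c i ≠ 0 := by
    by_contra h
    push Not at h
    exact hc (funext h)
  obtain ⟨k, hk, hk2⟩ := hconv i
  intro h0
  have : coeff (Finsupp.single i k) (AlgData.LL f c) = 0 := by rw [h0, coeff_zero]
  rw [AlgData.LL, lin_apply, coeff_sum] at this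
  simp only [coeff_smul, coeff_logder, Finsupp.single_apply, smul_eq_mul] at this
  rw [Finset.sum_eq_single i] at this
  · have hk' : (k : ℂ) ≠ 0 := by exact_mod_cast (by omega : k ≠ 0)
    simp [hi, hk', hk2] at this
  · intro j _ hj
    rw [if_neg (Ne.symm hj)]; simp
  · simp

namespace AlgData
variable (𝒜 : AlgData f)

lemma finite_G (m : ℤ) : FiniteDimensional ℂ (𝒜.G m) := by
  have : Finite {v : Fin n →₀ ℕ | (𝒜.wt v : ℤ) ≤ m} := 𝒜.finite_wt m
  exact Module.Finite.of_basis (basisRestrictSupport ℂ {v : Fin n →₀ ℕ | (𝒜.wt v : ℤ) ≤ m})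

lemma finrank_G (m : ℤ) : finrank ℂ (𝒜.G m) = {v : Fin n →₀ ℕ | (𝒜.wt v : ℤ) ≤ m}.ncard := by
  rw [G, finrank_eq_nat_card_basis (basisRestrictSupport ℂ {v : Fin n →₀ ℕ | (𝒜.wt v : ℤ) ≤ m})]
  rfl

lemma wt_le_iff (v : Fin n →₀ ℕ) (a : ℤ) :
    (𝒜.wt v : ℤ) ≤ 𝒜.K * a + 𝒜.K - 1 ↔ (𝒜.wN v : ℤ) ≤ a := by
  have h1 := 𝒜.rk_lt (𝒜.sel v)
  rw [wt]
  push_cast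
  constructor
  · intro h
    by_contra hn
    push Not at hn
    have : (𝒜.K : ℤ) * (a + 1) ≤ 𝒜.K * 𝒜.wN v := by
      apply mul_le_mul_of_nonneg_left <;> omega
    have : (𝒜.K : ℤ) * (a + 1) = 𝒜.K * a + 𝒜.K := by ring
    omega
  · intro h
    have : (𝒜.K : ℤ) * 𝒜.wN v ≤ 𝒜.K * a := by
      apply mul_le_mul_of_nonneg_left <;> omega
    omega

lemma wN_le_floor (v : Fin n →₀ ℕ) (β : ℝ) :
    (𝒜.wN v : ℤ) ≤ ⌊(𝒜.d : ℝ) * β⌋ ↔ nu f (toR v) ≤ β := by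
  rw [Int.le_floor, Int.cast_natCast, wN_eq, mul_le_mul_iff_right₀ 𝒜.dpos]

lemma wN_le_ceil (v : Fin n →₀ ℕ) (β : ℝ) :
    (𝒜.wN v : ℤ) ≤ ⌈(𝒜.d : ℝ) * β⌉ - 1 ↔ nu f (toR v) < β := by
  rw [Int.le_sub_one_iff, Int.lt_ceil, Int.cast_natCast, wN_eq, mul_lt_mul_iff_right₀ 𝒜.dpos]

lemma Nle_eq (β : ℝ) : Nle f β = 𝒜.G (𝒜.K * ⌊(𝒜.d : ℝ) * β⌋ + 𝒜.K - 1) := by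
  ext g
  rw [G, mem_restrictSupport_iff]
  refine forall₂_congr fun v _ => ?_
  change _ ↔ (𝒜.wt v : ℤ) ≤ _
  rw [wt_le_iff, wN_le_floor]

lemma Nlt_eq (β : ℝ) : Nlt f β = 𝒜.G (𝒜.K * (⌈(𝒜.d : ℝ) * β⌉ - 1) + 𝒜.K - 1) := by
  ext g
  rw [G, mem_restrictSupport_iff]
  refine forall₂_congr fun v _ => ?_
  change _ ↔ (𝒜.wt v : ℤ) ≤ _
  rw [wt_le_iff, wN_le_ceil]

lemma finrank_diff (β : ℝ) :
    (finrank ℂ (𝒜.G (𝒜.K * ⌊(𝒜.d : ℝ) * β⌋ + 𝒜.K - 1)) : ℤ) -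
      finrank ℂ (𝒜.G (𝒜.K * (⌈(𝒜.d : ℝ) * β⌉ - 1) + 𝒜.K - 1)) = hh f β := by
  rw [finrank_G, finrank_G]
  have e1 : {v : Fin n →₀ ℕ | (𝒜.wt v : ℤ) ≤ 𝒜.K * ⌊(𝒜.d : ℝ) * β⌋ + 𝒜.K - 1} =
      {v | nu f (toR v) < β} ∪ {v | nu f (toR v) = β} := by
    ext v
    change (𝒜.wt v : ℤ) ≤ _ ↔ nu f (toR v) < β ∨ nu f (toR v) = β
    rw [wt_le_iff, wN_le_floor, le_iff_lt_or_eq]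
  have e2 : {v : Fin n →₀ ℕ | (𝒜.wt v : ℤ) ≤ 𝒜.K * (⌈(𝒜.d : ℝ) * β⌉ - 1) + 𝒜.K - 1} =
      {v | nu f (toR v) < β} := by
    ext v
    change (𝒜.wt v : ℤ) ≤ _ ↔ nu f (toR v) < β
    rw [wt_le_iff, wN_le_ceil]
  have hfin := 𝒜.finite_wt (𝒜.K * ⌊(𝒜.d : ℝ) * β⌋ + 𝒜.K - 1)
  rw [e1] at hfin
  rw [e1, e2, Set.ncard_union_eq ?_ (hfin.subset Set.subset_union_left)
    (hfin.subset Set.subset_union_right)]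
  · have e3 : {v : Fin n → ℕ | nu f (natToR v) = β} =
        (fun v : Fin n →₀ ℕ => (v : Fin n → ℕ)) '' {v | nu f (toR v) = β} := by
      ext v
      constructor
      · intro hv
        exact ⟨Finsupp.equivFunOnFinite.symm v, hv, rfl⟩
      · rintro ⟨v, hv, rfl⟩
        exact hv
    rw [hh, e3, Set.ncard_image_of_injective _ DFunLike.coe_injective]
    push_cast
    ring
  · rw [Set.disjoint_left]
    intro v h1 h2
    have h1 : nu f (toR v) < β := h1
    have h2 : nu f (toR v) = β := h2
    linarith

end AlgData

theorem grDim_eq (hconv : Convenient f) (hnd : Nondegenerate f) (D : FanData f) (β : ℝ) :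
    (grDim f β : ℤ) = ∑ j ∈ Finset.range (n + 1), (-1) ^ j * (n.choose j : ℤ) * (hh f (β - j) : ℤ) := by
  obtain ⟨𝒜, rfl⟩ := exists_algData D
  have := 𝒜.D.fin
  obtain ⟨c, hc, hreg⟩ := exists_generic 𝒜.FM (fun M x h => 𝒜.FM_zero hnd M x h)
  have F := 𝒜.filtData c hreg
  have hm : (𝒜.K : ℤ) * (⌈(𝒜.d : ℝ) * β⌉ - 1) + 𝒜.K - 1 ≤ 𝒜.K * ⌊(𝒜.d : ℝ) * β⌋ + 𝒜.K - 1 := by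
    have : ⌈(𝒜.d : ℝ) * β⌉ - 1 ≤ ⌊(𝒜.d : ℝ) * β⌋ := by
      have := Int.ceil_le_floor_add_one ((𝒜.d : ℝ) * β)
      omega
    have : (𝒜.K : ℤ) * (⌈(𝒜.d : ℝ) * β⌉ - 1) ≤ 𝒜.K * ⌊(𝒜.d : ℝ) * β⌋ :=
      mul_le_mul_of_nonneg_left this (by positivity)
    omega
  have h := F.final 𝒜.finite_G (fun k hk => by
    rw [ext0_lt _ hk]; exact LL_ne_zero hconv (hc.ne_zero _)) _ _ hm
  rw [Ik_eq_LIdeal c hc, ← 𝒜.Nle_eq, ← 𝒜.Nlt_eq] at h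
  refine Eq.trans h (Finset.sum_congr rfl fun j _ => ?_)
  congr 1
  rw [← 𝒜.finrank_diff (β - j)]
  have e : (𝒜.d : ℝ) * (β - j) = 𝒜.d * β - ((𝒜.d * j : ℤ) : ℝ) := by push_cast; ring
  rw [e, Int.floor_sub_intCast, Int.ceil_sub_intCast]
  have a1 : (𝒜.K : ℤ) * ⌊(𝒜.d : ℝ) * β⌋ + 𝒜.K - 1 - j * 𝒜.s =
    𝒜.K * (⌊(𝒜.d : ℝ) * β⌋ - 𝒜.d * j) + 𝒜.K - 1 := by rw [AlgData.s]; push_cast; ring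
  have a2 : (𝒜.K : ℤ) * (⌈(𝒜.d : ℝ) * β⌉ - 1) + 𝒜.K - 1 - j * 𝒜.s =
    𝒜.K * (⌈(𝒜.d : ℝ) * β⌉ - 𝒜.d * j - 1) + 𝒜.K - 1 := by rw [AlgData.s]; push_cast; ring
  rw [a1, a2]

end Alg4
end ToricNewton

namespace ToricNewton

section Comb1
open Module

variable {n : ℕ} {f : MvPolynomial (Fin n) ℂ}

/-- Induction principle for points of a face not containing the origin. -/
lemma face_ind {l : (Fin n → ℝ) →ₗ[ℝ] ℝ} {c : ℝ} (hc : 0 < c) (hl : ∀ x ∈ newtonPolytope f, l x ≤ c)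
    {Q : (Fin n → ℝ) → Prop} (hQ : Convex ℝ {z | Q z})
    (h : ∀ m ∈ f.support, l (toR m) = c → Q (toR m)) {z : Fin n → ℝ} (hz : z ∈ newtonPolytope f)
    (hzc : l z = c) : Q z := by
  have key : newtonPolytope f ⊆ {z | l z ≤ c ∧ (l z = c → Q z)} := by
    refine convexHull_min ?_ ?_
    · rintro _ (rfl | ⟨m, hm, rfl⟩)
      · simp [hc.le, hc.ne]
      · exact ⟨hl _ (supp_mem_P hm), h m hm⟩
    · rintro x ⟨hx, hx'⟩ y ⟨hy, hy'⟩ a d ha hd had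
      have e : l (a • x + d • y) = a * l x + d * l y := by rw [map_add, map_smul, map_smul]; rfl
      refine ⟨by rw [e]; nlinarith, fun h => ?_⟩
      rw [e] at h
      rcases ha.eq_or_lt with h0 | h0
      · have hc1 : d = 1 := by linarith
        rw [← h0, hc1]
        simp only [zero_smul, one_smul, zero_add]
        exact hy' (by rw [← h0, hc1] at h; linarith)
      rcases hd.eq_or_lt with h1 | h1
      · have hc1 : a = 1 := by linarith
        rw [← h1, hc1]
        simp only [zero_smul, one_smul, add_zero]
        exact hx' (by rw [← h1, hc1] at h; linarith)
      exact hQ (hx' (by nlinarith)) (hy' (by nlinarith)) ha hd had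
  exact (key hz).2 hzc

namespace FanData
variable (D : FanData f)

lemma lam_sumJ (M : D.ι) (i : Fin n) (J : Finset (Fin n)) (c : Fin n → ℝ) :
    D.lam M i (∑ j ∈ J, c j • D.b M j) = if i ∈ J then c i else 0 := by
  simp [map_sum, lam_b]

lemma Del_eq_conv (M : D.ι) (J : Finset (Fin n)) :
    D.Del M J = convexHull ℝ (Set.range fun j : J => D.b M j) := by
  apply Set.Subset.antisymm
  · rintro z ⟨hz, h1, h2⟩
    have hc := D.cone_of_P M hz h1
    have e : ∀ (g : Fin n → Fin n → ℝ), (∀ i, i ∉ J → g i = 0) → ∑ i, g i = ∑ i ∈ J, g i := by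
      intro g hg
      exact (Finset.sum_subset (Finset.subset_univ J) fun i _ hi => hg i hi).symm
    have e' : ∑ i ∈ J, D.lam M i z = 1 := by
      rw [← h1, u_sum]
      exact Finset.sum_subset (Finset.subset_univ J) fun i _ hi => h2 i hi
    rw [← D.sum_lam M z, e _ (fun i hi => by rw [h2 i hi, zero_smul])]
    exact (convex_convexHull ℝ _).sum_mem (fun i _ => hc i) e'
      fun i hi => subset_convexHull ℝ _ ⟨⟨i, hi⟩, rfl⟩
  · obtain ⟨l, h1, h2⟩ := D.face_fun M J
    refine convexHull_min ?_ ?_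
    · rintro _ ⟨j, rfl⟩
      exact D.b_mem_Del M j.2
    · rw [h2]
      exact P_convex.inter (convex_hyperplane l.isLinear 1)

lemma li_bJ (M : D.ι) (J : Finset (Fin n)) : LinearIndependent ℝ fun j : J => D.b M j :=
  (D.li_b M).comp _ Subtype.val_injective

lemma extreme_Del (M : D.ι) (J : Finset (Fin n)) :
    (D.Del M J).extremePoints ℝ = D.b M '' (J : Set (Fin n)) := by
  rw [Del_eq_conv, extremePoints_conv_li _ (D.li_bJ M J)]
  ext x
  simp

lemma faceDim_Del (M : D.ι) (J : Finset (Fin n)) (hJ : J.Nonempty) :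
    faceDim (D.Del M J) + 1 = J.card := by
  have h := (D.li_bJ M J).affineIndependent
  have hp : J.card = (J.card - 1) + 1 := by have := hJ.card_pos; omega
  have := h.finrank_vectorSpan (n := J.card - 1) (by simpa using hp)
  rw [faceDim, Del_eq_conv, affineSpan_convexHull, direction_affineSpan, this]
  exact hp.symm

lemma b_inj (M : D.ι) : Function.Injective (D.b M) := (D.li_b M).injective

lemma mem_Box_Del (M : D.ι) (J : Finset (Fin n)) (x : Fin n → ℝ) :
    x ∈ Box (D.Del M J) ↔
      (∀ i ∈ J, 0 ≤ D.lam M i x ∧ D.lam M i x < 1) ∧ ∀ i, i ∉ J → D.lam M i x = 0 := by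
  classical
  constructor
  · rintro ⟨s, hs, q, hq, rfl⟩
    rw [extreme_Del] at hs
    have key : ∀ i, D.lam M i (∑ y ∈ s, q y • y) = if D.b M i ∈ s then q (D.b M i) else 0 := by
      intro i
      rw [map_sum, ← Finset.sum_ite_eq s (D.b M i) q]
      refine Finset.sum_congr rfl fun y hy => ?_
      obtain ⟨j, hj, rfl⟩ := hs hy
      rw [map_smul, lam_b, smul_eq_mul]
      by_cases h : j = i
      · rw [if_pos h, if_pos (by rw [h]), mul_one]
      · rw [if_neg h, if_neg fun e => h (D.b_inj M e).symm, mul_zero]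
    refine ⟨fun i _ => ?_, fun i hi => ?_⟩
    · rw [key]
      split_ifs with h
      · exact hq _ h
      · exact ⟨le_rfl, one_pos⟩
    · rw [key, if_neg]
      intro h
      obtain ⟨j, hj, e⟩ := hs h
      exact hi (D.b_inj M e ▸ hj)
  · rintro ⟨h1, h2⟩
    have hq : ∀ j, ∑ i, D.lam M i (D.b M j) * D.lam M i x = D.lam M j x := by
      intro j; simp [lam_b]
    refine ⟨J.image (D.b M), ?_, fun y => ∑ i, D.lam M i y * D.lam M i x, ?_, ?_⟩
    · rw [extreme_Del]; simp
    · intro y hy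
      obtain ⟨j, hj, rfl⟩ := Finset.mem_image.mp hy
      have h3 := h1 j hj
      rw [← hq j] at h3
      exact h3
    · rw [Finset.sum_image fun a _ b _ e => D.b_inj M e]
      simp only [hq]
      conv_lhs => rw [← D.sum_lam M x]
      refine (Finset.sum_subset (Finset.subset_univ J) fun i _ hi => ?_).symm
      rw [h2 i hi, zero_smul]

open Classical in
/-- positive coordinates of the generic vector -/
noncomputable def Npos (w : Fin n → ℝ) (M : D.ι) : Finset (Fin n) :=
  Finset.univ.filter fun i => 0 < D.lam M i w

lemma mem_Npos {w : Fin n → ℝ} {M : D.ι} {i : Fin n} : i ∈ D.Npos w M ↔ 0 < D.lam M i w := by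
  simp [Npos]

lemma Npos_nonempty (hn : 1 ≤ n) {w : Fin n → ℝ} (hw : D.Gen w) (M : D.ι) : (D.Npos w M).Nonempty := by
  by_contra h
  have hc : D.Cone M (-w) := by
    intro i
    rw [map_neg]
    by_contra h'
    exact h ⟨i, D.mem_Npos.mpr (by linarith)⟩
  have := hc.nonneg ⟨0, hn⟩
  have := hw.pos ⟨0, hn⟩
  simp only [Pi.neg_apply] at *
  linarith

lemma Sel_neg {w : Fin n → ℝ} {M : D.ι} {x : Fin n → ℝ} :
    D.Sel (-w) M x ↔ D.Cone M x ∧ ∀ i ∈ D.Npos w M, 0 < D.lam M i x := by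
  simp only [Sel, mem_Npos, map_neg, Left.neg_neg_iff]

lemma Cone.add {D : FanData f} {M : D.ι} {x y : Fin n → ℝ} (hx : D.Cone M x) (hy : D.Cone M y) :
    D.Cone M (x + y) := fun i => by rw [map_add]; exact add_nonneg (hx i) (hy i)

lemma Cone.sum {D : FanData f} {M : D.ι} {κ : Type*} {S : Finset κ} {x : κ → Fin n → ℝ}
    (hx : ∀ k ∈ S, D.Cone M (x k)) : D.Cone M (∑ k ∈ S, x k) := fun i => by
  rw [map_sum]; exact Finset.sum_nonneg fun k hk => hx k hk i

/-- sum of vertices -/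
noncomputable def ctr (M : D.ι) (J : Finset (Fin n)) : Fin n → ℝ := ∑ j ∈ J, D.b M j

lemma lam_ctr (M : D.ι) (J : Finset (Fin n)) (i : Fin n) :
    D.lam M i (D.ctr M J) = if i ∈ J then 1 else 0 := by
  simp [ctr, map_sum, lam_b]

lemma ctr_cone (M : D.ι) (J : Finset (Fin n)) : D.Cone M (D.ctr M J) := fun i => by
  rw [lam_ctr]; split_ifs <;> simp

lemma Sel_ctr {w : Fin n → ℝ} {M : D.ι} {J : Finset (Fin n)} (hJ : D.Npos w M ⊆ J) :
    D.Sel (-w) M (D.ctr M J) :=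
  D.Sel_neg.mpr ⟨D.ctr_cone M J, fun i hi => by rw [lam_ctr, if_pos (hJ hi)]; exact one_pos⟩

lemma FcalMem_Del (hn : 1 ≤ n) {w : Fin n → ℝ} (hw : D.Gen w) {M : D.ι} {J : Finset (Fin n)}
    (hJ : D.Npos w M ⊆ J) : FcalMem f (D.Del M J) := by
  have hJne : J.Nonempty := (D.Npos_nonempty hn hw M).mono hJ
  refine ⟨D.Del_isFace M hJne, fun hsub => ?_⟩
  obtain ⟨ε, hε, hcone⟩ := (D.Sel_ctr hJ).exists_eps
  have hcard : (0:ℝ) < J.card := by exact_mod_cast hJne.card_pos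
  have hmem : (J.card : ℝ)⁻¹ • D.ctr M J ∈ D.Del M J := by
    rw [Del_eq_conv, ctr, Finset.smul_sum]
    refine (convex_convexHull ℝ _).sum_mem (fun i _ => by positivity) ?_
      fun i hi => subset_convexHull ℝ _ ⟨⟨i, hi⟩, rfl⟩
    rw [Finset.sum_const, nsmul_eq_mul, mul_inv_cancel₀ hcard.ne']
  obtain ⟨_, ⟨k, rfl⟩, hk⟩ := hsub hmem
  have hk : (J.card : ℝ)⁻¹ * D.ctr M J k = 0 := hk
  have h1 : D.ctr M J k = 0 := (mul_eq_zero.mp hk).resolve_left (inv_ne_zero hcard.ne')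
  have h2 := hcone.nonneg k
  have h3 := hw.pos k
  simp only [Pi.add_apply, Pi.smul_apply, Pi.neg_apply, smul_eq_mul, h1] at h2
  nlinarith

lemma Del_inj {w : Fin n → ℝ} (hw : D.Gen w) {M M' : D.ι} {J J' : Finset (Fin n)}
    (hJ : D.Npos w M ⊆ J) (hJ' : D.Npos w M' ⊆ J') (h : D.Del M J = D.Del M' J') :
    M = M' ∧ J = J' := by
  have hM : M = M' := by
    have c1 : D.Cone M (D.ctr M' J') := Cone.sum fun j hj => by
      have := D.b_mem_Del M' hj
      rw [← h] at this
      exact D.cone_of_P M this.1 this.2.1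
    have c2 : D.Cone M' (D.ctr M J) := Cone.sum fun j hj => by
      have := D.b_mem_Del M hj
      rw [h] at this
      exact D.cone_of_P M' this.1 this.2.1
    have s1 : D.Sel (-w) M (D.ctr M J + D.ctr M' J') := D.Sel_neg.mpr
      ⟨(D.ctr_cone M J).add c1, fun i hi => by
        rw [map_add, lam_ctr, if_pos (hJ hi)]
        have := c1 i
        linarith⟩
    have s2 : D.Sel (-w) M' (D.ctr M J + D.ctr M' J') := D.Sel_neg.mpr
      ⟨c2.add (D.ctr_cone M' J'), fun i hi => by
        rw [map_add, D.lam_ctr M', if_pos (hJ' hi)]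
        have := c2 i
        linarith⟩
    refine s1.unique (fun a b hab => hw.inj a b ?_) s2
    rw [map_neg, map_neg] at hab
    linarith
  subst hM
  refine ⟨rfl, ?_⟩
  have : D.b M '' (J : Set (Fin n)) = D.b M '' (J' : Set (Fin n)) := by
    rw [← extreme_Del, ← extreme_Del, h]
  exact_mod_cast (D.b_inj M).image_injective this

lemma Del_surj (hconv : Convenient f) {w : Fin n → ℝ} {Δ : Set (Fin n → ℝ)}
    (hΔ : FcalMem f Δ) (hd : faceDim Δ < n) : ∃ M J, D.Npos w M ⊆ J ∧ Δ = D.Del M J := by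
  classical
  obtain ⟨⟨-, l, c, hl, rfl⟩, hcoord⟩ := hΔ
  obtain ⟨y, ⟨hyP, hyc⟩, hycoord⟩ := Set.not_subset.mp hcoord
  have hypos : ∀ i, 0 < y i := fun i => lt_of_le_of_ne (P_nonneg hyP i) fun e =>
    hycoord (Set.mem_iUnion.mpr ⟨i, e.symm⟩)
  have hc0 : 0 ≤ c := by have := hl 0 zero_mem_P; simpa using this
  have hc : 0 < c := by
    refine lt_of_le_of_ne hc0 fun h0 => ?_
    subst h0
    obtain ⟨C, hC, hsm⟩ := small_mem_P hconv
    have hle : ∀ i, l (Pi.single i 1) ≤ 0 := by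
      intro i
      have := hl (C • Pi.single i 1) (hsm _ (fun k => by
        simp only [Pi.smul_apply, Pi.single_apply, smul_eq_mul]; split_ifs <;> simp [hC.le]) (by
        simp [← Finset.mul_sum]))
      rw [map_smul, smul_eq_mul] at this
      nlinarith
    have hdec : ∀ z : Fin n → ℝ, l z = ∑ i, z i * l (Pi.single i 1) := by
      intro z
      conv_lhs => rw [← LinearMap.sum_single_apply (fun _ => ℝ) z]
      rw [map_sum]
      refine Finset.sum_congr rfl fun i _ => ?_
      have : Pi.single i (z i) = z i • (Pi.single i 1 : Fin n → ℝ) := by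
        ext k; simp [Pi.single_apply]
      rw [this, map_smul, smul_eq_mul]
    have h1 := hdec y
    rw [hyc, eq_comm, Finset.sum_eq_zero_iff_of_nonpos fun i _ => mul_nonpos_of_nonneg_of_nonpos (hypos i).le (hle i)] at h1
    have hz : ∀ z, l z = 0 := fun z => by
      rw [hdec]
      refine Finset.sum_eq_zero fun i hi => ?_
      rw [(mul_eq_zero.mp (h1 i hi)).resolve_left (hypos i).ne', mul_zero]
    have e : {x ∈ newtonPolytope f | l x = 0} = newtonPolytope f := by
      ext x; simp [hz]
    rw [e, faceDim, affineSpan_eq_top_of_nonempty_interior, AffineSubspace.direction_top, finrank_top] at hd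
    · simp at hd
    · rw [P_convex.convexHull_eq]; exact interior_P hconv
  let V := f.support.filter fun m => l (toR m) = c
  let x : Fin n → ℝ := ∑ m ∈ V, toR m
  have hxpos : ∀ k, 0 < x k := by
    intro k
    have hnn : 0 ≤ x k := by
      simp only [x, Finset.sum_apply]
      exact Finset.sum_nonneg fun m _ => toR_nonneg m k
    refine lt_of_le_of_ne hnn fun h0 => ?_
    have h0 : ∑ m ∈ V, toR m k = 0 := by rw [h0]; simp [x]
    rw [Finset.sum_eq_zero_iff_of_nonneg fun m _ => toR_nonneg m k] at h0
    have := face_ind hc hl (Q := fun z => z k = 0)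
      (convex_hyperplane (LinearMap.proj (R := ℝ) (φ := fun _ => ℝ) k).isLinear 0)
      (fun m hm hmc => h0 m (Finset.mem_filter.mpr ⟨hm, hmc⟩)) hyP hyc
    exact (hypos k).ne' this
  obtain ⟨ε₀, hε₀, hsmall⟩ : ∃ ε₀ : ℝ, 0 < ε₀ ∧ ∀ k, ε₀ * w k ≤ x k := by
    have : ∀ᶠ ε in nhdsWithin (0:ℝ) (Set.Ioi 0), ∀ k, ε * w k ≤ x k := by
      rw [Filter.eventually_all]
      intro k
      have hc : Filter.Tendsto (fun ε : ℝ => ε * w k) (nhds 0) (nhds (0 * w k)) := by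
        apply Continuous.tendsto
        fun_prop
      rw [zero_mul] at hc
      filter_upwards [(hc.eventually (gt_mem_nhds (hxpos k))).filter_mono nhdsWithin_le_nhds] with ε h1
      exact h1.le
    obtain ⟨ε, h1, h2⟩ := (this.and self_mem_nhdsWithin).exists
    exact ⟨ε, h2, h1⟩
  obtain ⟨M, hM⟩ := D.exists_sel (-w) x ε₀ hε₀ (fun ε h1 h2 k => by
    simp only [Pi.add_apply, Pi.smul_apply, Pi.neg_apply, smul_eq_mul]
    have := hsmall k
    have := hxpos k
    rcases le_total 0 (w k) with h | h <;> nlinarith)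
  rw [Sel_neg] at hM
  have hlb : ∀ i, l (D.b M i) ≤ c := fun i => hl _ (D.b_mem_P M i)
  have hlz : ∀ z, l z = ∑ i, D.lam M i z * l (D.b M i) := fun z => by
    conv_lhs => rw [← D.sum_lam M z]
    simp [map_sum]
  have hlx : l x = V.card * c := by
    simp only [x, map_sum]
    rw [Finset.sum_congr rfl fun m hm => (Finset.mem_filter.mp hm).2, Finset.sum_const, nsmul_eq_mul]
  have hux : D.u M x ≤ V.card := by
    simp only [x, map_sum]
    refine (Finset.sum_le_card_nsmul V _ 1 fun m hm => D.u_le M m (Finset.mem_filter.mp hm).1).trans ?_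
    simp
  have hterm : ∀ {z : Fin n → ℝ}, D.Cone M z → c * D.u M z ≤ l z → ∀ i, 0 < D.lam M i z → l (D.b M i) = c := by
    intro z hz h i hi
    have h1 : ∑ i, D.lam M i z * (c - l (D.b M i)) ≤ 0 := by
      simp only [mul_sub, Finset.sum_sub_distrib, ← Finset.sum_mul]
      rw [← hlz, ← u_sum]; linarith
    have h2 : ∀ i ∈ Finset.univ, 0 ≤ D.lam M i z * (c - l (D.b M i)) := fun i _ =>
      mul_nonneg (hz i) (by linarith [hlb i])
    have h3 := (Finset.sum_eq_zero_iff_of_nonneg h2).mp (le_antisymm h1 (Finset.sum_nonneg h2)) i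
      (Finset.mem_univ i)
    have := (mul_eq_zero.mp h3).resolve_left hi.ne'
    linarith
  have hlu : ∀ {z : Fin n → ℝ}, D.Cone M z → l z ≤ c * D.u M z := by
    intro z hz
    rw [hlz, u_sum, Finset.mul_sum]
    exact Finset.sum_le_sum fun i _ => by
      rw [mul_comm c]; exact mul_le_mul_of_nonneg_left (hlb i) (hz i)
  have hux' : D.u M x = V.card := by
    refine le_antisymm hux ?_
    have := hlu hM.1
    rw [hlx] at this
    nlinarith
  have huV : ∀ m ∈ V, D.u M (toR m) = 1 := by
    have h1 : ∑ m ∈ V, (1 - D.u M (toR m)) = 0 := by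
      rw [Finset.sum_sub_distrib, ← map_sum]
      change _ - D.u M x = 0
      rw [hux']; simp
    rw [Finset.sum_eq_zero_iff_of_nonneg fun m hm => by
      have := D.u_le M m (Finset.mem_filter.mp hm).1
      linarith] at h1
    intro m hm
    have := h1 m hm
    linarith
  let J : Finset (Fin n) := Finset.univ.filter fun i => l (D.b M i) = c
  refine ⟨M, J, fun i hi => ?_, ?_⟩
  · simp only [J, Finset.mem_filter, Finset.mem_univ, true_and]
    refine hterm hM.1 ?_ i (hM.2 i hi)
    rw [hlx, hux']; linarith
  · ext z
    constructor
    · rintro ⟨hzP, hzc⟩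
      have hu : D.u M z = 1 := face_ind hc hl (Q := fun z => D.u M z = 1)
        (convex_hyperplane (D.u M).isLinear 1)
        (fun m hm hmc => huV m (Finset.mem_filter.mpr ⟨hm, hmc⟩)) hzP hzc
      have hcone := D.cone_of_P M hzP hu
      refine ⟨hzP, hu, fun i hi => ?_⟩
      by_contra hne
      have := hterm hcone (by rw [hu, hzc]; linarith) i (lt_of_le_of_ne (hcone i) (Ne.symm hne))
      exact hi (by simpa [J] using this)
    · rintro ⟨hzP, hu, h0⟩
      refine ⟨hzP, ?_⟩
      have : ∀ i, D.lam M i z * l (D.b M i) = D.lam M i z * c := by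
        intro i
        by_cases hi : i ∈ J
        · have : l (D.b M i) = c := by simpa [J] using hi
          rw [this]
        · rw [h0 i hi]; simp
      rw [hlz]
      simp only [this]
      rw [← Finset.sum_mul, ← u_sum, hu, one_mul]

end FanData
end Comb1
end ToricNewton

namespace ToricNewton

section Comb2
open Module

variable {n : ℕ} {f : MvPolynomial (Fin n) ℂ}

/-- difference operator -/
def dl (g : ℝ → ℤ) : ℝ → ℤ := fun β => g β - g (β - 1)

lemma dl_iter (g : ℝ → ℤ) (k : ℕ) (β : ℝ) :
    (dl^[k] g) β = ∑ j ∈ Finset.range (k+1), (-1)^j * (k.choose j : ℤ) * g (β - j) := by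
  have h := iter_diff (fun β : ℝ => β - 1) (fun k => dl^[k] g) k (by
    intro m _ a
    rw [Function.iterate_succ_apply']
    rfl) k le_rfl β
  have hs : ∀ j : ℕ, (fun β : ℝ => β - 1)^[j] β = β - j := by
    intro j
    induction j with
    | zero => simp
    | succ j ih => rw [Function.iterate_succ_apply', ih]; push_cast; ring
  rw [h]
  refine Finset.sum_congr rfl fun j _ => ?_
  rw [hs]
  rfl

namespace FanData
variable (D : FanData f)

/-- set of lattice points in the cone over a face, some coordinates being `< 1` -/
def CS (M : D.ι) (J T : Finset (Fin n)) (β : ℝ) : Set (Fin n → ℕ) :=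
  {v | (D.Cone M (natToR v) ∧ (∀ i, i ∉ J → D.lam M i (natToR v) = 0) ∧
    nu f (natToR v) = β) ∧ ∀ i ∈ T, D.lam M i (natToR v) < 1}

lemma CS_finite (M : D.ι) (J T : Finset (Fin n)) (β : ℝ) : (D.CS M J T β).Finite :=
  (D.finite_nu_le β).subset fun _ hv => hv.1.2.2.le

/-- its cardinality -/
noncomputable def CC (M : D.ι) (J T : Finset (Fin n)) (β : ℝ) : ℤ := (D.CS M J T β).ncard

lemma natToR_add (v : Fin n → ℕ) (M : D.ι) (t : Fin n) :
    natToR (v + ⇑(D.ex M t)) = natToR v + D.b M t := by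
  ext k
  simp [natToR, b, toR]

lemma CC_insert (M : D.ι) {J T : Finset (Fin n)} {t : Fin n} (ht : t ∈ J) (htT : t ∉ T) (β : ℝ) :
    D.CC M J (insert t T) β = D.CC M J T β - D.CC M J T (β - 1) := by
  have hsub : D.CS M J (insert t T) β ⊆ D.CS M J T β := fun v hv =>
    ⟨hv.1, fun i hi => hv.2 i (Finset.mem_insert_of_mem hi)⟩
  have himg : D.CS M J T β \ D.CS M J (insert t T) β =
      (fun v => v + ⇑(D.ex M t)) '' D.CS M J T (β - 1) := by
    have hne : ∀ i, i ∉ J → t ≠ i := fun i hi e => hi (e ▸ ht)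
    have hneT : ∀ i, i ∈ T → t ≠ i := fun i hi e => htT (e ▸ hi)
    ext v
    constructor
    · rintro ⟨⟨⟨h1, h2, h3⟩, h4⟩, h5⟩
      have h6 : 1 ≤ D.lam M t (natToR v) := by
        by_contra hlt
        push Not at hlt
        refine h5 ⟨⟨h1, h2, h3⟩, fun i hi => ?_⟩
        rcases Finset.mem_insert.mp hi with rfl | hi
        · exact hlt
        · exact h4 i hi
      have hc : D.Cone M (natToR v - D.b M t) := by
        intro i
        rw [map_sub, lam_b]
        split_ifs with h
        · subst h; linarith
        · rw [sub_zero]; exact h1 i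
      have hle : ∀ k, D.ex M t k ≤ v k := by
        intro k
        have := hc.nonneg k
        have h7 : (D.ex M t k : ℝ) ≤ v k := by
          have e : (natToR v - D.b M t) k = (v k : ℝ) - D.ex M t k := rfl
          rw [e] at this
          linarith
        exact_mod_cast h7
      have hv : (v - ⇑(D.ex M t)) + ⇑(D.ex M t) = v := by
        ext k
        simp only [Pi.add_apply, Pi.sub_apply]
        have := hle k
        omega
      have hR : natToR (v - ⇑(D.ex M t)) = natToR v - D.b M t := by
        rw [eq_sub_iff_add_eq, ← natToR_add, hv]
      refine ⟨v - ⇑(D.ex M t), ⟨⟨by rwa [hR], fun i hi => ?_, ?_⟩, fun i hi => ?_⟩, hv⟩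
      · rw [hR, map_sub, h2 i hi, lam_b, if_neg (hne i hi), sub_zero]
      · rw [hR, hc.nu_eq, map_sub, u_b, ← h1.nu_eq, h3]
      · rw [hR, map_sub, lam_b, if_neg (hneT i hi), sub_zero]
        exact h4 i hi
    · rintro ⟨v, ⟨⟨h1, h2, h3⟩, h4⟩, rfl⟩
      have hlam : ∀ i, D.lam M i (natToR (v + ⇑(D.ex M t))) =
          D.lam M i (natToR v) + if t = i then 1 else 0 := fun i => by
        rw [natToR_add, map_add, lam_b]
      have hc : D.Cone M (natToR (v + ⇑(D.ex M t))) := fun i => by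
        rw [hlam]
        have := h1 i
        split_ifs <;> linarith
      refine ⟨⟨⟨hc, fun i hi => ?_, ?_⟩, fun i hi => ?_⟩, fun h => ?_⟩
      · rw [hlam, if_neg (hne i hi), h2 i hi, add_zero]
      · rw [hc.nu_eq, natToR_add, map_add, u_b, ← h1.nu_eq, h3]; ring
      · rw [hlam, if_neg (hneT i hi), add_zero]; exact h4 i hi
      · have := h.2 t (Finset.mem_insert_self _ _)
        rw [hlam, if_pos rfl] at this
        have := h1 t
        linarith
  have h1 := Set.ncard_sdiff_add_ncard_of_subset hsub (D.CS_finite M J T β)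
  rw [himg, Set.ncard_image_of_injective _ (add_left_injective _)] at h1
  unfold CC
  rw [← h1]
  push_cast
  ring

lemma CC_eq (M : D.ι) (J : Finset (Fin n)) {T : Finset (Fin n)} (hT : T ⊆ J) :
    D.CC M J T = dl^[T.card] (D.CC M J ∅) := by
  induction T using Finset.induction_on with
  | empty => rfl
  | insert t T ht ih =>
    rw [Finset.card_insert_of_notMem ht, Function.iterate_succ_apply',
      ← ih ((Finset.subset_insert _ _).trans hT)]
    ext β
    exact D.CC_insert M (hT (Finset.mem_insert_self _ _)) ht β

lemma box_count (M : D.ι) (J : Finset (Fin n)) (β : ℝ) :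
    ({v : Fin n → ℕ | natToR v ∈ Box (D.Del M J) ∧ nu f (natToR v) = β}.ncard : ℤ) =
      (dl^[J.card] (D.CC M J ∅)) β := by
  rw [← D.CC_eq M J subset_rfl, CC]
  congr 2
  ext v
  simp only [Set.mem_ofPred_eq, mem_Box_Del, CS]
  constructor
  · rintro ⟨⟨h1, h2⟩, h3⟩
    refine ⟨⟨fun i => ?_, h2, h3⟩, fun i hi => (h1 i hi).2⟩
    by_cases hi : i ∈ J
    · exact (h1 i hi).1
    · exact (h2 i hi).ge
  · rintro ⟨⟨h1, h2, h3⟩, h4⟩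
    exact ⟨⟨fun i hi => ⟨h1 i, h4 i hi⟩, h2⟩, h3⟩

lemma inner_sum (M : D.ι) (J : Finset (Fin n)) (q : ℕ) (hq : q < n) (hJ : J.card = q + 1) (α : ℝ) :
    ∑ j ∈ Finset.range (n - q),
            (-1 : ℤ) ^ (n - 1 - q - j) * ((n - 1 - q).choose j : ℤ) *
              ({v : Fin n → ℕ | natToR v ∈ Box (D.Del M J) ∧
                  nu f (natToR v) = α - (j : ℝ)}.ncard : ℤ) =
      (-1) ^ (n - J.card) * (dl^[n] (D.CC M J ∅)) α := by
  obtain ⟨r, rfl⟩ : ∃ r, n = r + (q + 1) := ⟨n - (q+1), by omega⟩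
  have e1 : r + (q + 1) - 1 - q = r := by omega
  have e2 : r + (q + 1) - q = r + 1 := by omega
  have e3 : r + (q + 1) - J.card = r := by omega
  rw [e1, e2, e3, Function.iterate_add_apply, dl_iter, Finset.mul_sum]
  refine Finset.sum_congr rfl fun j hj => ?_
  rw [box_count, hJ]
  have hj : j ≤ r := Nat.lt_succ_iff.mp (Finset.mem_range.mp hj)
  obtain ⟨s, rfl⟩ := Nat.exists_eq_add_of_le hj
  have e4 : j + s - j = s := by omega
  rw [e4]
  have : (-1 : ℤ)^(j+s) * (-1)^j = (-1)^s := by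
    rw [pow_add, mul_right_comm, ← mul_pow]; simp
  rw [← this]
  ring

lemma alt_sum (A : Finset (Fin n)) :
    ∑ J ∈ Finset.univ.filter (fun J => A ⊆ J), (-1 : ℤ)^(n - J.card) =
      if A = Finset.univ then 1 else 0 := by
  have h : ∑ J ∈ Finset.univ.filter (fun J => A ⊆ J), (-1 : ℤ)^(n - J.card) =
      ∑ K ∈ (Aᶜ).powerset, (-1 : ℤ)^K.card := by
    refine Finset.sum_nbij' (fun J => Jᶜ) (fun K => Kᶜ) ?_ ?_ ?_ ?_ ?_
    · intro J hJ
      simpa using hJ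
    · intro K hK
      simp only [Finset.mem_powerset] at hK
      simp only [Finset.mem_filter, Finset.mem_univ, true_and]
      exact Finset.subset_compl_comm.mp hK
    · simp
    · simp
    · intro J _
      rw [Finset.card_compl, Fintype.card_fin]
  rw [h, Finset.sum_powerset_neg_one_pow_card]
  simp

open Classical in
lemma sum_CC {w : Fin n → ℝ} (hw : D.Gen w) [Fintype D.ι] (β : ℝ) :
    ∑ p ∈ Finset.univ.filter (fun p : D.ι × Finset (Fin n) => D.Npos w p.1 ⊆ p.2),
      (-1 : ℤ)^(n - p.2.card) * D.CC p.1 p.2 ∅ β = (hh f β : ℤ) := by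
  have hfin : {v : Fin n → ℕ | nu f (natToR v) = β}.Finite :=
    (D.finite_nu_le β).subset fun _ hv => le_of_eq hv
  have hCC : ∀ M J, D.CC M J ∅ β = ∑ v ∈ hfin.toFinset,
      if D.Cone M (natToR v) ∧ (∀ i, i ∉ J → D.lam M i (natToR v) = 0) then (1 : ℤ) else 0 := by
    intro M J
    rw [Finset.sum_boole, CC]
    congr 1
    rw [← Set.ncard_coe_finset]
    congr 1
    ext v
    simp [CS]
    tauto
  simp only [hCC, Finset.mul_sum]
  rw [Finset.sum_comm, hh, Set.ncard_eq_toFinset_card _ hfin, Finset.card_eq_sum_ones]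
  push_cast
  refine Finset.sum_congr rfl fun v _ => ?_
  rw [Finset.sum_filter, Fintype.sum_prod_type]
  have key : ∀ M : D.ι, (∑ J : Finset (Fin n), if D.Npos w M ⊆ J then (-1 : ℤ)^(n - J.card) *
      (if D.Cone M (natToR v) ∧ (∀ i, i ∉ J → D.lam M i (natToR v) = 0) then (1 : ℤ) else 0) else 0) =
      if D.Sel w M (natToR v) then 1 else 0 := by
    intro M
    by_cases hc : D.Cone M (natToR v)
    · have h1 := alt_sum (D.Npos w M ∪ Finset.univ.filter fun i => D.lam M i (natToR v) ≠ 0)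
      rw [Finset.sum_filter] at h1
      have h2 : (D.Npos w M ∪ (Finset.univ.filter fun i => D.lam M i (natToR v) ≠ 0) = Finset.univ) ↔
          D.Sel w M (natToR v) := by
        rw [Finset.eq_univ_iff_forall]
        simp only [Finset.mem_union, mem_Npos, Finset.mem_filter, Finset.mem_univ, true_and]
        constructor
        · intro h
          refine ⟨hc, fun i hi => ?_⟩
          rcases h i with h | h
          · exact absurd h hi.not_gt
          · exact (hc i).lt_of_ne' h
        · intro h i
          rcases (hw.ne M i).lt_or_gt with h3 | h3
          · exact Or.inr (h.2 i h3).ne'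
          · exact Or.inl h3
      simp only [h2] at h1
      rw [← h1]
      refine Finset.sum_congr rfl fun J _ => ?_
      have h3 : (Finset.univ.filter fun i => D.lam M i (natToR v) ≠ 0) ⊆ J ↔
          ∀ i, i ∉ J → D.lam M i (natToR v) = 0 := by
        constructor
        · intro h i hi
          by_contra h0
          exact hi (h (by simpa using h0))
        · intro h i hi
          by_contra h0
          simp only [Finset.mem_filter, Finset.mem_univ, true_and] at hi
          exact hi (h i h0)
      have h6 := (Finset.union_subset_iff (s := D.Npos w M) (u := J)
        (t := Finset.univ.filter fun i => D.lam M i (natToR v) ≠ 0)).trans (and_congr_right fun _ => h3)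
      by_cases h4 : D.Npos w M ⊆ J
      · by_cases h5 : ∀ i, i ∉ J → D.lam M i (natToR v) = 0
        · rw [if_pos h4, if_pos ⟨hc, h5⟩, if_pos (h6.mpr ⟨h4, h5⟩), mul_one]
        · rw [if_pos h4, if_neg fun h => h5 h.2, if_neg fun h => h5 (h6.mp h).2, mul_zero]
      · rw [if_neg h4, if_neg fun h => h4 (h6.mp h).1]
    · rw [if_neg fun h => hc h.1]
      refine Finset.sum_eq_zero fun J _ => ?_
      simp [hc]
  rw [Finset.sum_congr rfl fun M _ => key M]
  obtain ⟨M, hM⟩ := D.exists_sel w (natToR v) 1 one_pos (by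
    intro ε hε _ i
    have h1 := natToR_nonneg v i
    have h2 := hw.pos i
    simp only [Pi.add_apply, Pi.smul_apply, smul_eq_mul]
    positivity)
  rw [Finset.sum_eq_single M, if_pos hM]
  · intro M' _ hne
    rw [if_neg]
    intro h
    exact hne (Sel.unique hw.inj h hM)
  · simp

open Classical in
lemma finsum_faces (hn : 1 ≤ n) (hconv : Convenient f) {w : Fin n → ℝ} (hw : D.Gen w) [Fintype D.ι]
    (q : ℕ) (hq : q < n) (F : Set (Fin n → ℝ) → ℤ) :
    ∑ᶠ (Δ : Set (Fin n → ℝ)) (_ : FcalMem f Δ ∧ faceDim Δ = q), F Δ =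
      ∑ p ∈ (Finset.univ.filter (fun p : D.ι × Finset (Fin n) => D.Npos w p.1 ⊆ p.2)) with
        p.2.card - 1 = q, F (D.Del p.1 p.2) := by
  have hset : {Δ : Set (Fin n → ℝ) | FcalMem f Δ ∧ faceDim Δ = q} =
      (fun p : D.ι × Finset (Fin n) => D.Del p.1 p.2) ''
        ↑((Finset.univ.filter (fun p : D.ι × Finset (Fin n) => D.Npos w p.1 ⊆ p.2)).filter
          fun p => p.2.card - 1 = q) := by
    ext Δ
    simp only [Set.mem_ofPred_eq, Set.mem_image, Finset.mem_coe, Finset.mem_filter, Finset.mem_univ,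
      true_and, Prod.exists]
    constructor
    · rintro ⟨h1, h2⟩
      obtain ⟨M, J, hJ, rfl⟩ := D.Del_surj hconv (w := w) h1 (by omega)
      refine ⟨M, J, ⟨hJ, ?_⟩, rfl⟩
      have := D.faceDim_Del M J ((D.Npos_nonempty hn hw M).mono hJ)
      omega
    · rintro ⟨M, J, ⟨hJ, hc⟩, rfl⟩
      refine ⟨D.FcalMem_Del hn hw hJ, ?_⟩
      have := D.faceDim_Del M J ((D.Npos_nonempty hn hw M).mono hJ)
      omega
  change ∑ᶠ (Δ) (_ : Δ ∈ {Δ : Set (Fin n → ℝ) | FcalMem f Δ ∧ faceDim Δ = q}), F Δ = _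
  rw [hset, finsum_mem_image, finsum_mem_coe_finset]
  rintro ⟨M, J⟩ hp ⟨M', J'⟩ hp' h
  simp only [Finset.mem_coe, Finset.mem_filter, Finset.mem_univ, true_and] at hp hp'
  obtain ⟨rfl, rfl⟩ := D.Del_inj hw hp.1 hp'.1 h
  rfl

end FanData

theorem main_box (hn : 1 ≤ n) (f : MvPolynomial (Fin n) ℂ)
    (hconv : Convenient f) (hnd : Nondegenerate f)
    (hsimp : ∀ Δ : Set (Fin n → ℝ), FcalMem f Δ → faceDim Δ ≤ n - 1 → IsSimplex Δ) (α : ℝ) :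
    (grDim f α : ℤ) =
      ∑ q ∈ Finset.range n,
        ∑ᶠ (Δ : Set (Fin n → ℝ)) (_ : FcalMem f Δ ∧ faceDim Δ = q),
          ∑ j ∈ Finset.range (n - q),
            (-1 : ℤ) ^ (n - 1 - q - j) * ((n - 1 - q).choose j : ℤ) *
              ({v : Fin n → ℕ | natToR v ∈ Box Δ ∧
                  nu f (natToR v) = α - (j : ℝ)}.ncard : ℤ) := by
  classical
  obtain ⟨D⟩ := exists_fan hn hconv hsimp
  obtain ⟨w, hw⟩ := D.exists_gen
  have := D.fin
  rw [grDim_eq hconv hnd D]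
  have hpos : ∀ p ∈ (Finset.univ.filter (fun p : D.ι × Finset (Fin n) => D.Npos w p.1 ⊆ p.2)),
      0 < p.2.card ∧ p.2.card ≤ n := by
    intro p hp
    simp only [Finset.mem_filter, Finset.mem_univ, true_and] at hp
    exact ⟨((D.Npos_nonempty hn hw p.1).mono hp).card_pos, by simpa using p.2.card_le_univ⟩
  have hR : ∀ q ∈ Finset.range n, (∑ᶠ (Δ : Set (Fin n → ℝ)) (_ : FcalMem f Δ ∧ faceDim Δ = q),
          ∑ j ∈ Finset.range (n - q),
            (-1 : ℤ) ^ (n - 1 - q - j) * ((n - 1 - q).choose j : ℤ) *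
              ({v : Fin n → ℕ | natToR v ∈ Box Δ ∧
                  nu f (natToR v) = α - (j : ℝ)}.ncard : ℤ)) =
      ∑ p ∈ (Finset.univ.filter (fun p : D.ι × Finset (Fin n) => D.Npos w p.1 ⊆ p.2)) with
        p.2.card - 1 = q, (-1) ^ (n - p.2.card) * (dl^[n] (D.CC p.1 p.2 ∅)) α := by
    intro q hq
    rw [D.finsum_faces hn hconv hw q (Finset.mem_range.mp hq)]
    refine Finset.sum_congr rfl fun p hp => ?_
    obtain ⟨hp1, hp2⟩ := Finset.mem_filter.mp hp
    have := hpos p hp1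
    exact D.inner_sum p.1 p.2 q (Finset.mem_range.mp hq) (by omega) α
  rw [Finset.sum_congr rfl hR, Finset.sum_fiberwise_of_maps_to (fun p hp => by
    have := hpos p hp
    rw [Finset.mem_range]
    omega)]
  simp only [dl_iter, Finset.mul_sum]
  rw [Finset.sum_comm]
  refine Finset.sum_congr rfl fun j _ => ?_
  rw [← D.sum_CC hw, Finset.mul_sum]
  refine Finset.sum_congr rfl fun p _ => ?_
  ring

end Comb2
end ToricNewton

open ToricNewton in
/-- combinatorial description of the toric Newton spectrum by counting
weighted lattice points in the boxes of the simplicial faces of `ℱ(P)`. -/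
theorem toric_newton_spectrum_box {n : ℕ} (hn : 1 ≤ n) (f : MvPolynomial (Fin n) ℂ)
    (hconv : Convenient f) (hnd : Nondegenerate f)
    (hsimp : ∀ Δ : Set (Fin n → ℝ), FcalMem f Δ → faceDim Δ ≤ n - 1 → IsSimplex Δ) :
    ∀ α : ℚ, (grDim f (α : ℝ) : ℤ) =
      ∑ q ∈ Finset.range n,
        ∑ᶠ (Δ : Set (Fin n → ℝ)) (_ : FcalMem f Δ ∧ faceDim Δ = q),
          ∑ j ∈ Finset.range (n - q),
            (-1 : ℤ) ^ (n - 1 - q - j) * ((n - 1 - q).choose j : ℤ) *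
              ({v : Fin n → ℕ | natToR v ∈ Box Δ ∧
                  nu f (natToR v) = (α : ℝ) - (j : ℝ)}.ncard : ℤ) := by
  intro α
  exact main_box hn f hconv hnd hsimp (α : ℝ)
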